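/- Case B2: Let l1, l2 be distinct odd primes with l1 ≡ 3 (mod 4) and l1 > 3, let r1, r2 ≥ 1, and let N = l1^{r1} l2^{r2}. Assume the multiplicative order of p modulo l1^{r1} is φ(l1^{r1})/2, the multiplicative order of p modulo l2^{r2} is φ(l2^{r2}), and f = φ(N)/2. Set h1 = h(Q(√-l1)). If the Legendre symbol (l2/l1) = 1 then G(χ) = p^{f/2}. If (l2/l1) = -1 then there exist integers a, b such that 4p^{h1} = a² + l1 b², a ≡ -2 p^{(l1-1+2h1)/4} (mod l1), and G(χ) = p^{f/2 - h1} ((a + b √-l1)/2)². -/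

import Mathlib

open Complex Polynomial IntermediateField

/-- The complex primitive `p`-th root of unity `exp(2πi/p)`. -/
noncomputable def zetaP (p : ℕ) : ℂ := Complex.exp (2 * Real.pi * Complex.I / p)

/-- The Gauss sum `G(χ^λ) = ∑_{x ∈ F, x ≠ 0} χ^λ(x) ζ_p^{T(x)}`, where
`T` is the trace map from `F` down to `ZMod p`. -/
noncomputable def gaussSumN (p : ℕ) {F : Type} [Field F] [Fintype F] [Algebra (ZMod p) F]
    (χ : MulChar F ℂ) (lam : ℕ) : ℂ :=
  letI : DecidableEq F := Classical.decEq F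
  ∑ x ∈ Finset.univ.filter (fun x : F => x ≠ 0),
    (χ ^ lam) x * zetaP p ^ (Algebra.trace (ZMod p) F x).val

/-- `√-m = i√m ∈ ℂ`. -/
noncomputable def sqrtNeg (m : ℕ) : ℂ := Real.sqrt m * Complex.I

theorem sqrtNeg_sq (m : ℕ) : sqrtNeg m ^ 2 = -(m : ℂ) := by
  have h : ((Real.sqrt m : ℝ) : ℂ) ^ 2 = ((m : ℝ) : ℂ) := by
    rw [← Complex.ofReal_pow, Real.sq_sqrt (by positivity)]
  simp only [sqrtNeg, mul_pow, Complex.I_sq, h]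
  push_cast
  ring

theorem isIntegral_sqrtNeg (m : ℕ) : IsIntegral ℚ (sqrtNeg m) := by
  refine ⟨X ^ 2 + C (m : ℚ), monic_X_pow_add_C _ (by norm_num), ?_⟩
  simp [sqrtNeg_sq]

/-- The class number `h(ℚ(√-m))` of the quadratic field `ℚ(√-m) ⊆ ℂ`. -/
noncomputable def classNumSqrtNeg (m : ℕ) : ℕ :=
  haveI : FiniteDimensional ℚ ℚ⟮sqrtNeg m⟯ :=
    IntermediateField.adjoin.finiteDimensional (isIntegral_sqrtNeg m)
  haveI : CharZero ℚ⟮sqrtNeg m⟯ :=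
    charZero_of_injective_algebraMap (algebraMap ℚ ℚ⟮sqrtNeg m⟯).injective
  haveI : NumberField ℚ⟮sqrtNeg m⟯ := ⟨⟩
  NumberField.classNumber ℚ⟮sqrtNeg m⟯

/-- `√p* = √p` if `p ≡ 1 (mod 4)` and `i√p` if `p ≡ 3 (mod 4)`. -/
noncomputable def sqrtPStar (p : ℕ) : ℂ :=
  if p % 4 = 1 then (Real.sqrt p : ℂ) else (Real.sqrt p : ℂ) * Complex.I


open Complex Polynomial IntermediateField

theorem exists_place (p : ℕ) (hp : p.Prime) :
    ∃ A : ValuationSubring ℂ, A.valuation (p : ℂ) < 1 := by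
  let S : Subring ℂ := (Int.castRingHom ℂ).range
  let pS : S := ⟨(p : ℂ), ⟨(p : ℤ), by simp⟩⟩
  have hI : Ideal.span {pS} ≠ ⊤ := by
    intro h
    rw [Ideal.span_singleton_eq_top] at h
    obtain ⟨u, hu⟩ := h.exists_right_inv
    obtain ⟨⟨_, ⟨n, rfl⟩⟩, hu⟩ : ∃ u : S, pS * u = 1 := ⟨u, hu⟩
    have h2 : (p : ℂ) * (n : ℂ) = 1 := by
      have := congrArg Subtype.val hu
      simpa [pS] using this
    have h3 : (p : ℤ) * n = 1 := by exact_mod_cast h2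
    have h4 : (p : ℤ) ∣ 1 := ⟨n, h3.symm⟩
    have h5 : p ∣ 1 := by exact_mod_cast h4
    exact hp.one_lt.ne' (Nat.dvd_one.mp h5)
  obtain ⟨B, -, hB⟩ := Ideal.image_subset_nonunits_valuationSubring (Ideal.span {pS}) hI
  refine ⟨B, ?_⟩
  have := hB ⟨pS, Ideal.mem_span_singleton_self _, rfl⟩
  simpa [ValuationSubring.mem_nonunits_iff, pS] using this

theorem place_integral (A : ValuationSubring ℂ) {z : ℂ} (hz : IsIntegral ℤ z) :
    A.valuation z ≤ 1 := by
  rw [A.valuation_le_one_iff]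
  have h : IsIntegral A z := hz.tower_top
  obtain ⟨y, hy⟩ := IsIntegrallyClosed.isIntegral_iff.mp h
  rw [← hy]; exact y.2

theorem place_int_le (A : ValuationSubring ℂ) (n : ℤ) : A.valuation (n : ℂ) ≤ 1 :=
  place_integral A (by simpa using (isIntegral_algebraMap (R := ℤ) (A := ℂ) (x := n)))

theorem place_int_coprime (A : ValuationSubring ℂ) {p : ℕ} (hp : p.Prime)
    (hA : A.valuation (p : ℂ) < 1) {n : ℤ} (hn : ¬ (p : ℤ) ∣ n) : A.valuation (n : ℂ) = 1 := by
  by_contra hne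
  have hlt : A.valuation (n : ℂ) < 1 := lt_of_le_of_ne (place_int_le A n) hne
  have hc : IsCoprime (p : ℤ) n := (Prime.coprime_iff_not_dvd (Nat.prime_iff_prime_int.mp hp)).mpr hn
  obtain ⟨a, b, hab⟩ := hc
  have h1 : (a : ℂ) * p + b * n = 1 := by exact_mod_cast hab
  have h2 : A.valuation ((a : ℂ) * p + b * n) < 1 := by
    refine Valuation.map_add_lt _ ?_ ?_
    · rw [map_mul]; exact mul_lt_one_of_nonneg_of_lt_one_right (place_int_le A a) zero_le hA
    · rw [map_mul]; exact mul_lt_one_of_nonneg_of_lt_one_right (place_int_le A b) zero_le hlt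
  rw [h1, map_one] at h2
  exact lt_irrefl _ h2

theorem place_p_pos (A : ValuationSubring ℂ) {p : ℕ} (hp : p.Prime) :
    0 < A.valuation (p : ℂ) := by
  rw [Valuation.pos_iff]; exact_mod_cast hp.ne_zero

theorem place_int_dvd (A : ValuationSubring ℂ) {p : ℕ} (hp : p.Prime)
    (hA : A.valuation (p : ℂ) < 1) {t : ℤ} {m : ℕ}
    (h : A.valuation (t : ℂ) ≤ A.valuation (p : ℂ) ^ m) : (p : ℤ) ^ m ∣ t := by
  by_cases ht : t = 0
  · simp [ht]
  obtain ⟨c, htc, hc⟩ := (FiniteMultiplicity.of_prime_left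
    (Nat.prime_iff_prime_int.mp hp) ht).exists_eq_pow_mul_and_not_dvd
  generalize multiplicity (p : ℤ) t = k at htc
  have hv : A.valuation (t : ℂ) = A.valuation (p : ℂ) ^ k := by
    rw [htc]; push_cast
    rw [map_mul, map_pow, place_int_coprime A hp hA hc, mul_one]
  rw [hv] at h
  have : m ≤ k := by
    by_contra hlt
    push Not at hlt
    exact absurd h (not_le.mpr (pow_lt_pow_right_of_lt_one₀ (place_p_pos A hp) hA hlt))
  rw [htc]
  exact (pow_dvd_pow _ this).mul_right _

theorem place_root_of_unity (A : ValuationSubring ℂ) {z : ℂ} {n : ℕ} (hn : n ≠ 0) (h : z ^ n = 1) :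
    A.valuation z = 1 := by
  have := congrArg A.valuation h
  rw [map_pow, map_one] at this
  exact (pow_eq_one_iff.mp this).resolve_right hn

theorem residue_charP (A : ValuationSubring ℂ) {p : ℕ} (hp : p.Prime)
    (hA : A.valuation (p : ℂ) < 1) : CharP (IsLocalRing.ResidueField A) p := by
  have : ((p : ℕ) : IsLocalRing.ResidueField A) = 0 := by
    have h : IsLocalRing.residue A (p : A) = 0 := by
      rw [IsLocalRing.residue_eq_zero_iff, A.valuation_lt_one_iff]
      simpa using hA
    simpa using h
  exact (CharP.charP_iff_prime_eq_zero hp).mpr this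

/-- An `l`-power root of unity is congruent to one at a place above `l`. -/
theorem place_lpow_root (A : ValuationSubring ℂ) {l : ℕ} (hl : l.Prime)
    (hA : A.valuation (l : ℂ) < 1) {z : ℂ} {k : ℕ} (h : z ^ (l ^ k) = 1) :
    A.valuation (z - 1) < 1 := by
  have hz : z ∈ A := (A.valuation_le_one_iff z).mp
    (place_root_of_unity A (pow_ne_zero _ hl.ne_zero) h).le
  have := residue_charP A hl hA
  have : Fact l.Prime := ⟨hl⟩
  have h1 : (⟨z, hz⟩ : A) ^ (l ^ k) = 1 := Subtype.ext (by simpa using h)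
  have h2 : (IsLocalRing.residue A ⟨z, hz⟩ - 1) ^ (l ^ k) = 0 := by
    rw [sub_pow_char_pow, ← map_pow, h1]; simp
  have h3 : IsLocalRing.residue A (⟨z, hz⟩ - 1) = 0 := by
    rw [map_sub, map_one]; exact eq_zero_of_pow_eq_zero h2
  rw [IsLocalRing.residue_eq_zero_iff, A.valuation_lt_one_iff] at h3
  simpa using h3

open Complex Polynomial IntermediateField
set_option linter.unusedSectionVars false

theorem zetaP_prim (p : ℕ) (hp : p ≠ 0) : IsPrimitiveRoot (zetaP p) p := by
  unfold zetaP; exact Complex.isPrimitiveRoot_exp p hp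

section
variable (p : ℕ) [hpf : Fact p.Prime] (F : Type) [Field F] [Fintype F] [Algebra (ZMod p) F]

noncomputable def psiF : AddChar F ℂ :=
  (AddChar.zmodChar p (zetaP_prim p hpf.out.ne_zero).pow_eq_one).compAddMonoidHom
    (Algebra.trace (ZMod p) F).toAddMonoidHom

variable {F}

theorem psiF_apply (x : F) : psiF p F x = zetaP p ^ (Algebra.trace (ZMod p) F x).val := rfl

theorem gaussSumN_one (χ : MulChar F ℂ) : gaussSumN p χ 1 = gaussSum χ (psiF p F) := by
  classical
  unfold gaussSumN gaussSum
  rw [Finset.sum_filter]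
  refine Finset.sum_congr rfl fun x _ => ?_
  by_cases hx : x = 0
  · subst hx; simp [χ.map_zero]
  · simp [hx, psiF_apply]

theorem charP_F : CharP F p := charP_of_injective_algebraMap (algebraMap (ZMod p) F).injective p

theorem psiF_primitive : (psiF p F).IsPrimitive := by
  apply AddChar.IsPrimitive.of_ne_one
  rw [AddChar.ne_one_iff]
  have hs : Function.Surjective (Algebra.trace (ZMod p) F) := Algebra.trace_surjective (ZMod p) F
  obtain ⟨x, hx⟩ := hs 1
  refine ⟨x, ?_⟩
  rw [psiF_apply, hx, ZMod.val_one, pow_one]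
  exact (zetaP_prim p hpf.out.ne_zero).ne_one hpf.out.one_lt

theorem trace_frob (x : F) : Algebra.trace (ZMod p) F (x ^ p) = Algebra.trace (ZMod p) F x := by
  have := Algebra.trace_eq_of_algEquiv (FiniteField.frobeniusAlgEquivOfAlgebraic (ZMod p) F) x
  simpa [FiniteField.coe_frobeniusAlgEquivOfAlgebraic, ZMod.card] using this

theorem psiF_frob (x : F) : psiF p F (x ^ p) = psiF p F x := by
  rw [psiF_apply, psiF_apply, trace_frob]

theorem gauss_frob (χ : MulChar F ℂ) : gaussSum (χ ^ p) (psiF p F) = gaussSum χ (psiF p F) := by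
  have := charP_F p (F := F)
  unfold gaussSum
  rw [← Equiv.sum_comp (frobeniusEquiv F p).toEquiv (fun x => χ x * psiF p F x)]
  refine Finset.sum_congr rfl fun x _ => ?_
  have : ((frobeniusEquiv F p).toEquiv x : F) = x ^ p := rfl
  rw [this, psiF_frob, map_pow, MulChar.pow_apply' _ hpf.out.ne_zero]

theorem gauss_frob_pow (χ : MulChar F ℂ) (i : ℕ) :
    gaussSum (χ ^ (p ^ i)) (psiF p F) = gaussSum χ (psiF p F) := by
  induction i with
  | zero => simp
  | succ i ih => rw [pow_succ, pow_mul, gauss_frob, ih]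

theorem psiF_pow_p (x : F) : psiF p F x ^ p = 1 := by
  rw [psiF_apply, ← pow_mul, mul_comm, pow_mul, (zetaP_prim p hpf.out.ne_zero).pow_eq_one, one_pow]

theorem isIntegral_root {z : ℂ} {n : ℕ} (hn : n ≠ 0) (h : z ^ n = 1) : IsIntegral ℤ z :=
  IsIntegral.of_pow (Nat.pos_of_ne_zero hn) (h ▸ isIntegral_one)

theorem isIntegral_mulChar (χ : MulChar F ℂ) (x : F) : IsIntegral ℤ (χ x) := by
  by_cases hx : x = 0
  · subst hx; rw [χ.map_zero]; exact isIntegral_zero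
  · refine isIntegral_root (n := Fintype.card F - 1)
      (Nat.sub_ne_zero_of_lt Fintype.one_lt_card) ?_
    rw [← map_pow, FiniteField.pow_card_sub_one_eq_one x hx, map_one]

theorem isIntegral_gauss (χ : MulChar F ℂ) : IsIntegral ℤ (gaussSum χ (psiF p F)) :=
  IsIntegral.sum _ fun x _ => (isIntegral_mulChar χ x).mul
    (isIntegral_root hpf.out.ne_zero (psiF_pow_p p x))

omit [Algebra (ZMod p) F] hpf in
theorem isIntegral_jacobi (χ φ : MulChar F ℂ) : IsIntegral ℤ (jacobiSum χ φ) :=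
  IsIntegral.sum _ fun x _ => (isIntegral_mulChar χ x).mul (isIntegral_mulChar φ _)

theorem psiF_inv : (psiF p F)⁻¹ = (psiF p F).mulShift (-1) := by
  ext x; simp [AddChar.inv_apply]

theorem gauss_mul_inv {χ : MulChar F ℂ} (hχ : χ ≠ 1) :
    gaussSum χ (psiF p F) * gaussSum χ⁻¹ (psiF p F) = χ (-1) * Fintype.card F := by
  have h1 := gaussSum_mul_gaussSum_eq_card hχ (psiF_primitive p (F := F))
  have h2 := mul_gaussSum_inv_eq_gaussSum χ⁻¹ (psiF p F)
  rw [← h1, ← h2]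
  have h3 : χ (-1) * χ⁻¹ (-1) = 1 := by
    rw [← MulChar.mul_apply, mul_inv_cancel]; simp [MulChar.one_apply]
  have h4 : χ (-1) * χ (-1) = 1 := by rw [← map_mul]; simp
  have h5 : χ⁻¹ (-1) = χ (-1) := by
    have := mul_left_cancel₀ (by intro h; simp [h] at h4) (h3.trans h4.symm); exact this
  rw [h5]; ring
end

open Complex Polynomial IntermediateField

theorem digit_legendre (p : ℕ) (hp : 1 < p) (f : ℕ) : ∀ k < p ^ f,
    (p - 1) * ∑ i ∈ Finset.range f, k / p ^ (i + 1) + (p.digits k).sum = k := by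
  induction f with
  | zero => intro k hk; have : k = 0 := by simpa using hk
            subst this; simp
  | succ f ih =>
    intro k hk
    have h1 := ih (k / p) (Nat.div_lt_of_lt_mul (by rwa [pow_succ'] at hk))
    have h2 : (p.digits k).sum = k % p + (p.digits (k / p)).sum := by
      rcases Nat.eq_zero_or_pos k with rfl | hk0
      · simp
      · rw [Nat.digits_def' hp hk0]; simp
    rw [Finset.sum_range_succ', h2]
    have h3 : ∀ i, k / p ^ (i + 1 + 1) = k / p / p ^ (i + 1) := fun i => by
      rw [Nat.div_div_eq_div_mul, ← pow_succ']
    simp only [h3, zero_add, pow_one]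
    have h4 := Nat.div_add_mod k p
    obtain ⟨r, rfl⟩ : ∃ r, p = r + 1 := ⟨p - 1, by omega⟩
    simp only [Nat.add_sub_cancel] at h1 ⊢
    generalize ∑ i ∈ Finset.range f, k / (r + 1) / (r + 1) ^ (i + 1) = S at *
    generalize k / (r+1) = d at *
    nlinarith

theorem digit_rot (p : ℕ) (hp : 1 < p) (f k : ℕ) (hk : k < p ^ f - 1) :
    (p - 1) * ∑ i ∈ Finset.range f, (p ^ i * k % (p ^ f - 1)) = (p ^ f - 1) * (p.digits k).sum := by
  have key : ∀ j ∈ Finset.range f, p ^ (f - 1 - j) * k % (p ^ f - 1) + (p ^ f - 1) * (k / p ^ (j + 1))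
      = p ^ (f - 1 - j) * k := by
    intro j hj
    have hj : j < f := Finset.mem_range.mp hj
    obtain ⟨m, rfl⟩ : ∃ m, f = m + (j + 1) := ⟨f - (j + 1), by omega⟩
    have e1 : m + (j + 1) - 1 - j = m := by omega
    rw [e1]
    have hq : p ^ (m + (j + 1)) = p ^ m * p ^ (j + 1) := pow_add _ _ _
    have hP : 0 < p ^ (j + 1) := by positivity
    have hM : 0 < p ^ m := by positivity
    set P := p ^ (j + 1)
    set M := p ^ m
    rw [hq] at hk ⊢
    have hd := Nat.div_add_mod k P
    have hr := Nat.mod_lt k hP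
    set d := k / P
    set r := k % P
    have hdM : d < M := Nat.div_lt_of_lt_mul (by rw [mul_comm]; omega)
    have hMP : 0 < M * P := by positivity
    obtain ⟨w, hw⟩ : ∃ w, M * P = w + 1 := ⟨M * P - 1, by omega⟩
    have heq : M * k = (d + M * r) + (M * P - 1) * d := by
      rw [← hd, hw, Nat.add_sub_cancel]; nlinarith
    have hlt : d + M * r < M * P - 1 := by
      rw [hw] at hk ⊢
      simp only [Nat.add_sub_cancel] at hk ⊢
      by_contra hge
      push Not at hge
      have h1 : r = P - 1 := by
        by_contra hne
        have : r + 2 ≤ P := by omega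
        nlinarith
      have hr' : r + 1 = P := by omega
      have h2 : d + 1 = M := by nlinarith
      have : k = w := by
        have : k + 1 = w + 1 := by rw [← hw, ← hd, ← h2, ← hr']; ring
        omega
      omega
    conv_lhs => rw [heq]
    rw [Nat.add_mul_mod_self_left, Nat.mod_eq_of_lt hlt, heq]
  have hsum := Finset.sum_congr rfl key
  rw [Finset.sum_add_distrib, Finset.sum_range_reflect (fun i => p ^ i * k % (p ^ f - 1)) f,
    Finset.sum_range_reflect (fun i => p ^ i * k) f, ← Finset.mul_sum, ← Finset.sum_mul] at hsum
  have hleg := digit_legendre p hp f k (by omega)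
  have hgeo : (p - 1) * ∑ i ∈ Finset.range f, p ^ i = p ^ f - 1 := by
    rw [mul_comm]; exact geom_sum_mul_of_one_le hp.le f
  generalize ∑ i ∈ Finset.range f, k / p ^ (i + 1) = B at *
  generalize ∑ i ∈ Finset.range f, (p ^ i * k % (p ^ f - 1)) = T at *
  generalize ∑ i ∈ Finset.range f, p ^ i = Gm at *
  generalize (p.digits k).sum = s at *
  generalize p ^ f - 1 = Q at *
  generalize p - 1 = r at *
  have : r * T + Q * (r * B) = Q * k := by
    calc _ = r * (T + Q * B) := by ring
      _ = r * (Gm * k) := by rw [hsum]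
      _ = (r * Gm) * k := by ring
      _ = _ := by rw [hgeo]
  rw [← hleg] at this
  nlinarith

theorem digit_compl (p : ℕ) (hp : 1 < p) (f k : ℕ) (hk0 : 0 < k) (hk : k < p ^ f - 1) :
    (p.digits k).sum + (p.digits (p ^ f - 1 - k)).sum = f * (p - 1) := by
  have h1 := digit_rot p hp f k hk
  have h2 := digit_rot p hp f (p ^ f - 1 - k) (by omega)
  have h3 : ∀ i ∈ Finset.range f, p ^ i * k % (p ^ f - 1) + p ^ i * (p ^ f - 1 - k) % (p ^ f - 1)
      = p ^ f - 1 := by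
    intro i hi
    have hco : Nat.Coprime (p ^ f - 1) (p ^ i) := by
      have hfi : i < f := Finset.mem_range.mp hi
      apply Nat.Coprime.pow_right
      have h : p ∣ p ^ f := dvd_pow_self p (by omega)
      refine Nat.Coprime.symm ?_
      rw [Nat.coprime_iff_gcd_eq_one]
      have hd := Nat.gcd_dvd p (p ^ f - 1)
      have : p.gcd (p ^ f - 1) ∣ 1 := by
        have h5 := (Nat.dvd_sub (hd.1.trans h) hd.2)
        rwa [Nat.sub_sub_self (by omega)] at h5
      exact Nat.dvd_one.mp this
    have hQ : 0 < p ^ f - 1 := by omega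
    have hne : ¬ (p ^ f - 1) ∣ p ^ i * k := fun h => by
      have := Nat.le_of_dvd hk0 (hco.dvd_of_dvd_mul_left h); omega
    have hadd : p ^ i * k + p ^ i * (p ^ f - 1 - k) = p ^ i * (p ^ f - 1) := by
      rw [← Nat.mul_add]; congr 1; omega
    have hdvd : (p ^ f - 1) ∣ p ^ i * k % (p ^ f - 1) + p ^ i * (p ^ f - 1 - k) % (p ^ f - 1) := by
      rw [Nat.dvd_iff_mod_eq_zero, ← Nat.add_mod, hadd, Nat.mul_mod_left]
    have hpos : 0 < p ^ i * k % (p ^ f - 1) := Nat.pos_of_ne_zero fun h => hne (Nat.dvd_of_mod_eq_zero h)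
    have l1 := Nat.mod_lt (p ^ i * k) hQ
    have l2 := Nat.mod_lt (p ^ i * (p ^ f - 1 - k)) hQ
    obtain ⟨c, hc⟩ := hdvd
    have : c = 1 := by
      have : 0 < c := Nat.pos_of_ne_zero (by rintro rfl; omega)
      have : c < 2 := by
        by_contra hcc
        push Not at hcc
        nlinarith
      omega
    subst this; omega
  have h4 := Finset.sum_congr rfl h3
  rw [Finset.sum_add_distrib, Finset.sum_const, Finset.card_range, smul_eq_mul] at h4
  have hQ : 0 < p ^ f - 1 := by omega
  apply Nat.eq_of_mul_eq_mul_left hQ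
  rw [mul_add, ← h1, ← h2, ← mul_add, h4]; ring

open Complex Polynomial IntermediateField
set_option linter.unusedSectionVars false

section
variable (p : ℕ) [hpf : Fact p.Prime] {F : Type} [Field F] [Fintype F] [Algebra (ZMod p) F]

theorem exists_embed (A : ValuationSubring ℂ) (hA : A.valuation (p : ℂ) < 1) :
    ∃ ι : F →+* IsLocalRing.ResidueField A, ∀ x : F, x ≠ 0 →
      ∃ z : A, z ^ (Fintype.card F - 1) = 1 ∧ IsLocalRing.residue A z = ι x := by
  classical
  set q := Fintype.card F with hq
  have hq1 : 1 < q := Fintype.one_lt_card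
  have hn : 0 < q - 1 := by omega
  set ζ : ℂ := Complex.exp (2 * Real.pi * Complex.I / (q - 1 : ℕ)) with hζ
  have hζp : IsPrimitiveRoot ζ (q - 1) := Complex.isPrimitiveRoot_exp _ hn.ne'
  have hζA : ζ ∈ A := (A.valuation_le_one_iff ζ).mp
    (place_root_of_unity A hn.ne' hζp.pow_eq_one).le
  have hζ' : IsPrimitiveRoot (⟨ζ, hζA⟩ : A) (q - 1) :=
    IsPrimitiveRoot.of_map_of_injective (f := A.subtype) hζp Subtype.val_injective
  have hprod := X_pow_sub_one_eq_prod hn hζ'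
  have hprod2 := congrArg (Polynomial.map (IsLocalRing.residue A)) hprod
  simp only [Polynomial.map_sub, Polynomial.map_pow, Polynomial.map_X, Polynomial.map_one,
    Polynomial.map_prod, Polynomial.map_C] at hprod2
  have : CharP (IsLocalRing.ResidueField A) p := residue_charP A hpf.out hA
  let _ : Algebra (ZMod p) (IsLocalRing.ResidueField A) := ZMod.algebra _ p
  have hsp := FiniteField.isSplittingField_sub F (ZMod p)
  have hs : ((X ^ Fintype.card F - X : (ZMod p)[X]).map (algebraMap (ZMod p) (IsLocalRing.ResidueField A))).Splits := by
    have : (X ^ Fintype.card F - X : (ZMod p)[X]).map (algebraMap (ZMod p) (IsLocalRing.ResidueField A))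
        = X * ∏ z ∈ nthRootsFinset (q-1) (1:A), (X - C (IsLocalRing.residue A z)) := by
      rw [← hprod2, mul_sub, ← pow_succ', ← hq, Nat.sub_add_cancel hq1.le]
      simp
    rw [this]
    refine Polynomial.Splits.mul (by simp) ?_
    refine Polynomial.Splits.prod fun i _ => ?_
    simp
  let ι := (IsSplittingField.lift F _ hs)
  refine ⟨ι.toRingHom, fun x hx => ?_⟩
  have hx1 : (ι x) ^ (q - 1) - 1 = 0 := by
    rw [← map_pow, FiniteField.pow_card_sub_one_eq_one x hx]; simp
  have h3 := congrArg (Polynomial.eval (ι x)) hprod2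
  rw [Polynomial.eval_prod] at h3
  simp only [eval_sub, eval_pow, eval_X, eval_one, eval_C, hx1] at h3
  obtain ⟨z, hz, hz0⟩ := Finset.prod_eq_zero_iff.mp h3.symm
  refine ⟨z, (mem_nthRootsFinset hn 1).mp hz, ?_⟩
  exact (sub_eq_zero.mp hz0).symm

theorem exists_teich (A : ValuationSubring ℂ) (hA : A.valuation (p : ℂ) < 1) :
    ∃ (ι : F →+* IsLocalRing.ResidueField A) (ω : MulChar F ℂ), 
      (∀ x : F, x ≠ 0 → ∃ h : ω⁻¹ x ∈ A, IsLocalRing.residue A ⟨ω⁻¹ x, h⟩ = (ι x)⁻¹) ∧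
      (orderOf ω = Fintype.card F - 1) ∧ 
      ∀ χ : MulChar F ℂ, ∃ k < Fintype.card F - 1, χ = (ω⁻¹) ^ k := by
  classical
  obtain ⟨ι, hι⟩ := exists_embed (F := F) p A hA
  obtain ⟨g, hg⟩ := IsCyclic.exists_generator (α := Fˣ)
  have hcu : Fintype.card Fˣ = Fintype.card F - 1 := Fintype.card_units F
  have hq1 : 1 < Fintype.card F := Fintype.one_lt_card
  have hn : 0 < Fintype.card F - 1 := by omega
  obtain ⟨z, hz, hzr⟩ := hι g g.ne_zero
  have hzC : (z : ℂ) ^ (Fintype.card F - 1) = 1 := by exact_mod_cast congrArg Subtype.val hz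
  let μ : ℂˣ := Units.mk0 z (by rintro h; rw [h, zero_pow hn.ne'] at hzC; simp at hzC)
  have hμ : μ ∈ rootsOfUnity (Fintype.card Fˣ) ℂ := by
    rw [_root_.mem_rootsOfUnity, hcu]; ext; simpa [μ] using hzC
  let ω := MulChar.ofRootOfUnity hμ hg
  have hωg : ω g = z := by simpa [μ] using MulChar.ofRootOfUnity_spec hμ hg
  have hgo : orderOf g = Fintype.card F - 1 := by rw [orderOf_eq_card_of_forall_mem_zpowers hg, Nat.card_eq_fintype_card, hcu]
  have hgpow : ∀ x : F, x ≠ 0 → ∃ n : ℕ, x = (g:F) ^ n := by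
    intro x hx
    obtain ⟨n, -, hn⟩ := (mem_zpowers_iff_mem_range_orderOf.mp (hg (Units.mk0 x hx))) |> fun h => by
      simpa using h
    exact ⟨n, by simpa using (congrArg Units.val hn).symm⟩
  have hzp : IsPrimitiveRoot (z:ℂ) (Fintype.card F - 1) := by
    have h1 : IsPrimitiveRoot z (Fintype.card F - 1) := by
      have : IsPrimitiveRoot (g : F) (Fintype.card F - 1) := by
        rw [IsPrimitiveRoot.coe_units_iff, ← hgo]; exact IsPrimitiveRoot.orderOf g
      refine ⟨hz, fun l hl => this.dvd_of_pow_eq_one l ?_⟩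
      apply ι.injective
      rw [map_pow, ← hzr, ← map_pow, hl]; simp
    exact h1.map_of_injective (f := A.subtype) Subtype.val_injective
  refine ⟨ι, ω, ?_, ?_, ?_⟩
  · intro x hx
    obtain ⟨n, rfl⟩ := hgpow x hx
    have hv : ω ((g:F)^n) = z^n := by rw [map_pow, hωg]
    have hz1 : z^n * (z^n)^(Fintype.card F - 2) = 1 := by
      rw [← pow_succ', ← pow_mul, mul_comm n, pow_mul, show Fintype.card F - 2 + 1 = Fintype.card F - 1 by omega, hz, one_pow]
    have hinv : (ω⁻¹) ((g:F)^n) = (((z^n)^(Fintype.card F - 2) : A) : ℂ) := by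
      rw [MulChar.inv_apply_eq_inv', hv]
      have := congrArg (Subtype.val) hz1
      push_cast at this ⊢
      exact inv_eq_of_mul_eq_one_right this
    refine ⟨hinv ▸ Subtype.property _, ?_⟩
    have : (⟨(ω⁻¹) ((g:F)^n), hinv ▸ Subtype.property _⟩ : A) = (z^n)^(Fintype.card F - 2) := Subtype.ext hinv
    rw [this]
    symm
    apply inv_eq_of_mul_eq_one_right
    have := congrArg (IsLocalRing.residue A) hz1
    simp only [map_mul, map_pow, hzr, map_one] at this ⊢; exact this
  · have : IsPrimitiveRoot ω (Fintype.card F - 1) := by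
      refine ⟨?_, fun l hl => hzp.dvd_of_pow_eq_one l ?_⟩
      · rw [← hcu]; exact ω.pow_card_eq_one
      · rw [← hωg, ← MulChar.pow_apply_coe, hl]; simp
    exact this.eq_orderOf.symm
  · intro χ
    have h1 : (χ g) ^ (Fintype.card F - 1) = 1 := by
      rw [← map_pow, FiniteField.pow_card_sub_one_eq_one _ g.ne_zero, map_one]
    have : NeZero (Fintype.card F - 1) := ⟨hn.ne'⟩
    obtain ⟨i, hi, hi2⟩ := hzp.inv.eq_pow_of_pow_eq_one h1
    refine ⟨i, hi, ?_⟩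
    rw [MulChar.eq_iff hg, MulChar.pow_apply_coe, MulChar.inv_apply_eq_inv', hωg, hi2]

theorem place_pi (A : ValuationSubring ℂ) (hA : A.valuation (p : ℂ) < 1) :
    A.valuation (zetaP p - 1) ^ (p - 1) = A.valuation (p : ℂ) := by
  obtain ⟨n, hn⟩ : ∃ n, p = n + 1 := ⟨p - 1, by have := hpf.out.one_lt; omega⟩
  have hz := zetaP_prim p hpf.out.ne_zero
  have h1 : ∏ k ∈ Finset.range n, (1 - zetaP p ^ (k+1)) = (n : ℂ) + 1 := by
    have h := hz; rw [hn] at h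
    rw [hn]; exact h.prod_one_sub_pow_eq_order
  have h2 := congrArg A.valuation h1
  have hle : ∀ z : ℂ, z ^ p = 1 → ∀ k : ℕ, A.valuation (1 - z ^ k) ≤ A.valuation (1 - z) := by
    intro z hzp k
    rw [← mul_neg_geom_sum, map_mul]
    refine mul_le_of_le_one_right' (place_integral A ?_)
    exact IsIntegral.sum _ fun i _ => (isIntegral_root hpf.out.ne_zero hzp).pow _
  have heq : ∀ k ∈ Finset.range n, A.valuation (1 - zetaP p ^ (k+1)) = A.valuation (zetaP p - 1) := by
    intro k hk
    rw [Finset.mem_range] at hk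
    rw [← Valuation.map_neg, neg_sub, ← Valuation.map_neg, neg_sub, A.valuation.map_sub_swap (zetaP p)]
    refine le_antisymm (hle _ hz.pow_eq_one _) ?_
    have hco : Nat.Coprime (k+1) p := by
      apply Nat.Coprime.symm
      rw [hpf.out.coprime_iff_not_dvd]
      exact Nat.not_dvd_of_pos_of_lt (by omega) (by omega)
    obtain ⟨m, -, hm⟩ := Nat.exists_mul_mod_eq_one_of_coprime hco hpf.out.one_lt
    have : zetaP p = (zetaP p ^ (k+1)) ^ m := by
      rw [← pow_mul]
      conv_lhs => rw [← pow_one (zetaP p), ← hm]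
      have h := pow_mod_orderOf (zetaP p) ((k+1)*m)
      rwa [← hz.eq_orderOf] at h
    conv_lhs => rw [this]
    exact hle _ (by rw [← pow_mul, mul_comm, pow_mul, hz.pow_eq_one, one_pow]) _
  rw [map_prod, Finset.prod_congr rfl heq, Finset.prod_const, Finset.card_range] at h2
  have e : p - 1 = n := by omega
  rw [e, h2]
  congr 1
  rw [hn]; push_cast; rfl

theorem place_gauss_one (A : ValuationSubring ℂ) (hA : A.valuation (p : ℂ) < 1)
    (hq2 : 2 < Fintype.card F)
    (ι : F →+* IsLocalRing.ResidueField A) (φ : MulChar F ℂ) (hφ1 : φ ≠ 1)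
    (hφ : ∀ x : F, x ≠ 0 → ∃ h : φ x ∈ A, IsLocalRing.residue A ⟨φ x, h⟩ = (ι x)⁻¹) :
    A.valuation (gaussSum φ (psiF p F)) = A.valuation (zetaP p - 1) := by
  classical
  have hz := zetaP_prim p hpf.out.ne_zero
  have hzA : zetaP p ∈ A := (A.valuation_le_one_iff _).mp
    (place_root_of_unity A hpf.out.ne_zero hz.pow_eq_one).le
  have hzi : A.valuation (zetaP p - 1) < 1 := by
    apply place_lpow_root A hpf.out hA (k := 1); rw [pow_one]; exact hz.pow_eq_one
  have := residue_charP A hpf.out hA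
  have hres1 : IsLocalRing.residue A ⟨zetaP p, hzA⟩ = 1 := by
    rw [← sub_eq_zero, ← map_one (IsLocalRing.residue A), ← map_sub, IsLocalRing.residue_eq_zero_iff, A.valuation_lt_one_iff]
    simpa using hzi
  have hmem : ∀ x : F, x ≠ 0 → φ x ∈ A := fun x hx => (hφ x hx).1
  have hr : ∀ (x : F) (hx : x ≠ 0), IsLocalRing.residue A ⟨φ x, hmem x hx⟩ = (ι x)⁻¹ := fun x hx => (hφ x hx).2
  have hmemu : ∀ u : Fˣ, φ u ∈ A := fun u => hmem u u.ne_zero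
  let S : A := ∑ u : Fˣ, (⟨φ u, hmemu u⟩ : A) * ∑ i ∈ Finset.range (Algebra.trace (ZMod p) F u).val, (⟨zetaP p, hzA⟩ : A) ^ i
  have hS : gaussSum φ (psiF p F) = (zetaP p - 1) * (S : ℂ) := by
    have h0 : gaussSum φ (psiF p F) = ∑ u : Fˣ, φ u * (psiF p F u - 1) := by
      have e1 : ∑ x : F, φ x = 0 := MulChar.sum_eq_zero_of_ne_one hφ1
      have e2 : gaussSum φ (psiF p F) = ∑ x : F, φ x * (psiF p F x - 1) := by
        simp only [mul_sub, mul_one, Finset.sum_sub_distrib, e1, sub_zero]; rfl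
      rw [e2, ← Finset.sum_subset (Finset.subset_univ (Finset.univ.filter (fun x : F => x ≠ 0)))]
      · refine Finset.sum_bij' (fun x hx => Units.mk0 x (by simpa using hx)) (fun u _ => (u:F)) ?_ ?_ ?_ ?_ ?_ <;> simp
      · intro x _ hx
        have : x = 0 := by simpa using hx
        subst this; simp [φ.map_zero]
    rw [h0]
    simp only [S]
    push_cast
    rw [Finset.mul_sum]
    refine Finset.sum_congr rfl fun u _ => ?_
    rw [psiF_apply, ← mul_geom_sum]; ring
  have hSr : IsLocalRing.residue A S = -1 := by
    have hcardK : Nat.card (ZMod p) = p := by simp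
    have hfr : Fintype.card F = p ^ Module.finrank (ZMod p) F := by
      rw [Module.card_eq_pow_finrank (K := ZMod p), ZMod.card]
    have key : ∀ u : Fˣ, (IsLocalRing.residue A ((⟨φ u, hmemu u⟩ : A) * ∑ i ∈ Finset.range (Algebra.trace (ZMod p) F u).val, (⟨zetaP p, hzA⟩ : A) ^ i)) = ι ((u:F)⁻¹ * ∑ i ∈ Finset.range (Module.finrank (ZMod p) F), (u:F) ^ (p ^ i)) := by
      intro u
      rw [map_mul, hr u u.ne_zero, map_mul, map_inv₀]
      congr 1
      have h1 := FiniteField.algebraMap_trace_eq_sum_pow (ZMod p) F (u:F)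
      rw [hcardK] at h1
      rw [← h1, map_sum]
      simp only [map_pow, hres1, one_pow, Finset.sum_const, Finset.card_range, nsmul_eq_mul, mul_one]
      generalize Algebra.trace (ZMod p) F (u:F) = t
      have : algebraMap (ZMod p) F t = ((t.val : ℕ) : F) := by
        conv_lhs => rw [← ZMod.natCast_zmod_val t]
        exact map_natCast _ _
      rw [this, map_natCast]
    simp only [S, map_sum]
    rw [Finset.sum_congr rfl (fun u _ => key u), ← map_sum]
    have : ∑ u : Fˣ, ((u:F)⁻¹ * ∑ i ∈ Finset.range (Module.finrank (ZMod p) F), (u:F) ^ (p ^ i)) = -1 := by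
      simp only [Finset.mul_sum]
      rw [Finset.sum_comm]
      have e : ∀ i, ∑ u : Fˣ, (u:F)⁻¹ * (u:F)^(p^i) = if Fintype.card F - 1 ∣ p ^ i - 1 then -1 else 0 := by
        intro i
        rw [← FiniteField.sum_pow_units]
        refine Finset.sum_congr rfl fun u _ => ?_
        have : p^i = (p^i - 1) + 1 := by have := pow_pos hpf.out.pos i; omega
        conv_lhs => rw [this, pow_succ]
        field_simp
      simp only [e]
      have hfpos : 0 < Module.finrank (ZMod p) F := Module.finrank_pos
      rw [Finset.sum_eq_single_of_mem 0 (by simpa using hfpos)]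
      · simp
      · intro i hi hi0
        rw [if_neg]
        rw [hfr]
        rw [Finset.mem_range] at hi
        have h1 : p ^ i < p ^ Module.finrank (ZMod p) F := Nat.pow_lt_pow_right hpf.out.one_lt hi
        have h2 : 1 < p ^ i := Nat.one_lt_pow hi0 hpf.out.one_lt
        exact Nat.not_dvd_of_pos_of_lt (by omega) (by omega)
    rw [this]; simp
  have hSv : A.valuation (S : ℂ) = 1 := by
    rw [← A.valuation_eq_one_iff]
    by_contra hnu
    have : IsLocalRing.residue A S = 0 := by
      rw [IsLocalRing.residue_eq_zero_iff]; exact hnu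
    rw [hSr] at this; simp at this
  rw [hS, map_mul, hSv, mul_one]

theorem digit_sum_p_mul (k : ℕ) (hk : 0 < k) : (p.digits (p * k)).sum = (p.digits k).sum := by
  have hp := hpf.out
  rw [Nat.digits_def' hp.one_lt (Nat.mul_pos hp.pos hk)]
  simp [Nat.mul_div_cancel_left k hp.pos]

theorem digit_sum_succ (m : ℕ) (hm : 0 < m) (h : ¬ p ∣ m + 1) :
    (p.digits (m + 1)).sum = (p.digits m).sum + 1 := by
  have hp := hpf.out
  rw [Nat.digits_def' hp.one_lt (Nat.succ_pos m), Nat.digits_def' hp.one_lt hm, Nat.succ_div_of_not_dvd h]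
  have e1 := Nat.div_add_mod (m + 1) p
  have e2 := Nat.div_add_mod m p
  have e3 : (m + 1) / p = m / p := Nat.succ_div_of_not_dvd h
  rw [e3] at e1
  have e4 : (m + 1) % p = m % p + 1 := by omega
  simp [e4]; ring

theorem stick_le (A : ValuationSubring ℂ) (hA : A.valuation (p : ℂ) < 1)
    (φ : MulChar F ℂ) (hφo : orderOf φ = Fintype.card F - 1)
    (h1 : A.valuation (gaussSum φ (psiF p F)) = A.valuation (zetaP p - 1)) :
    ∀ k, 0 < k → k < Fintype.card F - 1 →
      A.valuation (zetaP p - 1) ^ (p.digits k).sum ≤ A.valuation (gaussSum (φ ^ k) (psiF p F)) := by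
  have hp := hpf.out
  intro k
  induction k using Nat.strong_induction_on with
  | _ k ih =>
  intro hk0 hk
  by_cases hpk : p ∣ k
  · obtain ⟨k', rfl⟩ := hpk
    have hk' : 0 < k' := Nat.pos_of_mul_pos_left hk0
    have hlt : k' < p * k' := lt_mul_of_one_lt_left hk' hp.one_lt
    rw [digit_sum_p_mul p k' hk', mul_comm p k', pow_mul, gauss_frob p]
    exact ih k' hlt hk' (by omega)
  · obtain ⟨m, rfl⟩ : ∃ m, k = m + 1 := ⟨k - 1, by omega⟩
    rcases Nat.eq_zero_or_pos m with rfl | hm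
    · have : p.digits (0+1) = [1] := by simpa using Nat.digits_of_lt p 1 one_ne_zero hp.one_lt
      rw [this]
      simpa using h1.ge
    · have hne : φ ^ m * φ ≠ 1 := by
        rw [← pow_succ]; intro h
        exact absurd (Nat.le_of_dvd (Nat.succ_pos m) (orderOf_dvd_of_pow_eq_one h)) (by omega)
      have h2 := congrArg A.valuation (jacobiSum_mul_nontrivial hne (psiF p F))
      rw [map_mul, map_mul, h1, ← pow_succ] at h2
      rw [digit_sum_succ p m hm hpk, pow_succ]
      calc _ ≤ A.valuation (gaussSum (φ ^ m) (psiF p F)) * A.valuation (zetaP p - 1) := by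
            gcongr; exact ih m (by omega) hm (by omega)
        _ = _ := h2.symm
        _ ≤ _ := mul_le_of_le_one_right' (place_integral A (isIntegral_jacobi _ _))

theorem stick_eq (A : ValuationSubring ℂ) (hA : A.valuation (p : ℂ) < 1) {f : ℕ}
    (hcard : Fintype.card F = p ^ f)
    (φ : MulChar F ℂ) (hφo : orderOf φ = Fintype.card F - 1)
    (h1 : A.valuation (gaussSum φ (psiF p F)) = A.valuation (zetaP p - 1)) 
    (k : ℕ) (hk0 : 0 < k) (hk : k < Fintype.card F - 1) :
    A.valuation (gaussSum (φ ^ k) (psiF p F)) = A.valuation (zetaP p - 1) ^ (p.digits k).sum := by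
  have hp := hpf.out
  have hle := stick_le p A hA φ hφo h1
  have ha := hle k hk0 hk
  have hb := hle (Fintype.card F - 1 - k) (by omega) (by omega)
  have hne : φ ^ k ≠ 1 := by
    intro h
    exact absurd (Nat.le_of_dvd hk0 (orderOf_dvd_of_pow_eq_one h)) (by omega)
  have hinv : (φ ^ k)⁻¹ = φ ^ (Fintype.card F - 1 - k) := by
    apply inv_eq_of_mul_eq_one_right
    rw [← pow_add, show k + (Fintype.card F - 1 - k) = Fintype.card F - 1 by omega, ← hφo, pow_orderOf_eq_one]
  have h2 := congrArg A.valuation (gauss_mul_inv p hne)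
  have hv1 : A.valuation ((φ ^ k) (-1)) = 1 := by
    refine place_root_of_unity A two_ne_zero ?_
    rw [← map_pow]; simp
  rw [map_mul, map_mul, hv1, one_mul, hcard, hinv] at h2
  push_cast at h2
  rw [map_pow, ← place_pi p A hA, ← pow_mul, mul_comm (p-1) f,
    ← digit_compl p hp.one_lt f k hk0 (hcard ▸ hk), pow_add, ← hcard] at h2
  refine le_antisymm ?_ ha
  have hbpos : 0 < A.valuation (gaussSum (φ ^ (Fintype.card F - 1 - k)) (psiF p F)) := by
    refine lt_of_lt_of_le (pow_pos ?_ _) hb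
    rw [Valuation.pos_iff, sub_ne_zero]
    exact (zetaP_prim p hp.ne_zero).ne_one hp.one_lt
  rw [← mul_le_mul_iff_left₀ hbpos, h2]
  gcongr

theorem stickelberger (A : ValuationSubring ℂ) (hA : A.valuation (p : ℂ) < 1) {f : ℕ}
    (hcard : Fintype.card F = p ^ f) (χ : MulChar F ℂ) {N : ℕ} (hN : orderOf χ = N) (hN1 : 2 < N) :
    ∃ c : ℕ, c.Coprime N ∧ A.valuation (gaussSum χ (psiF p F)) ^ N =
      A.valuation (p : ℂ) ^ (∑ i ∈ Finset.range f, (p ^ i * c % N)) := by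
  classical
  have hp := hpf.out
  obtain ⟨ι, ω, h1, h2, h3⟩ := exists_teich (F := F) p A hA
  obtain ⟨k, hk, rfl⟩ := h3 χ
  have hφo : orderOf (ω⁻¹) = Fintype.card F - 1 := by rw [orderOf_inv, h2]
  have hNd : N ∣ Fintype.card F - 1 := by
    rw [← hN, ← hφo]; exact orderOf_pow_dvd k
  have hq1 : 1 < Fintype.card F := Fintype.one_lt_card
  have hNle := Nat.le_of_dvd (by omega) hNd
  have hk0 : 0 < k := by
    rcases Nat.eq_zero_or_pos k with rfl | h
    · simp at hN; omega
    · exact h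
  have hφ1 : ω⁻¹ ≠ 1 := by
    rintro h; rw [h] at hφo; simp at hφo; omega
  have hG1 := place_gauss_one p A hA (by omega) ι ω⁻¹ hφ1 h1
  have hv := stick_eq p A hA hcard ω⁻¹ hφo hG1 k hk0 hk
  have hoN : N = (Fintype.card F - 1) / Nat.gcd (Fintype.card F - 1) k := by
    rw [← hN, orderOf_pow' _ hk0.ne', hφo]
  set d := Nat.gcd (Fintype.card F - 1) k with hd
  have hdpos : 0 < d := Nat.gcd_pos_of_pos_right _ hk0
  obtain ⟨c, hc⟩ : d ∣ k := Nat.gcd_dvd_right _ _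
  have hqd : Fintype.card F - 1 = d * N := by
    rw [hoN, Nat.mul_div_cancel' (Nat.gcd_dvd_left _ _)]
  have hco : c.Coprime N := by
    have h := Nat.coprime_div_gcd_div_gcd (m := Fintype.card F - 1) (n := k) (hd ▸ hdpos)
    rw [← hd, ← hoN, hc, Nat.mul_div_cancel_left _ hdpos] at h
    exact h.symm
  refine ⟨c, hco, ?_⟩
  have hrot := digit_rot p hp.one_lt f k (hcard ▸ hk)
  rw [← hcard, hqd] at hrot
  have e : ∀ i ∈ Finset.range f, p ^ i * k % (d * N) = d * (p ^ i * c % N) := by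
    intro i _
    rw [hc, mul_left_comm, Nat.mul_mod_mul_left]
  rw [Finset.sum_congr rfl e, ← Finset.mul_sum] at hrot
  have hrot2 : (p - 1) * ∑ i ∈ Finset.range f, (p ^ i * c % N) = (p.digits k).sum * N := by
    apply Nat.eq_of_mul_eq_mul_left hdpos
    rw [← mul_left_comm, hrot]; ring
  rw [hv, ← pow_mul, ← hrot2, pow_mul, place_pi p A hA]
end

open Complex Polynomial IntermediateField
set_option linter.unusedSectionVars false

section
variable (l : ℕ) [hlf : Fact l.Prime]

/-- the Legendre character as an integer valued function on naturals -/
def psiL (a : ℕ) : ℤ := quadraticChar (ZMod l) (a : ZMod l)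

theorem psiL_mul (a b : ℕ) : psiL l (a * b) = psiL l a * psiL l b := by
  simp only [psiL, Nat.cast_mul, map_mul]

theorem psiL_one : psiL l 1 = 1 := by simp [psiL]

theorem psiL_pow (a k : ℕ) : psiL l (a ^ k) = psiL l a ^ k := by
  simp only [psiL, Nat.cast_pow, map_pow]

theorem psiL_congr {a b : ℕ} (h : a ≡ b [MOD l]) : psiL l a = psiL l b := by
  unfold psiL; rw [(ZMod.natCast_eq_natCast_iff a b l).mpr h]

theorem psiL_eq_zero {a : ℕ} (h : l ∣ a) : psiL l a = 0 := by
  unfold psiL; rw [(ZMod.natCast_eq_zero_iff a l).mpr h]; simp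

theorem psiL_dichotomy {a : ℕ} (h : ¬ l ∣ a) : psiL l a = 1 ∨ psiL l a = -1 := by
  unfold psiL; apply quadraticChar_dichotomy
  rwa [Ne, ZMod.natCast_eq_zero_iff]

theorem psiL_sq {a : ℕ} (h : ¬ l ∣ a) : psiL l a * psiL l a = 1 := by
  rcases psiL_dichotomy l h with h | h <;> simp [h]

theorem psi_neg_one (hl : l % 4 = 3) : quadraticChar (ZMod l) (-1) = -1 := by
  rw [quadraticChar_neg_one (by rw [ZMod.ringChar_zmod_n]; omega), ZMod.card]
  exact ZMod.χ₄_nat_three_mod_four hl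

theorem psiL_sub (hl : l % 4 = 3) {a n : ℕ} (hn : l ∣ n) (ha : a ≤ n) : psiL l (n - a) = - psiL l a := by
  unfold psiL
  rw [Nat.cast_sub ha, (ZMod.natCast_eq_zero_iff n l).mpr hn, zero_sub, ← neg_one_mul, map_mul, psi_neg_one l hl, neg_one_mul]

theorem sum_psiL (hl2 : l ≠ 2) : ∑ a ∈ Finset.range l, psiL l a = 0 := by
  have h := quadraticChar_sum_zero (F := ZMod l) (by rw [ZMod.ringChar_zmod_n]; exact hl2)
  rw [← h]
  refine Finset.sum_bij' (fun a _ => (a : ZMod l)) (fun x _ => x.val) ?_ ?_ ?_ ?_ ?_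
  · simp
  · intro x _; simpa using ZMod.val_lt x
  · intro a ha; simpa using ZMod.val_cast_of_lt (by simpa using ha)
  · intro x _; simp
  · intro a _; rfl

/-- `S = ∑ ψ(a) a`. -/
def psiS : ℤ := ∑ a ∈ Finset.range l, psiL l a * a

theorem sum_psiL_block (hl2 : l ≠ 2) (t : ℕ) :
    ∑ a ∈ Finset.range (l * t), psiL l a * a = t * psiS l := by
  induction t with
  | zero => simp
  | succ t ih =>
    rw [mul_add, mul_one, Finset.sum_range_add, ih]
    have e : ∀ r ∈ Finset.range l, psiL l (l * t + r) * ((l * t + r : ℕ) : ℤ) = psiL l r * r + (l * t : ℕ) * psiL l r := by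
      intro r _
      rw [psiL_congr l (b := r) (by unfold Nat.ModEq; simp)]
      push_cast; ring
    rw [Finset.sum_congr rfl e, Finset.sum_add_distrib, ← Finset.mul_sum, sum_psiL l hl2, psiS]
    push_cast; ring

theorem sum_psiL_coprime (hl2 : l ≠ 2) {l2 : ℕ} (hl2p : l2.Prime) (r1 r2 : ℕ) (hr1 : 1 ≤ r1)
    (hr2 : 1 ≤ r2) {N : ℕ} (hN : N = l ^ r1 * l2 ^ r2) :
    l * ∑ a ∈ (Finset.range N).filter (fun a => a.Coprime N), psiL l a * a = N * psiS l * (1 - psiL l l2) := by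
  have hl := hlf.out
  obtain ⟨s, rfl⟩ : ∃ s, r1 = s + 1 := ⟨r1 - 1, by omega⟩
  obtain ⟨t, rfl⟩ : ∃ t, r2 = t + 1 := ⟨r2 - 1, by omega⟩
  have hN' : N = l * (l ^ s * l2 ^ (t+1)) := by rw [hN]; ring
  have hN'' : N = l2 * (l * (l ^ s * l2 ^ t)) := by rw [hN]; ring
  have hco : ∀ a, a.Coprime N ↔ ¬ l ∣ a ∧ ¬ l2 ∣ a := by
    intro a
    rw [hN, Nat.coprime_mul_iff_right, Nat.coprime_pow_right_iff (by omega), Nat.coprime_pow_right_iff (by omega),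
      Nat.coprime_comm, hl.coprime_iff_not_dvd, Nat.coprime_comm, hl2p.coprime_iff_not_dvd]
  have h1 : ∑ a ∈ (Finset.range N).filter (fun a => a.Coprime N), psiL l a * a =
      ∑ a ∈ (Finset.range N).filter (fun a => ¬ l2 ∣ a), psiL l a * a := by
    refine Finset.sum_subset (fun a => ?_) ?_
    · simp only [Finset.mem_filter, hco]; tauto
    · intro a ha ha'
      simp only [Finset.mem_filter, hco] at ha ha'
      rw [psiL_eq_zero l (by tauto), zero_mul]
  have h2 := Finset.sum_filter_add_sum_filter_not (Finset.range N) (fun a => l2 ∣ a) (fun a => psiL l a * (a:ℤ))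
  have h3 : ∑ a ∈ Finset.range N, psiL l a * (a:ℤ) = (l ^ s * l2 ^ (t+1) : ℕ) * psiS l := by
    rw [hN', sum_psiL_block l hl2]
  have h4 : ∑ a ∈ (Finset.range N).filter (fun a => l2 ∣ a), psiL l a * (a:ℤ) = l2 * psiL l l2 * ((l ^ s * l2 ^ t : ℕ) * psiS l) := by
    rw [← sum_psiL_block l hl2, Finset.mul_sum]
    refine Finset.sum_bij' (fun a _ => a / l2) (fun b _ => l2 * b) ?_ ?_ ?_ ?_ ?_
    · intro a ha
      simp only [Finset.mem_filter, Finset.mem_range] at ha ⊢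
      rw [Nat.div_lt_iff_lt_mul hl2p.pos, mul_comm]; rw [← hN'']; exact ha.1
    · intro b hb
      simp only [Finset.mem_filter, Finset.mem_range] at hb ⊢
      refine ⟨?_, dvd_mul_right _ _⟩
      rw [hN'']; exact Nat.mul_lt_mul_of_pos_left hb hl2p.pos
    · intro a ha
      simp only [Finset.mem_filter] at ha
      exact Nat.mul_div_cancel' ha.2
    · intro b _; exact Nat.mul_div_cancel_left _ hl2p.pos
    · intro a ha
      simp only [Finset.mem_filter] at ha
      obtain ⟨b, rfl⟩ := ha.2
      rw [Nat.mul_div_cancel_left _ hl2p.pos, psiL_mul]; push_cast; ring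
  rw [h1, show ∑ a ∈ (Finset.range N).filter (fun a => ¬ l2 ∣ a), psiL l a * (a:ℤ) = (l ^ s * l2 ^ (t+1) : ℕ) * psiS l - l2 * psiL l l2 * ((l ^ s * l2 ^ t : ℕ) * psiS l) by rw [← h3, ← h4, ← h2]; ring]
  rw [hN]; push_cast; ring

theorem half_coset (hl4 : l % 4 = 3) {N p c f : ℕ} (hlN : l ∣ N) (hN0 : 2 < N) (hNp : Nat.Coprime p N)
    (hf : orderOf (p : ZMod N) = f) (hind : f = Nat.totient N / 2) (hψp : psiL l p = 1)
    (hc : c.Coprime N) :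
    2 * ((∑ i ∈ Finset.range f, (p ^ i * c % N) : ℕ) : ℤ) = N * f + psiL l c *
      ∑ a ∈ (Finset.range N).filter (fun a => a.Coprime N), psiL l a * a := by
  have hl := hlf.out
  have hco : ∀ a, a.Coprime N → ¬ l ∣ a := fun a ha hla =>
    hl.one_lt.ne' (Nat.dvd_one.mp (ha ▸ Nat.dvd_gcd hla hlN))
  have hψ : ∀ a, psiL l (a % N) = psiL l a := fun a => psiL_congr l ((Nat.mod_modEq a N).of_dvd hlN)
  set U := (Finset.range N).filter (fun a => a.Coprime N) with hU
  set S1 := U.filter (fun a => psiL l a = psiL l c) with hS1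
  set S2 := U.filter (fun a => ¬ psiL l a = psiL l c) with hS2
  have hmemU : ∀ a ∈ U, 0 < a ∧ a < N ∧ a.Coprime N := by
    intro a ha
    simp only [hU, Finset.mem_filter, Finset.mem_range] at ha
    refine ⟨?_, ha.1, ha.2⟩
    rcases Nat.eq_zero_or_pos a with rfl | h
    · simp at ha; omega
    · exact h
  have hnegU : ∀ a ∈ U, N - a ∈ U := by
    intro a ha
    obtain ⟨h1, h2, h3⟩ := hmemU a ha
    simp only [hU, Finset.mem_filter, Finset.mem_range]
    exact ⟨by omega, by
      have e := Nat.coprime_sub_self_right (m := N - a) (n := N) (by omega)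
      rw [Nat.sub_sub_self h2.le] at e
      rw [← e, Nat.coprime_comm, Nat.coprime_sub_self_right h2.le]; exact h3⟩
  have hψc := psiL_dichotomy l (hco c hc)
  have hS1m : ∀ a, a ∈ S1 ↔ a ∈ U ∧ psiL l a = psiL l c := fun a => by simp [hS1]
  have hS2m : ∀ a, a ∈ S2 ↔ a ∈ U ∧ psiL l a = - psiL l c := fun a => by
    simp only [hS2, Finset.mem_filter]
    refine and_congr_right fun ha => ?_
    have := psiL_dichotomy l (hco a (hmemU a ha).2.2)
    rcases this with h | h <;> rcases hψc with h' | h' <;> simp [h, h']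
  have hneg12 : ∀ a ∈ S1, N - a ∈ S2 := by
    intro a ha; rw [hS1m] at ha; rw [hS2m]
    exact ⟨hnegU a ha.1, by rw [psiL_sub l hl4 hlN (hmemU a ha.1).2.1.le, ha.2]⟩
  have hneg21 : ∀ a ∈ S2, N - a ∈ S1 := by
    intro a ha; rw [hS2m] at ha; rw [hS1m]
    exact ⟨hnegU a ha.1, by rw [psiL_sub l hl4 hlN (hmemU a ha.1).2.1.le, ha.2, neg_neg]⟩
  have hb : ∀ g : ℕ → ℤ, ∑ a ∈ S2, g a = ∑ a ∈ S1, g (N - a) := by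
    intro g
    refine Finset.sum_bij' (fun a _ => N - a) (fun a _ => N - a) hneg21 hneg12 ?_ ?_ ?_
    · intro a ha; have := (hmemU a ((hS2m a).mp ha).1).2.1; omega
    · intro a ha; have := (hmemU a ((hS1m a).mp ha).1).2.1; omega
    · intro a ha; have := (hmemU a ((hS2m a).mp ha).1).2.1
      congr 1; omega
  have hcard2 : S2.card = S1.card := by
    have := hb (fun _ => 1); simp at this; exact_mod_cast this
  have hcardU : U.card = Nat.totient N := by
    rw [Nat.totient_eq_card_coprime]; congr 1
    ext a; simp [hU, Nat.coprime_comm]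
  have hcard1 : S1.card = f := by
    have h := Finset.card_filter_add_card_filter_not (s := U) (fun a => psiL l a = psiL l c)
    rw [← hS1, ← hS2, hcard2, hcardU] at h
    omega
  have hN1 : NeZero N := ⟨by omega⟩
  have hinj : Set.InjOn (fun i => p ^ i * c % N) (Finset.range f : Set ℕ) := by
    intro i hi j hj hij
    simp only [Finset.coe_range, Set.mem_Iio] at hi hj
    simp only at hij
    have h1 : p ^ i * c ≡ p ^ j * c [MOD N] := hij
    have h2 : p ^ i ≡ p ^ j [MOD N] := Nat.ModEq.cancel_right_of_coprime hc.symm h1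
    have h3 : (p : ZMod N) ^ i = (p : ZMod N) ^ j := by
      have := (ZMod.natCast_eq_natCast_iff _ _ N).mpr h2; push_cast at this; exact this
    exact pow_injOn_Iio_orderOf (by rw [hf]; exact hi) (by rw [hf]; exact hj) h3
  have himg : (Finset.range f).image (fun i => p ^ i * c % N) = S1 := by
    apply Finset.eq_of_subset_of_card_le
    · intro a ha
      simp only [Finset.mem_image, Finset.mem_range] at ha
      obtain ⟨i, hi, rfl⟩ := ha
      rw [hS1m]
      refine ⟨?_, ?_⟩
      · simp only [hU, Finset.mem_filter, Finset.mem_range]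
        refine ⟨Nat.mod_lt _ (by omega), ?_⟩
        have : (p^i*c).Coprime N := Nat.Coprime.mul_left (hNp.pow_left i) hc
        rw [Nat.Coprime, ← Nat.gcd_rec, Nat.gcd_comm]; exact this
      · rw [hψ, psiL_mul, psiL_pow, hψp, one_pow, one_mul]
    · rw [hcard1, Finset.card_image_of_injOn hinj, Finset.card_range]
  have hT : ((∑ i ∈ Finset.range f, (p ^ i * c % N) : ℕ) : ℤ) = ∑ a ∈ S1, (a:ℤ) := by
    rw [← himg, Finset.sum_image hinj]; push_cast; rfl
  have hW : ∑ a ∈ U, psiL l a * (a:ℤ) = psiL l c * ∑ a ∈ S1, (a:ℤ) - psiL l c * ∑ a ∈ S1, ((N:ℤ) - a) := by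
    rw [← Finset.sum_filter_add_sum_filter_not U (fun a => psiL l a = psiL l c), ← hS1, ← hS2, sub_eq_add_neg]
    congr 1
    · rw [Finset.mul_sum]; refine Finset.sum_congr rfl fun a ha => ?_
      rw [((hS1m a).mp ha).2]
    · have : ∑ a ∈ S2, psiL l a * (a:ℤ) = ∑ a ∈ S2, (- psiL l c) * (a:ℤ) :=
        Finset.sum_congr rfl fun a ha => by rw [((hS2m a).mp ha).2]
      rw [this, hb (fun a => (- psiL l c) * (a:ℤ)), ← neg_mul, Finset.mul_sum]
      refine Finset.sum_congr rfl fun a ha => ?_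
      rw [Nat.cast_sub (hmemU a ((hS1m a).mp ha).1).2.1.le]
  rw [hT, hW, Finset.sum_sub_distrib]
  simp only [Finset.sum_const, hcard1, nsmul_eq_mul]
  have h2 := psiL_sq l (hco c hc)
  linear_combination (-(2 * ∑ a ∈ S1, (a:ℤ)) + f * N) * h2

theorem psiL_p_eq_one (hl4 : l % 4 = 3) {p r1 : ℕ} (hr1 : 1 ≤ r1) (hlp : ¬ l ∣ p)
    (hord1 : orderOf (p : ZMod (l ^ r1)) = Nat.totient (l ^ r1) / 2) : psiL l p = 1 := by
  have hl := hlf.out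
  have hodd : Odd (Nat.totient (l ^ r1) / 2) := by
    rw [Nat.totient_prime_pow hl hr1, Nat.mul_div_assoc _ (by omega)]
    refine Odd.mul (Odd.pow (Nat.odd_iff.mpr (by omega))) (Nat.odd_iff.mpr (by omega))
  have h1 : ((p ^ (Nat.totient (l ^ r1) / 2) : ℕ) : ZMod (l ^ r1)) = ((1 : ℕ) : ZMod (l ^ r1)) := by
    push_cast; rw [← hord1, pow_orderOf_eq_one]
  have h2 := (ZMod.natCast_eq_natCast_iff _ _ _).mp h1
  have h3 := psiL_congr l (h2.of_dvd (dvd_pow_self l (by omega)))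
  rw [psiL_pow, psiL_one] at h3
  rcases psiL_dichotomy l hlp with h | h
  · exact h
  · rw [h, hodd.neg_one_pow] at h3; omega

theorem psiS_parity (hl4 : l % 4 = 3) {B : ℤ} (hB : psiS l = l * B) : Odd B := by
  have hl := hlf.out
  have h1 : (2:ℤ) ∣ psiS l - ∑ a ∈ Finset.range l, (a:ℤ) := by
    unfold psiS
    rw [← Finset.sum_sub_distrib]
    refine Finset.dvd_sum fun a ha => ?_
    rw [Finset.mem_range] at ha
    rcases Nat.eq_zero_or_pos a with rfl | h0
    · simp
    · rcases psiL_dichotomy l (Nat.not_dvd_of_pos_of_lt h0 ha) with h | h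
      · simp [h]
      · rw [h]; exact ⟨-a, by ring⟩
  have h2 : (∑ a ∈ Finset.range l, (a:ℤ)) * 2 = l * (l - 1) := by
    have := Finset.sum_range_id_mul_two l
    have e : ((l - 1 : ℕ) : ℤ) = (l:ℤ) - 1 := by rw [Nat.cast_sub hl.one_lt.le]; simp
    rw [← e]
    have h := congrArg (Nat.cast (R := ℤ)) this
    push_cast at h ⊢; exact h
  obtain ⟨k, hk⟩ : ∃ k : ℤ, (l:ℤ) = 4 * k + 3 := ⟨(l / 4 : ℕ), by omega⟩
  have h3 : ∑ a ∈ Finset.range l, (a:ℤ) = (4 * k + 3) * (2 * k + 1) := by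
    rw [hk] at h2; linarith
  rw [h3, hB, hk] at h1
  by_contra hB'
  rw [Int.not_odd_iff_even] at hB'
  obtain ⟨b, rfl⟩ := hB'
  obtain ⟨d, hd⟩ := h1
  ring_nf at hd
  omega
end

open Complex Polynomial IntermediateField
set_option linter.unusedSectionVars false

noncomputable abbrev EE : IntermediateField ℚ ℂ := algebraicClosure ℚ ℂ

theorem mem_EE {z : ℂ} (hz : IsIntegral ℤ z) : z ∈ EE := by
  rw [mem_algebraicClosure_iff]
  exact (hz.tower_top (A := ℚ)).isAlgebraic

theorem EE_galois : IsGalois ℚ EE := by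
  have := algebraicClosure.isAlgClosure ℚ ℂ
  have h := @IsAlgClosure.isGalois ℚ EE _ _ EE.algebra' this _
  convert h using 1
  exact Subsingleton.elim _ _

theorem fixed_int {z : ℂ} (hz : IsIntegral ℤ z)
    (h : ∀ σ : EE ≃ₐ[ℚ] EE, σ ⟨z, mem_EE hz⟩ = ⟨z, mem_EE hz⟩) : ∃ n : ℤ, z = n := by
  have := EE_galois
  have h1 := (InfiniteGalois.mem_bot_iff_fixed (k := ℚ) (K := EE) ⟨z, mem_EE hz⟩).mpr h
  rw [IntermediateField.mem_bot] at h1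
  obtain ⟨r, hr⟩ := h1
  have hr2 : (r : ℂ) = z := by simpa using congrArg Subtype.val hr
  have h2 : IsIntegral ℤ r := by
    rw [← isIntegral_algebraMap_iff (B := ℂ) (algebraMap ℚ ℂ).injective]
    simpa [hr2] using hz
  obtain ⟨n, hn⟩ := IsIntegrallyClosed.isIntegral_iff.mp h2
  exact ⟨n, by rw [← hr2, ← hn]; simp⟩

theorem sigma_root (σ : EE ≃ₐ[ℚ] EE) {M : ℕ} (hM : 0 < M) :
    ∃ a : ℕ, a.Coprime M ∧ ∀ z : EE, z ^ M = 1 → σ z = z ^ a := by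
  have : NeZero M := ⟨hM.ne'⟩
  have hζ := Complex.isPrimitiveRoot_exp M hM.ne'
  set ζ := Complex.exp (2 * Real.pi * Complex.I / M)
  have hi : IsIntegral ℤ ζ := isIntegral_root hM.ne' hζ.pow_eq_one
  have hζ' : IsPrimitiveRoot (⟨ζ, mem_EE hi⟩ : EE) M :=
    IsPrimitiveRoot.of_map_of_injective (f := EE.val) hζ Subtype.val_injective
  have h2 := hζ'.map_of_injective (f := σ) σ.injective
  obtain ⟨a, -, hac, ha⟩ := hζ'.isPrimitiveRoot_iff.mp h2
  refine ⟨a, hac, fun z hz => ?_⟩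
  obtain ⟨i, -, rfl⟩ := hζ'.eq_pow_of_pow_eq_one hz
  rw [map_pow, ← ha, ← pow_mul, ← pow_mul, mul_comm]

theorem sigma_gauss {R : Type} [Field R] [Fintype R] (χ χ' : MulChar R ℂ) (ψ : AddChar R ℂ) (σ : EE ≃ₐ[ℚ] EE)
    {M a : ℕ} (hM : 0 < M) (hσ : ∀ z : EE, z ^ M = 1 → σ z = z ^ a)
    (hχ : ∀ x, ((σ ⟨χ x, mem_EE (isIntegral_mulChar χ x)⟩ : EE) : ℂ) = χ' x)
    (hψ : ∀ x, ψ x ^ M = 1) (hG : gaussSum χ ψ ∈ EE) :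
    ((σ ⟨gaussSum χ ψ, hG⟩ : EE) : ℂ) = gaussSum χ' (ψ.mulShift a) := by
  have hχi : ∀ x, χ x ∈ EE := fun x => mem_EE (isIntegral_mulChar χ x)
  have hψi : ∀ x, ψ x ∈ EE := fun x => mem_EE (isIntegral_root hM.ne' (hψ x))
  have h1 : (⟨gaussSum χ ψ, hG⟩ : EE) = ∑ x, (⟨χ x, hχi x⟩ : EE) * ⟨ψ x, hψi x⟩ := by
    apply Subtype.ext; simp [gaussSum]
  rw [h1, map_sum]
  simp only [gaussSum]
  push_cast
  refine Finset.sum_congr rfl fun x _ => ?_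
  rw [map_mul, hσ ⟨ψ x, hψi x⟩ (Subtype.ext (by simpa using hψ x))]
  have e2 : ψ.mulShift a x = ψ x ^ a := by
    rw [AddChar.mulShift_apply, ← AddChar.map_nsmul_eq_pow, nsmul_eq_mul]
  push_cast
  rw [hχ x, e2]

theorem sigma_gauss_pow {R : Type} [Field R] [Fintype R] (χ : MulChar R ℂ) (ψ : AddChar R ℂ) (σ : EE ≃ₐ[ℚ] EE)
    {M a : ℕ} (hM : 0 < M) (ha : a ≠ 0) (hσ : ∀ z : EE, z ^ M = 1 → σ z = z ^ a)
    (hχ : χ ^ M = 1) (hψ : ∀ x, ψ x ^ M = 1) (hG : gaussSum χ ψ ∈ EE) :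
    ((σ ⟨gaussSum χ ψ, hG⟩ : EE) : ℂ) = gaussSum (χ ^ a) (ψ.mulShift a) := by
  refine sigma_gauss χ (χ ^ a) ψ σ hM hσ (fun x => ?_) hψ hG
  have hχi : ∀ x, χ x ∈ EE := fun x => mem_EE (isIntegral_mulChar χ x)
  by_cases hx : x = 0
  · subst hx
    have : (⟨χ 0, hχi 0⟩ : EE) = 0 := Subtype.ext (by simp [χ.map_zero])
    rw [this]; simp [(χ^a).map_zero]
  · have hχv : χ x ^ M = 1 := by
      have := congrArg (fun c : MulChar R ℂ => c x) hχ
      simp only [MulChar.pow_apply' _ hM.ne'] at this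
      rw [this, MulChar.one_apply (isUnit_iff_ne_zero.mpr hx)]
    rw [hσ ⟨χ x, hχi x⟩ (Subtype.ext (by simpa using hχv)), MulChar.pow_apply' _ ha]
    simp

theorem isIntegral_sqrtNeg_int (m : ℕ) : IsIntegral ℤ (sqrtNeg m) := by
  refine ⟨X ^ 2 + C (m : ℤ), monic_X_pow_add_C _ (by norm_num), ?_⟩
  simp [sqrtNeg_sq]

theorem sqrtNeg_ne_zero {m : ℕ} (hm : m ≠ 0) : sqrtNeg m ≠ 0 := by
  intro h; have := sqrtNeg_sq m; rw [h] at this; simp at this; exact hm this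

section
variable (l : ℕ) [hlf : Fact l.Prime]

noncomputable def qC : MulChar (ZMod l) ℂ := (quadraticChar (ZMod l)).ringHomComp (Int.castRingHom ℂ)

theorem qC_apply (x : ZMod l) : qC l x = (quadraticChar (ZMod l) x : ℂ) := rfl

theorem qC_quad : (qC l).IsQuadratic := (quadraticChar_isQuadratic (ZMod l)).comp _

theorem qC_ne_one (hl : l ≠ 2) : qC l ≠ 1 := by
  have h := quadraticChar_ne_one (F := ZMod l) (by rw [ZMod.ringChar_zmod_n]; exact hl)
  exact (MulChar.ringHomComp_ne_one_iff (Int.cast_injective)).mpr h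

theorem tau_sq (hl4 : l % 4 = 3) : gaussSum (qC l) (psiF l (ZMod l)) ^ 2 = -(l:ℂ) := by
  rw [gaussSum_sq (qC_ne_one l (by omega)) (qC_quad l) (psiF_primitive l), qC_apply, psi_neg_one l hl4, ZMod.card]
  simp

theorem sqrtNeg_eq_tau (hl4 : l % 4 = 3) : ∃ ε : ℤ, (ε = 1 ∨ ε = -1) ∧ sqrtNeg l = ε * gaussSum (qC l) (psiF l (ZMod l)) := by
  have : sqrtNeg l ^ 2 = gaussSum (qC l) (psiF l (ZMod l)) ^ 2 := by rw [sqrtNeg_sq, tau_sq l hl4]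
  rcases sq_eq_sq_iff_eq_or_eq_neg.mp this with h | h
  · exact ⟨1, Or.inl rfl, by simp [h]⟩
  · exact ⟨-1, Or.inr rfl, by simp [h]⟩

theorem sigma_sqrtNeg (hl4 : l % 4 = 3) (σ : EE ≃ₐ[ℚ] EE) {M a : ℕ} (hlM : l ∣ M) (ha : a.Coprime M)
    (hσ : ∀ z : EE, z ^ M = 1 → σ z = z ^ a) :
    ((σ ⟨sqrtNeg l, mem_EE (isIntegral_sqrtNeg_int l)⟩ : EE) : ℂ) = psiL l a * sqrtNeg l := by
  obtain ⟨ε, hε, h⟩ := sqrtNeg_eq_tau l hl4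
  have hl := hlf.out
  have hla : ¬ l ∣ a := fun h => hl.one_lt.ne' (Nat.dvd_one.mp (ha ▸ Nat.dvd_gcd h hlM))
  have hτi := isIntegral_gauss l (qC l)
  have e : (⟨sqrtNeg l, mem_EE (isIntegral_sqrtNeg_int l)⟩ : EE) = (ε : EE) * ⟨gaussSum (qC l) (psiF l (ZMod l)), mem_EE hτi⟩ :=
    Subtype.ext (by simp [h])
  obtain ⟨m, rfl⟩ := hlM
  have hσl : ∀ z : EE, z ^ l = 1 → σ z = z ^ a := fun z hz => hσ z (by rw [pow_mul, hz, one_pow])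
  have hu : IsUnit (a : ZMod l) := by
    rw [isUnit_iff_ne_zero, Ne, ZMod.natCast_eq_zero_iff]; exact hla
  have h1 := sigma_gauss (qC l) (qC l) (psiF l (ZMod l)) σ hl.pos hσl (fun x => by
    have : (⟨qC l x, mem_EE (isIntegral_mulChar (qC l) x)⟩ : EE) = ((quadraticChar (ZMod l) x : ℤ) : EE) :=
      Subtype.ext (by simp [qC_apply])
    rw [this, map_intCast, qC_apply]; simp) (psiF_pow_p l) (mem_EE hτi)
  have h2 := gaussSum_mulShift_eq (qC l) (psiF l (ZMod l)) hu.unit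
  rw [hu.unit_spec, (qC_quad l).inv] at h2
  rw [e, map_mul, map_intCast]
  push_cast
  rw [h1, h2, qC_apply, h]
  simp only [psiL]; ring

theorem half_image (hl4 : l % 4 = 3) {N p c f : ℕ} (hlN : l ∣ N) (hN0 : 2 < N) (hNp : Nat.Coprime p N)
    (hf : orderOf (p : ZMod N) = f) (hind : f = Nat.totient N / 2) (hψp : psiL l p = 1)
    (hc : c.Coprime N) (hψc : psiL l c = 1) : ∃ i, p ^ i ≡ c [MOD N] := by
  classical
  have hl := hlf.out
  have : NeZero N := ⟨by omega⟩
  let P : (ZMod N)ˣ := ZMod.unitOfCoprime p hNp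
  let C : (ZMod N)ˣ := ZMod.unitOfCoprime c hc
  let θ : (ZMod N)ˣ →* ℤˣ := (quadraticChar (ZMod l)).toUnitHom.comp (ZMod.unitsMap hlN)
  have hθ : ∀ (a : ℕ) (ha : a.Coprime N), ((θ (ZMod.unitOfCoprime a ha) : ℤˣ) : ℤ) = psiL l a := by
    intro a ha
    simp [θ, psiL, ZMod.unitsMap]
  have hPo : orderOf P = f := by rw [← orderOf_units]; simpa [P] using hf
  have hle : Subgroup.zpowers P ≤ θ.ker := by
    rw [Subgroup.zpowers_le, MonoidHom.mem_ker]
    ext; rw [hθ, hψp]; rfl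
  have hneg : θ (-1) = -1 := by
    ext
    have := psi_neg_one l hl4
    simp [θ, ZMod.unitsMap, this]
  have hcard : Nat.card θ.ker * 2 = Nat.totient N := by
    have h1 := Subgroup.card_mul_index θ.ker
    rw [Subgroup.index_ker] at h1
    have : θ.range = ⊤ := by
      rw [MonoidHom.range_eq_top]
      intro u
      rcases Int.units_eq_one_or u with rfl | rfl
      · exact ⟨1, map_one _⟩
      · exact ⟨-1, hneg⟩
    rw [this] at h1
    rw [← ZMod.card_units_eq_totient, ← Nat.card_eq_fintype_card, ← h1]
    simp
  have heq : Subgroup.zpowers P = θ.ker := by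
    apply Subgroup.eq_of_le_of_card_ge hle
    rw [Nat.card_zpowers, hPo]; omega
  have hC : C ∈ Subgroup.zpowers P := by
    rw [heq, MonoidHom.mem_ker]; ext; rw [hθ, hψc]; rfl
  obtain ⟨i, hi⟩ := (Submonoid.mem_powers_iff _ _).mp (mem_powers_iff_mem_zpowers.mpr hC)
  refine ⟨i, ?_⟩
  rw [← ZMod.natCast_eq_natCast_iff]
  have := congrArg Units.val hi
  push_cast
  simpa [P, C] using this


theorem gauss_pow_one (p : ℕ) [hpf : Fact p.Prime] {F : Type} [Field F] [Fintype F] [Algebra (ZMod p) F]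
    (hl4 : l % 4 = 3) {N a f : ℕ} (hlN : l ∣ N) (hN0 : 2 < N) (hNp : Nat.Coprime p N)
    (hf : orderOf (p : ZMod N) = f) (hind : f = Nat.totient N / 2) (hψp : psiL l p = 1)
    (ha : a.Coprime N) (χ : MulChar F ℂ) (hχ : orderOf χ = N) :
    (psiL l a = 1 → gaussSum (χ ^ a) (psiF p F) = gaussSum χ (psiF p F)) ∧
    (psiL l a = -1 → gaussSum (χ ^ a) (psiF p F) = gaussSum χ⁻¹ (psiF p F)) := by
  constructor
  · intro h
    obtain ⟨i, hi⟩ := half_image l hl4 hlN hN0 hNp hf hind hψp ha h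
    rw [pow_eq_pow_iff_modEq.mpr (hχ ▸ hi.symm), gauss_frob_pow]
  · intro h
    have h1 : psiL l ((N - 1) * a) = 1 := by
      rw [psiL_mul, psiL_sub l hl4 hlN (by omega), psiL_one, h]; norm_num
    have h2 : ((N - 1) * a).Coprime N := by
      refine Nat.Coprime.mul_left ?_ ha
      exact (Nat.coprime_self_sub_left (by omega : 1 ≤ N)).mpr (Nat.coprime_one_left N)
    obtain ⟨i, hi⟩ := half_image l hl4 hlN hN0 hNp hf hind hψp h2 h1
    have h3 : χ ^ (N - 1) = χ⁻¹ := by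
      symm; apply inv_eq_of_mul_eq_one_right
      rw [← pow_succ', show N - 1 + 1 = N by omega, ← hχ, pow_orderOf_eq_one]
    have h4 : χ ^ ((N - 1) * a) = χ ^ (p ^ i) := pow_eq_pow_iff_modEq.mpr (hχ ▸ hi.symm)
    rw [pow_mul, h3, inv_pow] at h4
    rw [← inv_inv (χ ^ a), h4, ← inv_pow, gauss_frob_pow]

theorem gauss_form (p : ℕ) [hpf : Fact p.Prime] {F : Type} [Field F] [Fintype F] [Algebra (ZMod p) F]
    (hl4 : l % 4 = 3) {N f : ℕ} (hlN : l ∣ N) (hN0 : 2 < N) (hNp : Nat.Coprime p N)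
    (hf : orderOf (p : ZMod N) = f) (hind : f = Nat.totient N / 2) (hψp : psiL l p = 1)
    (hcard : Fintype.card F = p ^ f)
    (χ : MulChar F ℂ) (hχ : orderOf χ = N) (hχp : ∀ b : ZMod p, b ≠ 0 → χ (algebraMap (ZMod p) F b) = 1) :
    ∃ t w : ℤ, gaussSum χ (psiF p F) = (t + w * sqrtNeg l) / 2 ∧
      gaussSum χ⁻¹ (psiF p F) = (t - w * sqrtNeg l) / 2 ∧ t ^ 2 + l * w ^ 2 = 4 * p ^ f := by
  have hp := hpf.out
  have hl := hlf.out
  have hχ' : orderOf χ⁻¹ = N := by rw [orderOf_inv, hχ]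
  have hχp' : ∀ b : ZMod p, b ≠ 0 → χ⁻¹ (algebraMap (ZMod p) F b) = 1 := by
    intro b hb; rw [MulChar.inv_apply_eq_inv', hχp b hb, inv_one]
  have hGi := isIntegral_gauss p χ
  have hGi' := isIntegral_gauss p χ⁻¹
  have hsi := isIntegral_sqrtNeg_int l
  have hsh : ∀ (φ : MulChar F ℂ) (a : ℕ), a.Coprime p → (∀ b : ZMod p, b ≠ 0 → φ (algebraMap (ZMod p) F b) = 1) →
      gaussSum (φ ^ a) ((psiF p F).mulShift a) = gaussSum (φ ^ a) (psiF p F) := by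
    intro φ a ha hφ
    have hb : (a : ZMod p) ≠ 0 := by
      rw [Ne, ZMod.natCast_eq_zero_iff]
      intro h; exact hp.one_lt.ne' (Nat.dvd_one.mp (ha ▸ Nat.dvd_gcd h dvd_rfl))
    have ha0 : a ≠ 0 := by rintro rfl; simp at hb
    have hφa := hφ a hb
    rw [map_natCast] at hφa
    have hu : IsUnit (a : F) := by
      rw [isUnit_iff_ne_zero, ← map_natCast (algebraMap (ZMod p) F), Ne, map_eq_zero]
      exact hb
    have := gaussSum_mulShift_eq (φ ^ a) (psiF p F) hu.unit
    rw [hu.unit_spec, MulChar.inv_apply_eq_inv', MulChar.pow_apply' _ ha0, hφa] at this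
    simpa using this
  have key : ∀ σ : EE ≃ₐ[ℚ] EE,
      (σ ⟨_, mem_EE hGi⟩ = ⟨_, mem_EE hGi⟩ ∧ σ ⟨_, mem_EE hGi'⟩ = ⟨_, mem_EE hGi'⟩ ∧ σ ⟨_, mem_EE hsi⟩ = ⟨_, mem_EE hsi⟩) ∨
      (σ ⟨_, mem_EE hGi⟩ = ⟨_, mem_EE hGi'⟩ ∧ σ ⟨_, mem_EE hGi'⟩ = ⟨_, mem_EE hGi⟩ ∧ σ ⟨_, mem_EE hsi⟩ = -⟨_, mem_EE hsi⟩) := by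
    intro σ
    have hM : 0 < N * p := Nat.mul_pos (by omega) hp.pos
    obtain ⟨a, ha, hσ⟩ := sigma_root σ hM
    have haN : a.Coprime N := ha.coprime_mul_right_right
    have hap : a.Coprime p := ha.coprime_mul_left_right
    have ha0 : a ≠ 0 := by
      rintro rfl
      have := Nat.coprime_zero_left N |>.mp haN
      omega
    have hψM : ∀ x, psiF p F x ^ (N * p) = 1 := fun x => by rw [mul_comm, pow_mul, psiF_pow_p, one_pow]
    have e1 := sigma_gauss_pow χ (psiF p F) σ hM ha0 hσ (by rw [pow_mul, ← hχ, pow_orderOf_eq_one, one_pow]) hψM (mem_EE hGi)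
    have e2 := sigma_gauss_pow χ⁻¹ (psiF p F) σ hM ha0 hσ (by rw [pow_mul, ← hχ', pow_orderOf_eq_one, one_pow]) hψM (mem_EE hGi')
    have e3 := sigma_sqrtNeg l hl4 σ (hlN.mul_right p) ha hσ
    rw [hsh χ a hap hχp] at e1
    rw [hsh _ a hap hχp'] at e2
    have hla : ¬ l ∣ a := fun h => hl.one_lt.ne' (Nat.dvd_one.mp (haN ▸ Nat.dvd_gcd h hlN))
    have g1 := gauss_pow_one l p hl4 hlN hN0 hNp hf hind hψp haN χ hχ
    have g2 := gauss_pow_one l p hl4 hlN hN0 hNp hf hind hψp haN χ⁻¹ hχ'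
    rw [inv_inv] at g2
    rcases psiL_dichotomy l hla with h | h
    · left
      refine ⟨Subtype.ext ?_, Subtype.ext ?_, Subtype.ext ?_⟩
      · rw [e1, g1.1 h]
      · rw [e2, g2.1 h]
      · rw [e3, h]; simp
    · right
      refine ⟨Subtype.ext ?_, Subtype.ext ?_, Subtype.ext ?_⟩
      · rw [e1, g1.2 h]
      · rw [e2, g2.2 h]
      · rw [e3, h]; simp
  set G := gaussSum χ (psiF p F) with hG
  set G' := gaussSum χ⁻¹ (psiF p F) with hG'
  obtain ⟨t, ht⟩ := fixed_int (hGi.add hGi') (fun σ => by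
    have e : (⟨G + G', mem_EE (hGi.add hGi')⟩ : EE) = ⟨G, mem_EE hGi⟩ + ⟨G', mem_EE hGi'⟩ := rfl
    rw [e, map_add]
    rcases key σ with ⟨h1, h2, -⟩ | ⟨h1, h2, -⟩
    · rw [h1, h2]
    · rw [h1, h2, add_comm])
  have hyi : IsIntegral ℤ ((G - G') * sqrtNeg l) := (hGi.sub hGi').mul hsi
  obtain ⟨y, hy⟩ := fixed_int hyi (fun σ => by
    have e : (⟨(G - G') * sqrtNeg l, mem_EE hyi⟩ : EE) = (⟨G, mem_EE hGi⟩ - ⟨G', mem_EE hGi'⟩) * ⟨sqrtNeg l, mem_EE hsi⟩ := rfl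
    rw [e, map_mul, map_sub]
    rcases key σ with ⟨h1, h2, h3⟩ | ⟨h1, h2, h3⟩
    · rw [h1, h2, h3]
    · rw [h1, h2, h3]; ring)
  have hχ1 : χ ≠ 1 := by rintro rfl; simp at hχ; omega
  have hGG : G * G' = (p : ℂ) ^ f := by
    have h := gauss_mul_inv p hχ1
    have h1 : χ (-1) = 1 := by
      have := hχp (-1) (by simp)
      simpa using this
    rw [h1, hcard, one_mul] at h
    push_cast at h; exact h
  have hs2 := sqrtNeg_sq l
  have hyy : (y : ℂ) ^ 2 = -(l : ℂ) * (t ^ 2 - 4 * p ^ f) := by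
    rw [← hy, ← ht, ← hGG, mul_pow, hs2]; ring
  have hyy' : y ^ 2 = -(l:ℤ) * (t ^ 2 - 4 * p ^ f) := by exact_mod_cast hyy
  have hly : (l : ℤ) ∣ y := by
    apply (Nat.prime_iff_prime_int.mp hl).dvd_of_dvd_pow (n := 2)
    rw [hyy']; exact ⟨-(t ^ 2 - 4 * p ^ f), by ring⟩
  obtain ⟨w, rfl⟩ := hly
  have hl0 : (l : ℤ) ≠ 0 := by exact_mod_cast hl.ne_zero
  have hs0 := sqrtNeg_ne_zero hl.ne_zero
  have hd : G - G' = - w * sqrtNeg l := by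
    apply mul_right_cancel₀ hs0
    rw [hy]; push_cast; linear_combination (-(w:ℂ)) * (-hs2)
  refine ⟨t, -w, ?_, ?_, ?_⟩
  · push_cast; linear_combination (ht + hd) / 2
  · push_cast; linear_combination (ht - hd) / 2
  · apply mul_left_cancel₀ hl0
    linear_combination hyy'
end

open Complex Polynomial IntermediateField
set_option linter.unusedSectionVars false

theorem sq_one_mod {l r : ℕ} (hl : l.Prime) (hl2 : l % 2 = 1) {y : ℤ} (h : (l:ℤ) ^ r ∣ y ^ 2 - 1)
    (h1 : ¬ (l:ℤ) ^ r ∣ y - 1) : (l:ℤ) ^ r ∣ y + 1 := by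
  have e : y ^ 2 - 1 = (y - 1) * (y + 1) := by ring
  rw [e] at h
  have hP := Nat.prime_iff_prime_int.mp hl
  by_cases hd : (l:ℤ) ∣ y - 1
  · have hd2 : ¬ (l:ℤ) ∣ y + 1 := by
      intro hd2
      have : (l:ℤ) ∣ 2 := by have := dvd_sub hd2 hd; ring_nf at this; exact this
      have h2 : l ∣ 2 := by exact_mod_cast this
      have := (Nat.prime_dvd_prime_iff_eq hl Nat.prime_two).mp h2
      omega
    exact absurd (((hP.coprime_iff_not_dvd.mpr hd2).pow_left).dvd_of_dvd_mul_right h) h1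
  · exact ((hP.coprime_iff_not_dvd.mpr hd).pow_left).dvd_of_dvd_mul_left h

theorem order_half {p l1 l2 r1 r2 N f : ℕ} (hl1 : l1.Prime) (hl2 : l2.Prime) (hne : l1 ≠ l2)
    (hl1m : l1 % 4 = 3) (hl2odd : l2 % 2 = 1)
    (hr1 : 1 ≤ r1) (hr2 : 1 ≤ r2) (hN : N = l1 ^ r1 * l2 ^ r2)
    (hord2 : orderOf (p : ZMod (l2 ^ r2)) = Nat.totient (l2 ^ r2))
    (hind : f = Nat.totient N / 2) :
    Even f ∧ (l2 ^ r2 ∣ p ^ (f / 2) + 1) := by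
  have hco : Nat.Coprime (l1 ^ r1) (l2 ^ r2) :=
    Nat.Coprime.pow _ _ ((Nat.coprime_primes hl1 hl2).mpr hne)
  obtain ⟨s, hs, hsodd⟩ : ∃ s, Nat.totient (l1 ^ r1) = 2 * s ∧ Odd s := by
    refine ⟨l1 ^ (r1 - 1) * ((l1 - 1) / 2), ?_, ?_⟩
    · rw [Nat.totient_prime_pow hl1 hr1, mul_left_comm]; congr 1; omega
    · exact Odd.mul (Odd.pow (Nat.odd_iff.mpr (by omega))) (Nat.odd_iff.mpr (by omega))
  obtain ⟨u, hu, hu0⟩ : ∃ u, Nat.totient (l2 ^ r2) = 2 * u ∧ 0 < u := by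
    have h3 : 3 ≤ l2 := by have := hl2.two_le; omega
    refine ⟨l2 ^ (r2 - 1) * ((l2 - 1) / 2), ?_, ?_⟩
    · rw [Nat.totient_prime_pow hl2 hr2, mul_left_comm]; congr 1; omega
    · exact Nat.mul_pos (pow_pos hl2.pos _) (by omega)
  have hfe : f = 2 * (u * s) := by
    rw [hind, hN, Nat.totient_mul hco, hs, hu, mul_assoc, Nat.mul_div_cancel_left _ two_pos]; ring
  refine ⟨⟨u * s, by omega⟩, ?_⟩
  rw [hfe, Nat.mul_div_cancel_left _ two_pos]
  have hz : ∀ k, (l2:ℤ) ^ r2 ∣ ((p:ℤ) ^ k) - 1 ↔ (p : ZMod (l2 ^ r2)) ^ k = 1 := by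
    intro k
    have := (ZMod.intCast_zmod_eq_zero_iff_dvd ((p:ℤ)^k - 1) (l2 ^ r2))
    push_cast at this
    rw [← this, sub_eq_zero]
  have h1 : (l2:ℤ) ^ r2 ∣ ((p:ℤ) ^ u) + 1 := by
    apply sq_one_mod hl2 hl2odd
    · rw [← pow_mul, hz, mul_comm u 2, ← hu, ← hord2, pow_orderOf_eq_one]
    · rw [hz]
      intro h
      have := Nat.le_of_dvd hu0 (orderOf_dvd_of_pow_eq_one h)
      rw [hord2, hu] at this; omega
  have h2 : (l2:ℤ) ^ r2 ∣ (p:ℤ) ^ (u * s) + 1 := by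
    rw [pow_mul]
    refine h1.trans ?_
    have := Odd.add_dvd_pow_add_pow ((p:ℤ) ^ u) 1 hsodd
    simpa using this
  exact_mod_cast h2

theorem not_one_mod {p l r c : ℕ} (hl : l.Prime) (hr : 1 ≤ r) (hc : 1 < c)
    (hord : orderOf (p : ZMod (l ^ r)) = l ^ (r - 1) * c) : ¬ l ∣ p - 1 ∨ p = 0 := by
  by_contra h
  push Not at h
  obtain ⟨h, hp0⟩ := h
  have h1 : (l:ℤ) ∣ (p:ℤ) - 1 := by
    have : ((p - 1 : ℕ) : ℤ) = (p:ℤ) - 1 := by rw [Nat.cast_sub (by omega)]; simp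
    rw [← this]; exact_mod_cast h
  have h2 := dvd_sub_pow_of_dvd_sub h1 (r - 1)
  rw [Nat.sub_add_cancel hr, one_pow] at h2
  have h3 : (p : ZMod (l ^ r)) ^ (l ^ (r-1)) = 1 := by
    have := (ZMod.intCast_zmod_eq_zero_iff_dvd ((p:ℤ)^(l ^ (r-1)) - 1) (l ^ r)).mpr (by exact_mod_cast h2)
    push_cast at this
    rwa [sub_eq_zero] at this
  have h4 := orderOf_dvd_of_pow_eq_one h3
  rw [hord] at h4
  have h5 := Nat.le_of_dvd (pow_pos hl.pos _) h4
  have h6 : 0 < l ^ (r - 1) := pow_pos hl.pos _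
  nlinarith

section
variable (p : ℕ) [hpf : Fact p.Prime] {F : Type} [Field F] [Fintype F] [Algebra (ZMod p) F]

theorem chi_trivial {N : ℕ} (χ : MulChar F ℂ) (hχ : χ ^ N = 1) (hN : 0 < N) (hco : N.Coprime (p - 1)) :
    ∀ b : ZMod p, b ≠ 0 → χ (algebraMap (ZMod p) F b) = 1 := by
  intro b hb
  have h1 : χ (algebraMap (ZMod p) F b) ^ (p - 1) = 1 := by
    rw [← map_pow, ← map_pow, ZMod.pow_card_sub_one_eq_one hb]; simp
  have h2 : χ (algebraMap (ZMod p) F b) ^ N = 1 := by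
    have hx : algebraMap (ZMod p) F b ≠ 0 := by simpa using hb
    have := congrArg (fun c : MulChar F ℂ => c (algebraMap (ZMod p) F b)) hχ
    simp only [MulChar.pow_apply' _ hN.ne'] at this
    rw [this, MulChar.one_apply (isUnit_iff_ne_zero.mpr hx)]
  have := pow_gcd_eq_one.mpr ⟨h2, h1⟩
  rwa [hco, pow_one] at this

theorem place_gauss_congr (A : ValuationSubring ℂ) {l k : ℕ} (hl : l.Prime)
    (hA : A.valuation (l : ℂ) < 1) (χ φ : MulChar F ℂ) (hφ : φ ^ (l ^ k) = 1) :
    A.valuation (gaussSum (χ * φ) (psiF p F) - gaussSum χ (psiF p F)) < 1 := by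
  unfold gaussSum
  rw [← Finset.sum_sub_distrib]
  refine A.valuation.map_sum_lt one_ne_zero fun x _ => ?_
  by_cases hx : x = 0
  · subst hx; simp [χ.map_zero, (χ * φ).map_zero]
  have h1 : φ x ^ (l ^ k) = 1 := by
    have := congrArg (fun c : MulChar F ℂ => c x) hφ
    simp only [MulChar.pow_apply' _ (pow_ne_zero k hl.ne_zero)] at this
    rw [this, MulChar.one_apply (isUnit_iff_ne_zero.mpr hx)]
  rw [MulChar.mul_apply, show χ x * φ x * psiF p F x - χ x * psiF p F x = (χ x * psiF p F x) * (φ x - 1) by ring, map_mul]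
  exact lt_of_le_of_lt (mul_le_of_le_one_left' (place_integral A ((isIntegral_mulChar χ x).mul (isIntegral_root hpf.out.ne_zero (psiF_pow_p p x)))))
    (place_lpow_root A hl hA h1)

theorem gauss_one : gaussSum (1 : MulChar F ℂ) (psiF p F) = -1 := by
  classical
  have h := AddChar.sum_eq_zero_of_ne_one (R := F) (R' := ℂ) (ψ := psiF p F) (by
    have := psiF_primitive p (F := F) one_ne_zero
    simpa using this)
  have h2 : gaussSum (1 : MulChar F ℂ) (psiF p F) = ∑ x, psiF p F x - 1 := by
    unfold gaussSum
    rw [← Finset.add_sum_erase _ _ (Finset.mem_univ (0:F)), ← Finset.add_sum_erase _ (psiF p F) (Finset.mem_univ (0:F))]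
    rw [MulChar.map_zero, AddChar.map_zero_eq_one]
    have : ∑ x ∈ Finset.univ.erase (0:F), (1 : MulChar F ℂ) x * psiF p F x = ∑ x ∈ Finset.univ.erase (0:F), psiF p F x := by
      refine Finset.sum_congr rfl fun x hx => ?_
      rw [MulChar.one_apply (isUnit_iff_ne_zero.mpr (Finset.ne_of_mem_erase hx)), one_mul]
    rw [this]; ring
  rw [h2, h, zero_sub]

theorem gauss_sign {l1 l2 r1 r2 N f : ℕ} (hl1 : l1.Prime) (hl2 : l2.Prime) (hne : l1 ≠ l2)
    (hl2odd : l2 % 2 = 1) (hr2 : 1 ≤ r2) (hN : N = l1 ^ r1 * l2 ^ r2)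
    (hfe : Even f) (hQ : l2 ^ r2 ∣ p ^ (f / 2) + 1)
    (hcard : Fintype.card F = p ^ f) (χ : MulChar F ℂ) (hχ : orderOf χ = N)
    (hχp : ∀ b : ZMod p, b ≠ 0 → χ (algebraMap (ZMod p) F b) = 1)
    (A : ValuationSubring ℂ) (hA : A.valuation (l1 : ℂ) < 1) :
    A.valuation (gaussSum χ (psiF p F) - (p:ℂ) ^ (f / 2)) < 1 := by
  have hp := hpf.out
  have hco : Nat.Coprime (l1 ^ r1) (l2 ^ r2) :=
    Nat.Coprime.pow _ _ ((Nat.coprime_primes hl1 hl2).mpr hne)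
  obtain ⟨m, hm1, hm2⟩ := Nat.chineseRemainder hco 0 1
  have hn2 : 1 < l2 ^ r2 := Nat.one_lt_pow (by omega) hl2.one_lt
  obtain ⟨k, rfl⟩ : ∃ k, m = k + 1 := by
    refine ⟨m - 1, ?_⟩
    rcases Nat.eq_zero_or_pos m with rfl | h
    · exfalso
      have := (Nat.modEq_zero_iff_dvd.mp hm2.symm)
      have := Nat.le_of_dvd one_pos this; omega
    · omega
  have hd1 : l1 ^ r1 ∣ k + 1 := Nat.modEq_zero_iff_dvd.mp hm1
  have hd2 : l2 ^ r2 ∣ k := by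
    have := (Nat.modEq_iff_dvd' (by omega)).mp hm2.symm
    simpa using this
  have hχN : ∀ j, N ∣ j → χ ^ j = 1 := fun j hj => by rw [← hχ] at hj; exact orderOf_dvd_iff_pow_eq_one.mp hj
  set χ2 := χ ^ (k + 1) with hχ2
  have h2n : χ2 ^ (l2 ^ r2) = 1 := by
    rw [hχ2, ← pow_mul]; apply hχN; rw [hN]; exact Nat.mul_dvd_mul_right hd1 _
  have h2ne : χ2 ≠ 1 := by
    intro h
    have : N ∣ k + 1 := by rw [← hχ]; exact orderOf_dvd_of_pow_eq_one h
    have h3 : l2 ^ r2 ∣ k + 1 := (hN ▸ Dvd.intro_left _ rfl : l2 ^ r2 ∣ N).trans this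
    have := (Nat.dvd_add_right hd2).mp h3
    have := Nat.le_of_dvd one_pos this; omega
  have hinv : χ2⁻¹ = χ2 ^ (p ^ (f / 2)) := by
    apply inv_eq_of_mul_eq_one_right
    rw [← pow_succ']
    obtain ⟨c, hc⟩ := hQ
    rw [hc, pow_mul, h2n, one_pow]
  have hG2 : gaussSum χ2 (psiF p F) ^ 2 = ((p:ℂ) ^ (f / 2)) ^ 2 := by
    have h := gauss_mul_inv p h2ne
    rw [hinv, gauss_frob_pow] at h
    have h1 : χ2 (-1) = 1 := by
      have := hχp (-1) (by simp)
      rw [map_neg, map_one] at this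
      rw [hχ2, MulChar.pow_apply' _ (by omega), this, one_pow]
    rw [sq, h, h1, hcard, ← pow_mul, Nat.div_mul_cancel hfe.two_dvd]
    push_cast; ring
  have hG2' : gaussSum χ2 (psiF p F) = (p:ℂ) ^ (f / 2) := by
    rcases sq_eq_sq_iff_eq_or_eq_neg.mp hG2 with h | h
    · exact h
    · exfalso
      obtain ⟨A', hA'⟩ := exists_place l2 hl2
      have h1 := place_gauss_congr p A' hl2 hA' 1 χ2 h2n
      rw [one_mul, gauss_one, h] at h1
      obtain ⟨c, hc⟩ := (dvd_pow_self l2 (by omega : r2 ≠ 0)).trans hQ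
      have h2 : A'.valuation ((p:ℂ) ^ (f / 2) + 1) < 1 := by
        have : (p:ℂ) ^ (f / 2) + 1 = l2 * ((c : ℤ) : ℂ) := by exact_mod_cast hc
        rw [this, map_mul]
        exact lt_of_le_of_lt (mul_le_of_le_one_right' (place_int_le A' c)) hA'
      have h3 := A'.valuation.map_add_lt h1 h2
      have e : (-(p:ℂ) ^ (f / 2) - -1 + ((p:ℂ) ^ (f / 2) + 1)) = ((2:ℤ):ℂ) := by push_cast; ring
      rw [e, place_int_coprime A' hl2 hA'] at h3
      · exact lt_irrefl _ h3
      · intro hd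
        have h2 : l2 ∣ 2 := by exact_mod_cast hd
        have := (Nat.prime_dvd_prime_iff_eq hl2 Nat.prime_two).mp h2
        omega
  have h4 := place_gauss_congr p A hl1 hA χ (χ ^ k) (k := r1) (by
    rw [← pow_mul]; apply hχN; rw [hN, mul_comm]; exact Nat.mul_dvd_mul_right hd2 _)
  rw [← pow_succ', ← hχ2, hG2', A.valuation.map_sub_swap] at h4
  exact h4
end

open Complex Polynomial IntermediateField
open Filter Topology HurwitzZeta in
theorem hurw_bound {n : ℕ} {x s : ℝ} (hx0 : 0 < x) (hx1 : x < 1) (hs1 : 1 ≤ s) (hs2 : s ≤ 2) :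
    |((n:ℝ) + 1 + x) ^ (-s) - ((n:ℝ) + 1 - x) ^ (-s)| ≤ 4 / (1 - x) ^ 2 * (1 / ((n:ℝ) + 1) ^ 2) := by
  set δ := 1 - x with hδ
  have hδ0 : 0 < δ := by linarith
  have hn : (0:ℝ) ≤ n := Nat.cast_nonneg n
  set u := (n:ℝ) + 1 - x with hu
  set v := (n:ℝ) + 1 + x with hv
  have hu0 : 0 < u := by rw [hu]; linarith
  have hv0 : 0 < v := by rw [hv]; linarith
  have huδ : δ ≤ u := by rw [hu]; linarith
  have hB := one_add_mul_self_le_rpow_one_add (s := u / v - 1) (by have := div_pos hu0 hv0; linarith) hs1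
  rw [show (1 + (u / v - 1)) = u / v by ring, Real.div_rpow hu0.le hv0.le] at hB
  have hus : 0 < u ^ s := Real.rpow_pos_of_pos hu0 s
  have hvs : 0 < v ^ s := Real.rpow_pos_of_pos hv0 s
  have hle : v ^ (-s) ≤ u ^ (-s) := by
    rw [Real.rpow_neg hv0.le, Real.rpow_neg hu0.le]
    exact inv_anti₀ hus (Real.rpow_le_rpow hu0.le (by rw [hu, hv]; linarith) (by linarith))
  rw [abs_sub_comm, abs_of_nonneg (by linarith)]
  have h1 : u ^ (-s) - v ^ (-s) = u ^ (-s) * (1 - u ^ s / v ^ s) := by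
    rw [Real.rpow_neg hv0.le, Real.rpow_neg hu0.le]; field_simp
  have h2 : 1 - u ^ s / v ^ s ≤ 4 / v := by
    have : 1 - u / v = 2 * x / v := by field_simp; rw [hu, hv]; ring
    have h3 : s * (2 * x / v) ≤ 4 / v := by
      rw [mul_div_assoc']; gcongr; nlinarith
    have h5 : s * (u / v - 1) = - (s * (2 * x / v)) := by rw [← this]; ring
    linarith
  have h3 : u ^ (-s) ≤ δ⁻¹ * u⁻¹ := by
    have : u ^ (-s) = u ^ (-(s-1)) * u⁻¹ := by
      rw [← Real.rpow_neg_one, ← Real.rpow_add hu0]; congr 1; ring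
    rw [this]
    gcongr
    calc u ^ (-(s-1)) ≤ δ ^ (-(s-1)) := Real.rpow_le_rpow_of_nonpos hδ0 huδ (by linarith)
      _ ≤ δ ^ (-1 : ℝ) := Real.rpow_le_rpow_of_exponent_ge hδ0 (by linarith) (by linarith)
      _ = δ⁻¹ := Real.rpow_neg_one _
  rw [h1]
  have h4 : u⁻¹ ≤ δ⁻¹ * ((n:ℝ)+1)⁻¹ := by
    rw [← mul_inv]; apply inv_anti₀ (by positivity); rw [hu, hδ]; nlinarith
  have h5 : v⁻¹ ≤ ((n:ℝ)+1)⁻¹ := by apply inv_anti₀ (by positivity); rw [hv]; linarith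
  calc u ^ (-s) * (1 - u ^ s / v ^ s) ≤ u ^ (-s) * (4 / v) := by
        gcongr
    _ ≤ (δ⁻¹ * (δ⁻¹ * ((n:ℝ)+1)⁻¹)) * (4 * ((n:ℝ)+1)⁻¹) := by
        rw [div_eq_mul_inv]
        gcongr
        exact h3.trans (by gcongr)
    _ = _ := by field_simp

open Filter Topology HurwitzZeta in
theorem hurw_one {x : ℝ} (hx0 : 0 < x) (hx1 : x < 1) :
    hurwitzZetaOdd (x : UnitAddCircle) 1 = Real.pi * Complex.cot (Real.pi * x) / 2 := by
  have hne : ∀ s : ℝ, 1 < s → hurwitzZetaOdd (x : UnitAddCircle) (s:ℂ) =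
      (x:ℂ) ^ (-(s:ℂ)) / 2 + ∑' n : ℕ, ((((n:ℝ) + 1 + x) ^ (-s) - ((n:ℝ) + 1 - x) ^ (-s) : ℝ) : ℂ) / 2 := by
    intro s hs
    have h := (hasSum_int_hurwitzZetaOdd x (s := (s:ℂ)) (by simpa using hs)).nat_add_neg
    have h' := (hasSum_nat_add_iff' 1).mpr h
    have h2 : ∀ n : ℕ, ((SignType.sign ((((n+1:ℕ):ℤ):ℝ) + x) : ℂ) / (↑|(((n+1:ℕ):ℤ):ℝ) + x| : ℂ) ^ (s:ℂ) / 2 +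
        (SignType.sign (((-((n+1:ℕ):ℤ):ℤ):ℝ) + x) : ℂ) / (↑|((-((n+1:ℕ):ℤ):ℤ):ℝ) + x| : ℂ) ^ (s:ℂ) / 2)
        = ((((n:ℝ) + 1 + x) ^ (-s) - ((n:ℝ) + 1 - x) ^ (-s) : ℝ) : ℂ) / 2 := by
      intro n
      have hn : (0:ℝ) ≤ n := Nat.cast_nonneg n
      have e1 : (((n+1:ℕ):ℤ):ℝ) + x = (n:ℝ) + 1 + x := by push_cast; ring
      have e2 : ((-((n+1:ℕ):ℤ):ℤ):ℝ) + x = -((n:ℝ) + 1 - x) := by push_cast; ring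
      have p1 : 0 < (n:ℝ) + 1 + x := by linarith
      have p2 : 0 < (n:ℝ) + 1 - x := by linarith
      rw [e1, e2, abs_neg, abs_of_pos p1, abs_of_pos p2, sign_pos p1, Left.sign_neg, sign_pos p2]
      push_cast
      rw [Complex.ofReal_cpow p1.le, Complex.ofReal_cpow p2.le]
      push_cast
      rw [Complex.cpow_neg, Complex.cpow_neg]
      simp
      ring
    rw [(h'.congr_fun fun n => (h2 n).symm).tsum_eq]
    simp [sign_pos hx0, abs_of_pos hx0, Complex.cpow_neg]
    ring
  have hc : Tendsto (fun s : ℝ => hurwitzZetaOdd (x : UnitAddCircle) (s:ℂ)) (𝓝[>] 1)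
      (𝓝 (hurwitzZetaOdd (x : UnitAddCircle) 1)) := by
    have h1 := (differentiable_hurwitzZetaOdd (x : UnitAddCircle)).continuous.tendsto ((1:ℝ):ℂ)
    rw [Complex.ofReal_one] at h1
    have h2 : Tendsto (fun s : ℝ => (s:ℂ)) (𝓝[>] 1) (𝓝 (1:ℂ)) := by
      have := (Complex.continuous_ofReal.tendsto (1:ℝ)).mono_left (nhdsWithin_le_nhds (s := Set.Ioi (1:ℝ)))
      simpa using this
    exact h1.comp h2
  have hI : Set.Ioc (1:ℝ) 2 ∈ 𝓝[>] (1:ℝ) := Ioc_mem_nhdsGT (by norm_num)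
  have hT : Tendsto (fun s : ℝ => ∑' n : ℕ, ((((n:ℝ) + 1 + x) ^ (-s) - ((n:ℝ) + 1 - x) ^ (-s) : ℝ) : ℂ) / 2)
      (𝓝[>] 1) (𝓝 (∑' n : ℕ, ((((n:ℝ) + 1 + x) ^ (-(1:ℝ)) - ((n:ℝ) + 1 - x) ^ (-(1:ℝ)) : ℝ) : ℂ) / 2)) := by
    refine tendsto_tsum_of_dominated_convergence (bound := fun n : ℕ => 4 / (1 - x) ^ 2 * (1 / ((n:ℝ) + 1) ^ 2)) ?_ ?_ ?_
    · apply Summable.mul_left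
      have := (summable_nat_add_iff 1).mpr (Real.summable_one_div_nat_pow.mpr (one_lt_two))
      simpa using this
    · intro n
      have hn : (0:ℝ) ≤ n := Nat.cast_nonneg n
      have : Continuous fun s : ℝ => ((((n:ℝ) + 1 + x) ^ (-s) - ((n:ℝ) + 1 - x) ^ (-s) : ℝ) : ℂ) / 2 := by
        have c1 : Continuous fun s : ℝ => ((n:ℝ) + 1 + x) ^ (-s) :=
          Real.continuous_const_rpow (by linarith : (n:ℝ) + 1 + x ≠ 0) |>.comp continuous_neg
        have c2 : Continuous fun s : ℝ => ((n:ℝ) + 1 - x) ^ (-s) :=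
          Real.continuous_const_rpow (by linarith : (n:ℝ) + 1 - x ≠ 0) |>.comp continuous_neg
        exact (Complex.continuous_ofReal.comp (c1.sub c2)).div_const _
      exact (this.tendsto 1).mono_left nhdsWithin_le_nhds
    · filter_upwards [hI] with s hs n
      rw [norm_div, Complex.norm_real, Real.norm_eq_abs]
      have := hurw_bound (n := n) hx0 hx1 hs.1.le hs.2
      simp only [Complex.norm_ofNat]
      have h0 := abs_nonneg (((n:ℝ) + 1 + x) ^ (-s) - ((n:ℝ) + 1 - x) ^ (-s))
      linarith
  have hX : Tendsto (fun s : ℝ => (x:ℂ) ^ (-(s:ℂ)) / 2) (𝓝[>] 1) (𝓝 ((x:ℂ) ^ (-(1:ℂ)) / 2)) := by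
    have c : Continuous fun s : ℝ => (x:ℂ) ^ (-(s:ℂ)) / 2 := by
      have : Continuous fun s : ℝ => ((x ^ (-s) : ℝ) : ℂ) / 2 :=
        (Complex.continuous_ofReal.comp (Real.continuous_const_rpow hx0.ne' |>.comp continuous_neg)).div_const _
      refine this.congr fun s => ?_
      rw [Complex.ofReal_cpow hx0.le]; push_cast; rfl
    have := (c.tendsto 1).mono_left (nhdsWithin_le_nhds (s := Set.Ioi (1:ℝ)))
    simpa using this
  have hE := tendsto_nhds_unique hc (((hX.add hT).congr' ?_))
  · rw [hE]
    have hxi : (x:ℂ) ∈ Complex.integerComplement := by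
      rintro ⟨m, hm⟩
      have : (m:ℝ) = x := by exact_mod_cast hm
      rw [← this] at hx0 hx1
      have h1 : 0 < m := by exact_mod_cast hx0
      have h2 : m < 1 := by exact_mod_cast hx1
      omega
    have hcot := cot_series_rep' hxi
    have : ∑' n : ℕ, ((((n:ℝ) + 1 + x) ^ (-(1:ℝ)) - ((n:ℝ) + 1 - x) ^ (-(1:ℝ)) : ℝ) : ℂ) / 2
        = (∑' n : ℕ, (1 / ((x:ℂ) - (n + 1)) + 1 / ((x:ℂ) + (n + 1)))) / 2 := by
      rw [← tsum_div_const]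
      congr 1; ext n
      rw [Real.rpow_neg_one, Real.rpow_neg_one]
      push_cast
      have : ((x:ℂ) - (n+1)) = -((n:ℂ) + 1 - x) := by ring
      rw [this, one_div, inv_neg, add_comm (x:ℂ)]; ring
    rw [this, ← hcot, Complex.cpow_neg_one]; ring
  · filter_upwards [hI] with s hs
    rw [hne s hs.1]

open Complex Polynomial IntermediateField
section
variable (l : ℕ) [hlf : Fact l.Prime]

theorem arith_geom {n : ℕ} (z : ℂ) (hz : z ^ n = 1) (hz1 : z ≠ 1) :
    ∑ m ∈ Finset.range n, (m:ℂ) * z ^ m = n / (z - 1) := by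
  have h0 : z - 1 ≠ 0 := sub_ne_zero.mpr hz1
  have key : ∀ k : ℕ, (z - 1) * ∑ m ∈ Finset.range k, (m:ℂ) * z ^ m = k * z ^ k - ∑ m ∈ Finset.range k, z ^ (m + 1) := by
    intro k
    induction k with
    | zero => simp
    | succ k ih =>
      rw [Finset.sum_range_succ, mul_add, ih, Finset.sum_range_succ]; push_cast; ring
  have h2 : ∑ m ∈ Finset.range n, z ^ (m + 1) = 0 := by
    have : ∑ m ∈ Finset.range n, z ^ (m + 1) = z * ∑ m ∈ Finset.range n, z ^ m := by
      rw [Finset.mul_sum]; exact Finset.sum_congr rfl fun m _ => pow_succ' z m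
    rw [this, geom_sum_eq hz1, hz]; simp
  rw [eq_div_iff h0, mul_comm, key, h2, hz]; ring

theorem psiF_zmod (x : ZMod l) : psiF l (ZMod l) x = zetaP l ^ x.val := by
  rw [psiF_apply]; congr 2; exact Algebra.trace_self_apply x

theorem zmod_sum_range {M : Type} [AddCommMonoid M] (g : ZMod l → M) :
    ∑ x : ZMod l, g x = ∑ a ∈ Finset.range l, g (a : ZMod l) := by
  refine Finset.sum_bij' (fun x _ => x.val) (fun a _ => (a : ZMod l)) ?_ ?_ ?_ ?_ ?_
  · intro x _; simpa using ZMod.val_lt x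
  · simp
  · simp
  · intro a ha; exact ZMod.val_cast_of_lt (by simpa using ha)
  · simp

theorem gauss_shift (hl : l ≠ 2) (m : ZMod l) :
    ∑ j : ZMod l, qC l j * psiF l (ZMod l) (m * j) = qC l m * gaussSum (qC l) (psiF l (ZMod l)) := by
  by_cases hm : m = 0
  · subst hm
    have := MulChar.sum_eq_zero_of_ne_one (qC_ne_one l hl)
    simp [MulChar.map_zero, this]
  · have h := gaussSum_mulShift (qC l) (psiF l (ZMod l)) (Units.mk0 m hm)
    simp only [Units.val_mk0] at h
    have h2 : qC l m * qC l m = 1 := by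
      have : quadraticChar (ZMod l) m ^ 2 = 1 := quadraticChar_sq_one hm
      rw [qC_apply]; rw [← sq]; exact_mod_cast this
    rw [← h, ← mul_assoc, h2, one_mul]
    rfl

theorem sum_cot (hl4 : l % 4 = 3) :
    ∑ j : ZMod l, qC l j * Complex.cot (Real.pi * ((j.val / l : ℝ) : ℂ)) =
      2 * I / l * gaussSum (qC l) (psiF l (ZMod l)) * psiS l := by
  have hl2 : l ≠ 2 := by omega
  have hl0 : (l:ℂ) ≠ 0 := by exact_mod_cast hlf.out.ne_zero
  have hcot : ∀ j : ZMod l, qC l j * Complex.cot (Real.pi * ((j.val / l : ℝ) : ℂ)) =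
      qC l j * I + 2 * I / l * (qC l j * ∑ m ∈ Finset.range l, (m:ℂ) * psiF l (ZMod l) j ^ m) := by
    intro j
    by_cases hj : j = 0
    · subst hj; simp [MulChar.map_zero]
    have hz : Complex.exp (2 * Real.pi * I * ((j.val / l : ℝ) : ℂ)) = psiF l (ZMod l) j := by
      rw [psiF_zmod, zetaP, ← Complex.exp_nat_mul]; congr 1; push_cast; ring
    have hz1 : psiF l (ZMod l) j ≠ 1 := by
      rw [psiF_zmod]
      intro h
      have := (zetaP_prim l hlf.out.ne_zero).pow_eq_one_iff_dvd j.val |>.mp h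
      have h2 := ZMod.val_lt j
      have h3 : j.val ≠ 0 := by simpa [ZMod.val_eq_zero] using hj
      exact h3 (Nat.eq_zero_of_dvd_of_lt this h2)
    rw [arith_geom _ (psiF_pow_p l j) hz1, Complex.cot_pi_eq_exp_ratio, hz]
    have h1 : psiF l (ZMod l) j - 1 ≠ 0 := sub_ne_zero.mpr hz1
    have h2 : 1 - psiF l (ZMod l) j ≠ 0 := sub_ne_zero.mpr (Ne.symm hz1)
    field_simp
    rw [I_sq]
    ring
  simp_rw [hcot]
  rw [Finset.sum_add_distrib, ← Finset.sum_mul, MulChar.sum_eq_zero_of_ne_one (qC_ne_one l hl2), zero_mul, zero_add,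
    ← Finset.mul_sum, mul_assoc]
  congr 1
  simp_rw [Finset.mul_sum]
  rw [Finset.sum_comm]
  have : ∀ m ∈ Finset.range l, ∑ j : ZMod l, qC l j * ((m:ℂ) * psiF l (ZMod l) j ^ m) =
      gaussSum (qC l) (psiF l (ZMod l)) * ((psiL l m * m : ℤ) : ℂ) := by
    intro m _
    have h := gauss_shift l hl2 (m : ZMod l)
    have : ∀ j : ZMod l, qC l j * ((m:ℂ) * psiF l (ZMod l) j ^ m) = m * (qC l j * psiF l (ZMod l) (m * j)) := by
      intro j
      rw [← nsmul_eq_mul m j, AddChar.map_nsmul_eq_pow]; ring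
    simp_rw [this]
    rw [← Finset.mul_sum, h, qC_apply]
    unfold psiL; push_cast; ring
  rw [Finset.sum_congr rfl this, ← Finset.mul_sum, psiS]
  push_cast; rfl

theorem L_one (hl4 : l % 4 = 3) :
    ‖ZMod.LFunction (qC l) 1‖ = Real.pi * |(psiS l : ℝ)| / (l * Real.sqrt l) := by
  have hl0 : (l:ℂ) ≠ 0 := by exact_mod_cast hlf.out.ne_zero
  have hodd : Function.Odd (qC l) := by
    intro x
    have : qC l (-x) = qC l (-1) * qC l x := by rw [← map_mul]; simp
    rw [this, qC_apply l (-1), psi_neg_one l hl4]; simp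
  have h1 : ∀ j : ZMod l, qC l j * HurwitzZeta.hurwitzZetaOdd (ZMod.toAddCircle j) 1 =
      (Real.pi / 2) * (qC l j * Complex.cot (Real.pi * ((j.val / l : ℝ) : ℂ))) := by
    intro j
    by_cases hj : j = 0
    · subst hj; simp [MulChar.map_zero]
    have h3 : j.val ≠ 0 := by simpa [ZMod.val_eq_zero] using hj
    have hlp : (0:ℝ) < l := by exact_mod_cast hlf.out.pos
    have h4 : (0:ℝ) < j.val := by exact_mod_cast Nat.pos_of_ne_zero h3
    have h5 : (j.val:ℝ) < l := by exact_mod_cast ZMod.val_lt j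
    rw [ZMod.toAddCircle_apply, hurw_one (div_pos h4 hlp) ((div_lt_one hlp).mpr h5)]
    ring
  rw [ZMod.LFunction_def_odd hodd]
  simp_rw [h1]
  rw [← Finset.mul_sum, sum_cot l hl4]
  have ht : ‖gaussSum (qC l) (psiF l (ZMod l))‖ = Real.sqrt l := by
    have h := congrArg norm (tau_sq l hl4)
    rw [norm_pow, norm_neg, Complex.norm_natCast] at h
    rw [← h, Real.sqrt_sq (norm_nonneg _)]
  have hs : Real.sqrt l * Real.sqrt l = l := Real.mul_self_sqrt (Nat.cast_nonneg l)
  have hsp : Real.sqrt l ≠ 0 := by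
    intro h; rw [h] at hs; have : (l:ℝ) ≠ 0 := by exact_mod_cast hlf.out.ne_zero
    exact this (by rw [← hs]; ring)
  rw [Complex.cpow_neg_one]
  simp only [norm_mul, norm_div, norm_inv, Complex.norm_natCast, Complex.norm_real, Complex.norm_I, Complex.norm_ofNat,
    Complex.norm_intCast, ht, Real.norm_eq_abs, abs_of_pos Real.pi_pos]
  have hlr : (l:ℝ) ≠ 0 := by exact_mod_cast hlf.out.ne_zero
  field_simp
  rw [sq, hs]
end

open Complex Polynomial IntermediateField
set_option linter.unusedSectionVars false

section
open NumberField
variable {K : Type} [Field K] [NumberField K]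

structure QF (l : ℕ) (θ : 𝓞 K) (k : ℤ) : Prop where
  hl : (l:ℤ) = 4 * k - 1
  l3 : 3 < l
  rel : θ ^ 2 = θ - k
  span : ∀ x : 𝓞 K, ∃ a b : ℤ, x = a + b * θ

namespace QF
variable {l : ℕ} {θ : 𝓞 K} {k : ℤ} (h : QF l θ k)
include h

theorem norm_pos {a b : ℤ} (hab : a ^ 2 + a * b + k * b ^ 2 = 0) : a = 0 ∧ b = 0 := by
  have h1 : (2 * a + b) ^ 2 + (l:ℤ) * b ^ 2 = 0 := by rw [h.hl]; linear_combination 4 * hab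
  have hl := h.l3
  have hb : b ^ 2 = 0 := by
    have := sq_nonneg (2 * a + b)
    have h2 := sq_nonneg b
    have : (l:ℤ) * b ^ 2 ≤ 0 := by linarith
    have hlz : (3:ℤ) < l := by exact_mod_cast hl
    nlinarith
  have hb0 : b = 0 := by simpa using hb
  subst hb0
  simp at hab
  exact ⟨hab, rfl⟩

theorem indep {a b : ℤ} (hab : (a : 𝓞 K) + b * θ = 0) : a = 0 ∧ b = 0 := by
  apply h.norm_pos
  have : ((a ^ 2 + a * b + k * b ^ 2 : ℤ) : 𝓞 K) = 0 := by
    push_cast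
    linear_combination (a + b - b * θ) * hab + (b:𝓞 K)^2 * h.rel
  exact_mod_cast this

theorem ext' {a b c d : ℤ} (hab : (a : 𝓞 K) + b * θ = c + d * θ) : a = c ∧ b = d := by
  have := h.indep (a := a - c) (b := b - d) (by push_cast; linear_combination hab)
  omega

theorem exists_basis : ∃ B : Module.Basis (Fin 2) ℤ (𝓞 K), B 0 = 1 ∧ B 1 = θ := by
  have hli : LinearIndependent ℤ ![(1 : 𝓞 K), θ] := by
    rw [LinearIndependent.pair_iff]
    intro s t hst
    apply h.indep
    simpa [zsmul_eq_mul] using hst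
  have hsp : ⊤ ≤ Submodule.span ℤ (Set.range ![(1 : 𝓞 K), θ]) := by
    intro x _
    obtain ⟨a, b, rfl⟩ := h.span x
    have h0 : (1 : 𝓞 K) ∈ Submodule.span ℤ (Set.range ![(1 : 𝓞 K), θ]) := Submodule.subset_span ⟨0, rfl⟩
    have h1 : θ ∈ Submodule.span ℤ (Set.range ![(1 : 𝓞 K), θ]) := Submodule.subset_span ⟨1, rfl⟩
    have := Submodule.add_mem _ (Submodule.smul_mem _ a h0) (Submodule.smul_mem _ b h1)
    simpa [zsmul_eq_mul] using this
  refine ⟨Module.Basis.mk hli hsp, ?_, ?_⟩ <;> simp [Module.Basis.mk_apply]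

theorem finrank_Z : Module.finrank ℤ (𝓞 K) = 2 := by
  obtain ⟨B, _⟩ := h.exists_basis
  rw [Module.finrank_eq_card_basis B]; simp

theorem finrank_Q : Module.finrank ℚ K = 2 := by
  rw [← RingOfIntegers.rank, h.finrank_Z]

theorem trace_theta : Algebra.trace ℤ (𝓞 K) θ = 1 := by
  obtain ⟨B, h0, h1⟩ := h.exists_basis
  have r0 : B.repr θ = Finsupp.single 1 1 := by rw [← h1]; simp
  have r1 : B.repr (θ * θ) = Finsupp.single 1 1 - k • Finsupp.single 0 1 := by
    have : θ * θ = B 1 - k • B 0 := by rw [h0, h1, ← sq, h.rel]; simp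
    rw [this, map_sub, map_smul]; simp only [Module.Basis.repr_self]
  rw [Algebra.trace_eq_matrix_trace B, Matrix.trace, Fin.sum_univ_two]
  simp [Algebra.leftMulMatrix_eq_repr_mul, h0, h1, r0, r1]

theorem discr_eq : discr K = -(l:ℤ) := by
  obtain ⟨B, h0, h1⟩ := h.exists_basis
  have t1 : Algebra.trace ℤ (𝓞 K) 1 = 2 := by
    have := Algebra.trace_algebraMap (R := ℤ) (S := 𝓞 K) 1
    rw [map_one] at this
    rw [this, h.finrank_Z]; simp
  have tt : Algebra.trace ℤ (𝓞 K) (θ * θ) = 1 - 2 * k := by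
    have : θ * θ = θ - k • (1 : 𝓞 K) := by rw [← sq, h.rel]; simp
    rw [this, map_sub, map_smul, h.trace_theta, t1]; simp; ring
  rw [← discr_eq_discr K B, Algebra.discr_def, Matrix.det_fin_two]
  simp only [Algebra.traceMatrix_apply, Algebra.traceForm_apply, h0, h1, one_mul, mul_one, t1, tt, h.trace_theta]
  rw [h.hl]; ring

theorem units {u v : 𝓞 K} (huv : u * v = 1) : u = 1 ∨ u = -1 := by
  obtain ⟨a, b, rfl⟩ := h.span u
  obtain ⟨c, d, rfl⟩ := h.span v
  have := h.ext' (a := a * c - k * b * d) (b := a * d + b * c + b * d) (c := 1) (d := 0) (by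
    push_cast; linear_combination huv - (b:𝓞 K) * d * h.rel)
  obtain ⟨e1, e2⟩ := this
  have hN : (a ^ 2 + a * b + k * b ^ 2) * (c ^ 2 + c * d + k * d ^ 2) = 1 := by
    have : (a ^ 2 + a * b + k * b ^ 2) * (c ^ 2 + c * d + k * d ^ 2) = (a * c - k * b * d) ^ 2 +
      (a * c - k * b * d) * (a * d + b * c + b * d) + k * (a * d + b * c + b * d) ^ 2 := by ring
    rw [this, e1, e2]; ring
  have hl := h.l3
  have hlz : (3:ℤ) < l := by exact_mod_cast hl
  have hl2 := h.hl
  have e4 : (2 * a + b) ^ 2 + (l:ℤ) * b ^ 2 = 4 * (a ^ 2 + a * b + k * b ^ 2) := by rw [h.hl]; ring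
  have hp : a ^ 2 + a * b + k * b ^ 2 = 1 := by
    rcases Int.eq_one_or_neg_one_of_mul_eq_one hN with h1 | h1
    · exact h1
    · exfalso; rw [h1] at e4; nlinarith [sq_nonneg (2*a+b), sq_nonneg b]
  have hk : 2 ≤ k := by omega
  rw [hp, hl2] at e4
  have hb : b = 0 := by
    have : b ^ 2 < 1 := by nlinarith [sq_nonneg (2*a+b), sq_nonneg b]
    nlinarith [sq_nonneg b, sq_eq_zero_iff (a := b) |>.mp (by nlinarith [sq_nonneg b])]
  subst hb
  have : a ^ 2 = 1 := by linarith
  rw [sq] at this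
  rcases mul_self_eq_one_iff.mp this with h | h
  · left; simp [h]
  · right; simp [h]

theorem torsion2 : Units.torsionOrder K = 2 := by
  have e : (Units.torsion K : Set (𝓞 K)ˣ) = {1, -1} := by
    ext u
    simp only [SetLike.mem_coe, Set.mem_insert_iff, Set.mem_singleton_iff]
    constructor
    · intro _
      rcases h.units (u := (u : 𝓞 K)) (v := ((u⁻¹ : (𝓞 K)ˣ) : 𝓞 K)) (by simp) with h1 | h1
      · left; exact Units.ext h1
      · right; exact Units.ext (by simpa using h1)
    · rintro (rfl | rfl)
      · exact one_mem _
      · rw [Units.torsion, CommGroup.mem_torsion]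
        exact isOfFinOrder_iff_pow_eq_one.mpr ⟨2, by norm_num, by simp⟩
  have hne : (1 : (𝓞 K)ˣ) ≠ -1 := by
    intro h2
    have := congrArg (fun u : (𝓞 K)ˣ => (u : 𝓞 K)) h2
    simp only [Units.val_one, Units.val_neg] at this
    have h3 : (2 : 𝓞 K) = 0 := by linear_combination this
    exact two_ne_zero h3
  have : Nat.card (Units.torsion K : Set (𝓞 K)ˣ) = 2 := by
    rw [e, Nat.card_coe_set_eq, Set.ncard_pair hne]
  exact this

theorem real0 : InfinitePlace.nrRealPlaces K = 0 := by
  classical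
  unfold InfinitePlace.nrRealPlaces
  refine Fintype.card_eq_zero_iff.mpr ⟨?_⟩
  rintro ⟨w, hw⟩
  have hθ : (2 * (θ : K) - 1) ^ 2 = -(l : K) := by
    have : (2 * θ - 1) ^ 2 = -(l : 𝓞 K) := by
      have hl : (l : 𝓞 K) = 4 * k - 1 := by exact_mod_cast congrArg (Int.cast : ℤ → 𝓞 K) h.hl
      rw [hl]; linear_combination 4 * h.rel
    have h2 := congrArg (algebraMap (𝓞 K) K) this
    simp only [map_pow, map_sub, map_mul, map_neg, map_one, map_natCast, map_ofNat] at h2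
    exact h2
  have := congrArg (InfinitePlace.embedding_of_isReal hw) hθ
  simp only [map_pow, map_neg, map_natCast] at this
  have h1 := sq_nonneg (InfinitePlace.embedding_of_isReal hw (2 * (θ : K) - 1))
  have h2 : (3:ℝ) < l := by exact_mod_cast h.l3
  linarith

theorem complex1 : InfinitePlace.nrComplexPlaces K = 1 := by
  have := InfinitePlace.card_add_two_mul_card_eq_rank K
  rw [h.real0, h.finrank_Q] at this
  omega

theorem rank0 : Units.rank K = 0 := by
  have := InfinitePlace.card_eq_nrRealPlaces_add_nrComplexPlaces K
  rw [h.real0, h.complex1] at this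
  rw [Units.rank, this]

theorem reg1 : Units.regulator K = 1 := by
  classical
  rw [Units.regulator_eq_det']
  have : IsEmpty {w : InfinitePlace K // w ≠ Units.dirichletUnitTheorem.w₀} := by
    rw [← (Units.equivFinRank K).isEmpty_congr, h.rank0]; infer_instance
  rw [Matrix.det_isEmpty, abs_one]

theorem residue : dedekindZeta_residue K = Real.pi * classNumber K / Real.sqrt l := by
  rw [dedekindZeta_residue_def, h.real0, h.complex1, h.reg1, h.torsion2, h.discr_eq]
  rw [Int.cast_neg, abs_neg, Int.cast_natCast, abs_of_nonneg (Nat.cast_nonneg l)]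
  push_cast
  have hl : (0:ℝ) < l := by exact_mod_cast (by have := h.l3; omega : 0 < l)
  have := Real.sqrt_pos.mpr hl
  field_simp
end QF
end

open Complex Polynomial IntermediateField
set_option linter.unusedSectionVars false

section
open NumberField Ideal
variable {K : Type} [Field K] [NumberField K]

noncomputable def rK (K : Type) [Field K] [NumberField K] (n : ℕ) : ℕ := Nat.card {I : Ideal (𝓞 K) // absNorm I = n}

theorem rK_one : rK K 1 = 1 := by
  have : Unique {I : Ideal (𝓞 K) // absNorm I = 1} := by
    refine ⟨⟨⟨⊤, by simp⟩⟩, ?_⟩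
    rintro ⟨I, hI⟩
    exact Subtype.ext (absNorm_eq_one_iff.mp hI)
  exact Nat.card_unique

theorem sup_top_of_coprime {I J : Ideal (𝓞 K)} {m n : ℕ} (hmn : m.Coprime n) (hI : (m : 𝓞 K) ∈ I) (hJ : (n : 𝓞 K) ∈ J) :
    I ⊔ J = ⊤ := by
  rw [Ideal.eq_top_iff_one]
  have hb := Nat.gcd_eq_gcd_ab m n
  rw [hmn] at hb
  have e : (1 : 𝓞 K) = m * (m.gcdA n : 𝓞 K) + n * (m.gcdB n : 𝓞 K) := by exact_mod_cast congrArg (Int.cast : ℤ → 𝓞 K) hb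
  rw [e]
  exact Submodule.add_mem_sup (Ideal.mul_mem_right _ _ hI) (Ideal.mul_mem_right _ _ hJ)

theorem rK_mul {m n : ℕ} (hmn : m.Coprime n) : rK K (m * n) = rK K m * rK K n := by
  unfold rK
  rw [← Nat.card_prod]
  symm
  have absmem : ∀ (I : Ideal (𝓞 K)) (j : ℕ), absNorm I = j → (j : 𝓞 K) ∈ I := fun I j h => h ▸ absNorm_mem I
  refine Nat.card_congr (Equiv.ofBijective (fun x : {I : Ideal (𝓞 K) // absNorm I = m} × {I : Ideal (𝓞 K) // absNorm I = n} =>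
    (⟨x.1.1 * x.2.1, by rw [map_mul, x.1.2, x.2.2]⟩ : {I : Ideal (𝓞 K) // absNorm I = m * n})) ⟨?_, ?_⟩)
  · rintro ⟨⟨I, hI⟩, ⟨J, hJ⟩⟩ ⟨⟨I', hI'⟩, ⟨J', hJ'⟩⟩ h
    simp only [Subtype.mk.injEq] at h
    have key : ∀ A B A' B' : Ideal (𝓞 K), absNorm A = m → absNorm B' = n → A * B = A' * B' → A' ≤ A := by
      intro A B A' B' hA hB' he
      have hc : A ⊔ B' = ⊤ := sup_top_of_coprime hmn (absmem _ _ hA) (absmem _ _ hB')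
      have hc' : IsCoprime A B' := Ideal.isCoprime_iff_sup_eq.mpr hc
      have : A ∣ A' * B' := he ▸ dvd_mul_right A B
      exact Ideal.le_of_dvd (hc'.dvd_of_dvd_mul_right this)
    have key2 : ∀ A B A' B' : Ideal (𝓞 K), absNorm B = n → absNorm A' = m → A * B = A' * B' → B' ≤ B := by
      intro A B A' B' hB hA' he
      have hc : A' ⊔ B = ⊤ := sup_top_of_coprime hmn (absmem _ _ hA') (absmem _ _ hB)
      have hc' : IsCoprime B A' := (Ideal.isCoprime_iff_sup_eq.mpr hc).symm
      have : B ∣ A' * B' := he ▸ dvd_mul_left B A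
      exact Ideal.le_of_dvd (hc'.dvd_of_dvd_mul_left this)
    have e1 : I = I' := le_antisymm (key _ _ _ _ hI' hJ h.symm) (key _ _ _ _ hI hJ' h)
    have e2 : J = J' := le_antisymm (key2 _ _ _ _ hJ' hI h.symm) (key2 _ _ _ _ hJ hI' h)
    subst e1 e2; rfl
  · rintro ⟨L, hL⟩
    set I := L ⊔ span {(m : 𝓞 K)} with hI
    set J := L ⊔ span {(n : 𝓞 K)} with hJ
    have hIJ : I * J = L := by
      apply le_antisymm
      · rw [hI, hJ, Ideal.sup_mul, Ideal.mul_sup, Ideal.mul_sup]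
        refine sup_le ?_ ?_ <;> refine sup_le ?_ ?_
        · exact Ideal.mul_le_right
        · first | exact Ideal.mul_le_right | exact Ideal.mul_le_left
        · first | exact Ideal.mul_le_right | exact Ideal.mul_le_left
        · rw [Ideal.span_singleton_mul_span_singleton, Ideal.span_singleton_le_iff_mem]
          exact_mod_cast absmem L _ hL
      · have hc : span {(m : 𝓞 K)} ⊔ span {(n : 𝓞 K)} = ⊤ :=
          sup_top_of_coprime hmn (Ideal.mem_span_singleton_self _) (Ideal.mem_span_singleton_self _)
        calc L = L * (span {(m : 𝓞 K)} ⊔ span {(n : 𝓞 K)}) := by rw [hc, Ideal.mul_top]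
          _ = L * span {(m : 𝓞 K)} ⊔ L * span {(n : 𝓞 K)} := Ideal.mul_sup _ _ _
          _ ≤ I * J := by
            refine sup_le ?_ ?_
            · rw [mul_comm I J]; exact Ideal.mul_mono le_sup_left le_sup_right
            · exact Ideal.mul_mono le_sup_left le_sup_right
    have hN : absNorm I * absNorm J = m * n := by rw [← map_mul, hIJ, hL]
    have h1 : absNorm I ∣ m ^ Module.finrank ℤ (𝓞 K) := by
      rw [← absNorm_span_natCast]; exact absNorm_dvd_absNorm_of_le le_sup_right
    have h2 : absNorm J ∣ n ^ Module.finrank ℤ (𝓞 K) := by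
      rw [← absNorm_span_natCast]; exact absNorm_dvd_absNorm_of_le le_sup_right
    have c1 : (absNorm I).Coprime n := Nat.Coprime.coprime_dvd_left h1 (Nat.Coprime.pow_left _ hmn)
    have c2 : (absNorm J).Coprime m := Nat.Coprime.coprime_dvd_left h2 (Nat.Coprime.pow_left _ hmn.symm)
    have e1 : absNorm I = m := Nat.dvd_antisymm (c1.dvd_of_dvd_mul_right (hN ▸ dvd_mul_right _ _))
      (c2.symm.dvd_of_dvd_mul_right (hN ▸ dvd_mul_right _ _))
    have e2 : absNorm J = n := Nat.dvd_antisymm (c2.dvd_of_dvd_mul_left (hN ▸ dvd_mul_left _ _))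
      (c1.symm.dvd_of_dvd_mul_left (hN ▸ dvd_mul_left _ _))
    exact ⟨⟨⟨I, e1⟩, ⟨J, e2⟩⟩, Subtype.ext hIJ⟩

theorem rK_of_finset (n : ℕ) (S : Finset (Ideal (𝓞 K))) (h : ∀ I, absNorm I = n ↔ I ∈ S) : rK K n = S.card := by
  unfold rK
  rw [Nat.subtype_card S fun I => (h I).symm]

theorem dvd_p_pow {p n : ℕ} {I : Ideal (𝓞 K)} (hI : absNorm I = p ^ n) : I ∣ span {(p : 𝓞 K)} ^ n := by
  rw [Ideal.dvd_iff_le, Ideal.span_singleton_pow, Ideal.span_singleton_le_iff_mem]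
  have := absNorm_mem I
  rw [hI] at this; exact_mod_cast this

theorem rK_split {p : ℕ} (hp : p.Prime) {P P' : Ideal (𝓞 K)} (hPP : P * P' = span {(p : 𝓞 K)}) (hne : P ≠ P')
    (hP : absNorm P = p) (hP' : absNorm P' = p) (n : ℕ) : rK K (p ^ n) = n + 1 := by
  classical
  have prm : ∀ Q : Ideal (𝓞 K), absNorm Q = p → Prime Q := by
    intro Q hQ
    have h1 := isPrime_of_irreducible_absNorm (I := Q) (by rw [hQ]; exact hp)
    refine Ideal.prime_of_isPrime ?_ h1
    rintro rfl
    simp at hQ; exact hp.ne_zero hQ.symm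
  have hprm := prm P hP
  have hprm' := prm P' hP'
  rw [rK_of_finset (p ^ n) ((Finset.range (n+1)).image fun i => P ^ i * P' ^ (n - i))]
  · rw [Finset.card_image_of_injOn, Finset.card_range]
    intro i hi j hj hij
    simp only [Finset.coe_range, Set.mem_Iio] at hi hj hij
    have key : ∀ i j : ℕ, i < j → j < n + 1 → P ^ i * P' ^ (n - i) = P ^ j * P' ^ (n - j) → False := by
      intro i j hij hj h
      have : P ^ j = P ^ i * P ^ (j - i) := by rw [← pow_add]; congr 1; omega
      rw [this, mul_assoc] at h
      have h2 := mul_left_cancel₀ (pow_ne_zero i hprm.ne_zero) h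
      have h3 : P ∣ P' ^ (n - i) := by
        rw [h2]; exact Dvd.dvd.mul_right (dvd_pow_self P (by omega)) _
      have h4 := hprm.dvd_of_dvd_pow h3
      have h5 := (hprm.dvd_prime_iff_associated hprm').mp h4
      exact hne (associated_iff_eq.mp h5)
    rcases lt_trichotomy i j with h | h | h
    · exact (key i j h hj hij).elim
    · exact h
    · exact (key j i h hi hij.symm).elim
  · intro I
    simp only [Finset.mem_image, Finset.mem_range]
    constructor
    · intro hI
      have hd := dvd_p_pow hI
      rw [← hPP, mul_pow] at hd
      obtain ⟨a, b, ha, hb, rfl⟩ := exists_dvd_and_dvd_of_dvd_mul hd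
      obtain ⟨i, _, hi⟩ := (dvd_prime_pow hprm n).mp ha
      obtain ⟨j, _, hj⟩ := (dvd_prime_pow hprm' n).mp hb
      rw [associated_iff_eq] at hi hj
      subst hi hj
      rw [map_mul, map_pow, map_pow, hP, hP', ← pow_add] at hI
      have := Nat.pow_right_injective hp.two_le hI
      exact ⟨i, by omega, by rw [show n - i = j by omega]⟩
    · rintro ⟨i, hi, rfl⟩
      rw [map_mul, map_pow, map_pow, hP, hP', ← pow_add]; congr 1; omega

theorem rK_one_prime {p d e : ℕ} (hp : p.Prime) (he : 0 < e) {P : Ideal (𝓞 K)} (hPe : P ^ d = span {(p : 𝓞 K)})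
    (hP : absNorm P = p ^ e) (hprm : Prime P) (n : ℕ) : rK K (p ^ n) = if e ∣ n then 1 else 0 := by
  classical
  have hh : ∀ I : Ideal (𝓞 K), absNorm I = p ^ n → ∃ i, e * i = n ∧ I = P ^ i := by
    intro I hI
    have hd := dvd_p_pow hI
    rw [← hPe, ← pow_mul] at hd
    obtain ⟨i, _, hi⟩ := (dvd_prime_pow hprm _).mp hd
    rw [associated_iff_eq] at hi
    subst hi
    rw [map_pow, hP, ← pow_mul] at hI
    exact ⟨i, Nat.pow_right_injective hp.two_le hI, rfl⟩
  split_ifs with h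
  · obtain ⟨m, rfl⟩ := h
    rw [rK_of_finset _ {P ^ m}]
    · simp
    · intro I
      simp only [Finset.mem_singleton]
      constructor
      · intro hI
        obtain ⟨i, hi, rfl⟩ := hh I hI
        rw [Nat.eq_of_mul_eq_mul_left he hi]
      · rintro rfl
        rw [map_pow, hP, ← pow_mul]
  · rw [rK_of_finset _ ∅]
    · simp
    · intro I
      simp only [Finset.notMem_empty, iff_false]
      intro hI
      obtain ⟨i, hi, rfl⟩ := hh I hI
      exact h ⟨i, hi.symm⟩

namespace QF
variable {l : ℕ} {θ : 𝓞 K} {k : ℤ} (h : QF l θ k)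
include h

theorem ram (hl : l.Prime) (n : ℕ) : rK K (l ^ n) = 1 := by
  have e : Ideal.span {(2 * θ - 1 : 𝓞 K)} ^ 2 = Ideal.span {(l : 𝓞 K)} := by
    rw [Ideal.span_singleton_pow]
    have : (2 * θ - 1) ^ 2 = -(l : 𝓞 K) := by
      have hl : (l : 𝓞 K) = 4 * k - 1 := by exact_mod_cast congrArg (Int.cast : ℤ → 𝓞 K) h.hl
      rw [hl]; linear_combination 4 * h.rel
    rw [this, Ideal.span_singleton_neg]
  have hN : absNorm (Ideal.span {(2 * θ - 1 : 𝓞 K)}) = l ^ 1 := by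
    have := congrArg absNorm e
    rw [map_pow, absNorm_span_natCast, h.finrank_Z] at this
    rw [pow_one]
    exact Nat.pow_left_injective (n := 2) (by norm_num) this
  have h1 := isPrime_of_irreducible_absNorm (I := Ideal.span {(2 * θ - 1 : 𝓞 K)}) (by rw [hN, pow_one]; exact hl)
  have hprm : Prime (Ideal.span {(2 * θ - 1 : 𝓞 K)}) := by
    refine Ideal.prime_of_isPrime ?_ h1
    intro h0
    rw [h0] at hN
    simp at hN; exact hl.ne_zero hN.symm
  rw [rK_one_prime hl one_pos e hN hprm]; simp

theorem split_aux {p : ℕ} (hp : p.Prime) (hl : l.Prime) (hpl : p ≠ l) {c : ℤ} (hc : (p:ℤ) ∣ c ^ 2 - c + k) :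
    Ideal.span {(p : 𝓞 K), θ - c} * Ideal.span {(p : 𝓞 K), θ - (1 - c)} = Ideal.span {(p : 𝓞 K)} ∧
    Ideal.span {(p : 𝓞 K), θ - c} ⊔ Ideal.span {(p : 𝓞 K), θ - (1 - c)} = ⊤ ∧
    absNorm (Ideal.span {(p : 𝓞 K), θ - c}) = p ∧ absNorm (Ideal.span {(p : 𝓞 K), θ - (1 - c)}) = p := by
  obtain ⟨m, hm⟩ := hc
  set P := Ideal.span {(p : 𝓞 K), θ - c} with hP
  set P' := Ideal.span {(p : 𝓞 K), θ - (1 - c)} with hP'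
  have hmK : (c:𝓞 K) ^ 2 - c + k = p * m := by exact_mod_cast congrArg (Int.cast : ℤ → 𝓞 K) hm
  have hcop : p.Coprime l := (Nat.coprime_primes hp hl).mpr hpl
  have hsup : P ⊔ P' = ⊤ := by
    have hp1 : (p : 𝓞 K) ∈ P ⊔ P' := Ideal.mem_sup_left (Ideal.subset_span (by simp))
    have ht : (1 - 2 * c : 𝓞 K) ∈ P ⊔ P' := by
      have h1 : θ - c ∈ P ⊔ P' := Ideal.mem_sup_left (Ideal.subset_span (by simp))
      have h2 : θ - (1 - c) ∈ P ⊔ P' := Ideal.mem_sup_right (Ideal.subset_span (by simp))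
      have := Ideal.sub_mem _ h1 h2
      convert this using 1; ring
    have hlm : (l : 𝓞 K) ∈ P ⊔ P' := by
      have hl : (l : 𝓞 K) = 4 * k - 1 := by exact_mod_cast congrArg (Int.cast : ℤ → 𝓞 K) h.hl
      have : (l : 𝓞 K) = p * (4 * m) - (1 - 2 * c) * (1 - 2 * c) := by rw [hl]; linear_combination 4 * hmK
      rw [this]
      exact Ideal.sub_mem _ (Ideal.mul_mem_right _ _ hp1) (Ideal.mul_mem_right _ _ ht)
    have := sup_top_of_coprime hcop hp1 hlm
    simpa using this
  have hPP : P * P' = Ideal.span {(p : 𝓞 K)} := by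
    apply le_antisymm
    · rw [hP, hP', Ideal.span_pair_mul_span_pair, Ideal.span_le]
      rintro x hx
      simp only [Set.mem_insert_iff, Set.mem_singleton_iff] at hx
      rw [SetLike.mem_coe, Ideal.mem_span_singleton]
      rcases hx with rfl | rfl | rfl | rfl
      · exact dvd_mul_right _ _
      · exact dvd_mul_right _ _
      · exact dvd_mul_left _ _
      · exact ⟨-m, by linear_combination h.rel - hmK⟩
    · calc Ideal.span {(p : 𝓞 K)} = Ideal.span {(p : 𝓞 K)} * (P ⊔ P') := by rw [hsup, Ideal.mul_top]
        _ = Ideal.span {(p : 𝓞 K)} * P ⊔ Ideal.span {(p : 𝓞 K)} * P' := Ideal.mul_sup _ _ _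
        _ ≤ P * P' := by
          refine sup_le ?_ ?_
          · rw [mul_comm]; exact Ideal.mul_mono le_rfl (Ideal.span_mono (by simp))
          · exact Ideal.mul_mono (Ideal.span_mono (by simp)) le_rfl
  have hnot : ∀ d : ℤ, θ - d ∉ Ideal.span {(p : 𝓞 K)} := by
    intro d hd
    obtain ⟨x, hx⟩ := Ideal.mem_span_singleton.mp hd
    obtain ⟨a, b, rfl⟩ := h.span x
    have := h.ext' (a := -d) (b := 1) (c := p * a) (d := p * b) (by push_cast; linear_combination hx)
    have h2 : (p:ℤ) ∣ 1 := ⟨b, this.2⟩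
    have := Int.le_of_dvd one_pos h2
    have := hp.two_le; omega
  have hN : absNorm P * absNorm P' = p ^ 2 := by
    rw [← map_mul, hPP, absNorm_span_natCast, h.finrank_Z]
  have n1 : absNorm P ≠ 1 := by
    intro h1
    rw [absNorm_eq_one_iff] at h1
    rw [h1, Ideal.top_mul] at hPP
    apply hnot (1 - c); rw [← hPP]; push_cast; exact Ideal.subset_span (by simp)
  have n2 : absNorm P' ≠ 1 := by
    intro h1
    rw [absNorm_eq_one_iff] at h1
    rw [h1, Ideal.mul_top] at hPP
    apply hnot c; rw [← hPP]; exact Ideal.subset_span (by simp)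
  have hN1 : absNorm P = p ∧ absNorm P' = p := by
    exact (Nat.Prime.mul_eq_prime_sq_iff hp n1 n2).mp hN
  exact ⟨hPP, hsup, hN1.1, hN1.2⟩

theorem split {p : ℕ} (hp : p.Prime) (hl : l.Prime) (hpl : p ≠ l) {c : ℤ} (hc : (p:ℤ) ∣ c ^ 2 - c + k) (n : ℕ) :
    rK K (p ^ n) = n + 1 := by
  obtain ⟨hPP, hsup, h1, h2⟩ := h.split_aux hp hl hpl hc
  refine rK_split hp hPP ?_ h1 h2 n
  intro he
  rw [← he, sup_idem] at hsup
  rw [absNorm_eq_one_iff.mpr hsup] at h1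
  exact hp.one_lt.ne h1

theorem inert {p : ℕ} (hp : p.Prime) (hc : ¬ ∃ c : ℤ, (p:ℤ) ∣ c ^ 2 - c + k) (n : ℕ) :
    rK K (p ^ n) = if 2 ∣ n then 1 else 0 := by
  have hN : absNorm (Ideal.span {(p : 𝓞 K)}) = p ^ 2 := by rw [absNorm_span_natCast, h.finrank_Z]
  have hne : Ideal.span {(p : 𝓞 K)} ≠ ⊤ := by
    intro h1
    rw [← absNorm_eq_one_iff, hN] at h1
    have := hp.two_le
    nlinarith
  obtain ⟨P, hPm, hle⟩ := Ideal.exists_le_maximal _ hne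
  have hpP : (p : 𝓞 K) ∈ P := hle (Ideal.mem_span_singleton_self _)
  have hd : absNorm P ∣ p ^ 2 := hN ▸ absNorm_dvd_absNorm_of_le hle
  obtain ⟨i, hi, hPi⟩ := (Nat.dvd_prime_pow hp).mp hd
  have hP0 : P ≠ ⊥ := by
    rintro rfl
    rw [Ideal.mem_bot] at hpP
    exact hp.ne_zero (by exact_mod_cast hpP)
  have hi2 : i = 2 := by
    interval_cases i
    · exfalso
      rw [pow_zero, absNorm_eq_one_iff] at hPi
      exact hPm.ne_top hPi
    · exfalso
      apply hc
      rw [pow_one] at hPi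
      have hcard : Nat.card (𝓞 K ⧸ P) = p := hPi
      haveI := Fact.mk hp
      have h1 : (1 : 𝓞 K ⧸ P) ≠ 0 := by
        haveI := Ideal.Quotient.nontrivial_iff.mpr hPm.ne_top
        exact one_ne_zero
      obtain ⟨c, hc⟩ := AddSubgroup.mem_zmultiples_iff.mp (mem_zmultiples_of_prime_card hcard (g' := Ideal.Quotient.mk P θ) h1)
      refine ⟨c, ?_⟩
      have h2 : (((c ^ 2 - c + k : ℤ) : 𝓞 K)) ∈ P := by
        rw [← Ideal.Quotient.eq_zero_iff_mem]
        have h3 := congrArg (Ideal.Quotient.mk P) h.rel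
        rw [map_pow, map_sub, ← hc] at h3
        simp only [zsmul_eq_mul, mul_one, map_intCast] at h3
        push_cast
        simp only [map_add, map_sub, map_pow, map_intCast]
        linear_combination h3
      by_contra hnd
      have hcp : IsCoprime (p:ℤ) (c ^ 2 - c + k) := (Nat.prime_iff_prime_int.mp hp).irreducible.coprime_iff_not_dvd.mpr hnd
      obtain ⟨a, b, hab⟩ := hcp
      apply hPm.ne_top
      rw [Ideal.eq_top_iff_one]
      have : (1 : 𝓞 K) = a * p + b * ((c ^ 2 - c + k : ℤ) : 𝓞 K) := by exact_mod_cast congrArg (Int.cast : ℤ → 𝓞 K) hab.symm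
      rw [this]
      exact Ideal.add_mem _ (Ideal.mul_mem_left _ _ hpP) (Ideal.mul_mem_left _ _ h2)
    · rfl
  subst hi2
  have hPe : P ^ 1 = Ideal.span {(p : 𝓞 K)} := by
    rw [pow_one]
    obtain ⟨Q, hQ⟩ := Ideal.dvd_iff_le.mpr hle
    have := congrArg absNorm hQ
    rw [map_mul, hN, hPi] at this
    have hQ1 : absNorm Q = 1 := by
      have := Nat.eq_of_mul_eq_mul_left (pow_pos hp.pos 2) (this.symm.trans (mul_one _).symm)
      exact this
    rw [absNorm_eq_one_iff] at hQ1
    rw [hQ, hQ1, Ideal.mul_top]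
  exact rK_one_prime hp two_pos hPe hPi (Ideal.prime_of_isPrime hP0 hPm.isPrime) n
end QF
end

open Complex Polynomial IntermediateField
set_option linter.unusedSectionVars false

theorem legendre_recip (l p : ℕ) [Fact l.Prime] [Fact p.Prime] (hl4 : l % 4 = 3) (hp2 : p % 2 = 1) :
    legendreSym p (-(l:ℤ)) = legendreSym l p := by
  have hm : legendreSym p (-(l:ℤ)) = legendreSym p (-1) * legendreSym p l := by
    rw [← legendreSym.mul]; congr 1; ring
  have hp2' : p ≠ 2 := by rintro rfl; omega
  rw [hm, legendreSym.at_neg_one hp2']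
  rcases (show p % 4 = 1 ∨ p % 4 = 3 by omega) with h | h
  · rw [ZMod.χ₄_nat_one_mod_four h, one_mul, legendreSym.quadratic_reciprocity_one_mod_four h (by rintro rfl; omega)]
  · rw [ZMod.χ₄_nat_three_mod_four h, legendreSym.quadratic_reciprocity_three_mod_four h hl4]; ring

theorem psi_split_iff (l p : ℕ) [hlf : Fact l.Prime] [hpf : Fact p.Prime] (hpl : p ≠ l) {k : ℤ} (hk : (l:ℤ) = 4 * k - 1) :
    psiL l p = 1 ↔ ∃ c : ℤ, (p:ℤ) ∣ c ^ 2 - c + k := by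
  have hl4 : l % 4 = 3 := by omega
  have hL : psiL l p = legendreSym l p := by simp [psiL, legendreSym]
  rw [hL]
  rcases hpf.out.eq_two_or_odd with rfl | hodd
  · have h2 : l ≠ 2 := by omega
    push_cast
    rw [legendreSym.at_two h2, ZMod.χ₈_nat_eq_if_mod_eight]
    constructor
    · intro h
      refine ⟨0, ?_⟩
      split_ifs at h <;> omega
    · rintro ⟨c, hc⟩
      have : (2:ℤ) ∣ c ^ 2 - c := by
        rcases Int.even_or_odd' c with ⟨d, rfl | rfl⟩
        · exact ⟨2 * d ^ 2 - d, by ring⟩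
        · exact ⟨2 * d ^ 2 + d, by ring⟩
      rw [if_neg (by omega), if_pos (by omega)]
  · rw [← legendre_recip l p hl4 hodd, legendreSym.eq_one_iff]
    · push_cast
      have hkp : (l : ZMod p) = 4 * (k : ZMod p) - 1 := by exact_mod_cast congrArg (Int.cast : ℤ → ZMod p) hk
      have h20 : (2 : ZMod p) ≠ 0 := by
        intro h
        have : ((2:ℕ) : ZMod p) = 0 := by exact_mod_cast h
        rw [ZMod.natCast_eq_zero_iff] at this
        have := (Nat.prime_dvd_prime_iff_eq hpf.out Nat.prime_two).mp this
        omega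
      constructor
      · rintro ⟨y, hy⟩
        obtain ⟨c, hc⟩ := ZMod.intCast_surjective ((1 + y) / 2)
        refine ⟨c, ?_⟩
        rw [← ZMod.intCast_zmod_eq_zero_iff_dvd]
        push_cast
        have hc2 : 2 * (c : ZMod p) = 1 + y := by rw [hc]; field_simp
        have : (4 : ZMod p) * ((c:ZMod p) ^ 2 - c + k) = 0 := by
          linear_combination (2 * (c : ZMod p) - 1 + y) * hc2 - hy - hkp
        have h4 : (4 : ZMod p) ≠ 0 := by
          rw [show (4 : ZMod p) = 2 * 2 by norm_num]; exact mul_ne_zero h20 h20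
        exact (mul_eq_zero.mp this).resolve_left h4
      · rintro ⟨c, hc⟩
        rw [← ZMod.intCast_zmod_eq_zero_iff_dvd] at hc
        push_cast at hc
        exact ⟨2 * c - 1, by linear_combination -4 * hc - hkp⟩
    · push_cast
      rw [neg_ne_zero, Ne, ZMod.natCast_eq_zero_iff]
      intro h
      exact hpl ((Nat.prime_dvd_prime_iff_eq hpf.out hlf.out).mp h)

section
open NumberField Ideal
open scoped ArithmeticFunction.zeta
variable {K : Type} [Field K] [NumberField K]

noncomputable def rKA (K : Type) [Field K] [NumberField K] : ArithmeticFunction ℂ :=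
  ⟨fun n => if n = 0 then 0 else (rK K n : ℂ), by simp⟩

noncomputable def psiA (l : ℕ) [Fact l.Prime] : ArithmeticFunction ℂ :=
  ⟨fun n => qC l (n : ZMod l), by simp [qC_apply]⟩

theorem psiA_apply (l : ℕ) [Fact l.Prime] (n : ℕ) : psiA l n = qC l (n : ZMod l) := rfl
theorem psiA_psiL (l : ℕ) [Fact l.Prime] (n : ℕ) : psiA l n = (psiL l n : ℂ) := by
  rw [psiA_apply, qC_apply]; rfl
theorem rKA_apply {n : ℕ} (hn : n ≠ 0) : rKA K n = (rK K n : ℂ) := by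
  show (if n = 0 then (0:ℂ) else (rK K n : ℂ)) = _
  rw [if_neg hn]

namespace QF
variable {l : ℕ} {θ : 𝓞 K} {k : ℤ} (h : QF l θ k)
include h

theorem rKA_eq [hlf : Fact l.Prime] : rKA K = (ζ : ArithmeticFunction ℂ) * psiA l := by
  have m1 : (rKA K).IsMultiplicative := by
    rw [ArithmeticFunction.IsMultiplicative.iff_ne_zero]
    refine ⟨by rw [rKA_apply one_ne_zero, rK_one]; simp, ?_⟩
    intro m n hm hn hmn
    rw [rKA_apply hm, rKA_apply hn, rKA_apply (mul_ne_zero hm hn), rK_mul hmn]; push_cast; rfl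
  have m2 : (psiA l).IsMultiplicative := by
    rw [ArithmeticFunction.IsMultiplicative.iff_ne_zero]
    refine ⟨by simp [psiA_apply], ?_⟩
    intro m n hm hn hmn
    simp [psiA_apply]
  rw [ArithmeticFunction.IsMultiplicative.eq_iff_eq_on_prime_powers _ m1 _
    (ArithmeticFunction.isMultiplicative_zeta.natCast.mul m2)]
  intro p n hp
  haveI := Fact.mk hp
  rw [rKA_apply (pow_ne_zero _ hp.ne_zero), ArithmeticFunction.coe_zeta_mul_apply, Nat.sum_divisors_prime_pow hp]
  simp only [psiA_psiL, psiL_pow]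
  by_cases hpl : p = l
  · subst hpl
    rw [h.ram hp, psiL_eq_zero p dvd_rfl, Finset.sum_range_succ']
    simp
  · have hnd : ¬ l ∣ p := fun hd => hpl ((Nat.prime_dvd_prime_iff_eq hlf.out hp).mp hd).symm
    by_cases hs : psiL l p = 1
    · obtain ⟨c, hc⟩ := (psi_split_iff l p hpl h.hl).mp hs
      rw [h.split hp hlf.out hpl hc, hs]; simp
    · have hs' := (psiL_dichotomy l hnd).resolve_left hs
      rw [h.inert hp (fun hc => hs ((psi_split_iff l p hpl h.hl).mpr hc)), hs']
      push_cast
      rw [neg_one_geom_sum]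
      have : Even (n+1) ↔ ¬ 2 ∣ n := by rw [Nat.even_iff]; omega
      by_cases h2 : 2 ∣ n
      · rw [if_pos h2, if_neg (by rw [this]; exact not_not.mpr h2)]
      · rw [if_neg h2, if_pos (this.mpr h2)]

theorem zeta_factor [hlf : Fact l.Prime] {s : ℂ} (hs : 1 < s.re) :
    dedekindZeta K s = riemannZeta s * ZMod.LFunction (qC l) s := by
  have e1 : dedekindZeta K s = LSeries (fun n => rKA K n) s := by
    unfold dedekindZeta
    apply LSeries_congr
    intro n hn
    rw [rKA_apply hn]; rfl
  have e0 : ∀ n, (ζ : ArithmeticFunction ℂ) n = ((ArithmeticFunction.zeta n : ℕ) : ℂ) := fun n => ArithmeticFunction.natCoe_apply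
  have hz : LSeriesSummable (fun n => (ζ : ArithmeticFunction ℂ) n) s := by
    have := ArithmeticFunction.LSeriesSummable_zeta_iff.mpr hs
    simp only [e0]; exact this
  have hz2 : LSeries (fun n => (ζ : ArithmeticFunction ℂ) n) s = riemannZeta s := by
    rw [← ArithmeticFunction.LSeries_zeta_eq_riemannZeta hs]
    simp only [e0]
  have hp : LSeriesSummable (fun n => psiA l n) s := by
    simp only [psiA_apply]
    exact ZMod.LSeriesSummable_of_one_lt_re (qC l) hs
  rw [e1, h.rKA_eq, ArithmeticFunction.LSeries_mul' hz hp, hz2, ZMod.LFunction_eq_LSeries _ hs]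
  simp only [psiA_apply]

theorem class_number [hlf : Fact l.Prime] : |psiS l| = l * (classNumber K : ℤ) := by
  have hl4 : l % 4 = 3 := by have := h.hl; omega
  have hsum : ∑ j, qC l j = 0 := MulChar.sum_eq_zero_of_ne_one (qC_ne_one l (by omega))
  have hL : Filter.Tendsto (fun s : ℝ => ZMod.LFunction (qC l) (s:ℂ)) (nhdsWithin 1 (Set.Ioi 1)) (nhds (ZMod.LFunction (qC l) 1)) := by
    have hc := (ZMod.differentiable_LFunction_of_sum_zero (Φ := qC l) hsum).continuous
    have := (hc.comp Complex.continuous_ofReal).tendsto (1:ℝ)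
    simp only [Function.comp_def, Complex.ofReal_one] at this
    exact this.mono_left nhdsWithin_le_nhds
  have hZ : Filter.Tendsto (fun s : ℝ => ((s:ℂ) - 1) * riemannZeta s) (nhdsWithin 1 (Set.Ioi 1)) (nhds 1) := by
    refine riemannZeta_residue_one.comp ?_
    rw [tendsto_nhdsWithin_iff]
    constructor
    · have := Complex.continuous_ofReal.tendsto (1:ℝ)
      simp only [Complex.ofReal_one] at this
      exact this.mono_left nhdsWithin_le_nhds
    · filter_upwards [self_mem_nhdsWithin] with s hs
      simp only [Set.mem_compl_iff, Set.mem_singleton_iff]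
      intro he
      have : s = 1 := by exact_mod_cast he
      simp [this] at hs
  have hK := tendsto_sub_one_mul_dedekindZeta_nhdsGT K
  have hP := hZ.mul hL
  rw [one_mul] at hP
  have hE : (fun s : ℝ => ((s:ℂ) - 1) * riemannZeta s * ZMod.LFunction (qC l) s) =ᶠ[nhdsWithin 1 (Set.Ioi 1)]
      fun s : ℝ => ((s:ℂ) - 1) * dedekindZeta K s := by
    filter_upwards [self_mem_nhdsWithin] with s hs
    rw [h.zeta_factor (by simpa using hs)]; ring
  have heq := tendsto_nhds_unique (hP.congr' hE) hK
  have hn := L_one l hl4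
  rw [heq, h.residue, Complex.norm_real] at hn
  have hpi := Real.pi_pos
  have hl0 : (0:ℝ) < l := by exact_mod_cast hlf.out.pos
  have hsq : 0 < Real.sqrt l := Real.sqrt_pos.mpr hl0
  rw [Real.norm_of_nonneg (by positivity)] at hn
  have : |(psiS l : ℝ)| = l * (classNumber K : ℝ) := by
    field_simp at hn
    linarith
  exact_mod_cast this
end QF
end

open Complex Polynomial IntermediateField
set_option linter.unusedSectionVars false

theorem mem_adj_form (l : ℕ) {x : ℂ} (hx : x ∈ ℚ⟮sqrtNeg l⟯) : ∃ u v : ℚ, x = u + v * sqrtNeg l := by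
  have h1 : x ∈ Algebra.adjoin ℚ {sqrtNeg l} := by
    rw [← IntermediateField.adjoin_simple_toSubalgebra_of_isAlgebraic (isIntegral_sqrtNeg l).isAlgebraic]
    exact hx
  clear hx
  induction h1 using Algebra.adjoin_induction with
  | mem x hx =>
    rw [Set.mem_singleton_iff] at hx
    exact ⟨0, 1, by simp [hx]⟩
  | algebraMap r => exact ⟨r, 0, by simp⟩
  | add x y hx' hy' hx hy =>
    obtain ⟨u, v, rfl⟩ := hx
    obtain ⟨u', v', rfl⟩ := hy
    exact ⟨u + u', v + v', by push_cast; ring⟩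
  | mul x y hx' hy' hx hy =>
    obtain ⟨u, v, rfl⟩ := hx
    obtain ⟨u', v', rfl⟩ := hy
    exact ⟨u * u' - l * v * v', u * v' + v * u', by push_cast; linear_combination (v * v' : ℂ) * sqrtNeg_sq l⟩

theorem rat_integral {q : ℚ} (h : IsIntegral ℤ (q : ℂ)) : ∃ n : ℤ, q = n := by
  have h2 : IsIntegral ℤ q := by
    have := (isIntegral_algebraMap_iff (R := ℤ) (A := ℚ) (B := ℂ) (algebraMap ℚ ℂ).injective (x := q)).mp (by simpa using h)
    exact this
  obtain ⟨n, hn⟩ := IsIntegrallyClosed.isIntegral_iff.mp h2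
  exact ⟨n, by simpa using hn.symm⟩

theorem conj_sqrtNeg (l : ℕ) : (starRingEnd ℂ) (sqrtNeg l) = - sqrtNeg l := by
  simp [sqrtNeg]

theorem integral_form (l : ℕ) [hlf : Fact l.Prime] (hl4 : l % 4 = 3) {u v : ℚ}
    (h : IsIntegral ℤ ((u:ℂ) + v * sqrtNeg l)) : ∃ a b : ℤ, (u:ℂ) + v * sqrtNeg l = a + b * ((1 + sqrtNeg l) / 2) := by
  have hl := hlf.out
  have hc : IsIntegral ℤ ((u:ℂ) - v * sqrtNeg l) := by
    have := h.map ((starRingEnd ℂ).toIntAlgHom)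
    have e : (starRingEnd ℂ).toIntAlgHom ((u:ℂ) + v * sqrtNeg l) = (u:ℂ) - v * sqrtNeg l := by
      show (starRingEnd ℂ) _ = _
      rw [map_add, map_mul, conj_sqrtNeg]
      simp; ring
    rwa [e] at this
  have hs2 := sqrtNeg_sq l
  obtain ⟨A, hA⟩ := rat_integral (q := 2 * u) (by
    have := h.add hc
    have e : ((2 * u : ℚ) : ℂ) = (u:ℂ) + v * sqrtNeg l + (u - v * sqrtNeg l) := by push_cast; ring
    rw [e]; exact this)
  obtain ⟨M, hM⟩ := rat_integral (q := l * (2 * v) ^ 2) (by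
    have := ((h.sub hc).pow 2).neg
    have e : ((l * (2 * v) ^ 2 : ℚ) : ℂ) = -((u:ℂ) + v * sqrtNeg l - (u - v * sqrtNeg l)) ^ 2 := by
      push_cast; linear_combination 4 * (v:ℂ)^2 * hs2
    rw [e]; exact this)
  obtain ⟨n, hn⟩ := rat_integral (q := u ^ 2 + l * v ^ 2) (by
    have := h.mul hc
    have e : ((u ^ 2 + l * v ^ 2 : ℚ) : ℂ) = ((u:ℂ) + v * sqrtNeg l) * (u - v * sqrtNeg l) := by
      push_cast; linear_combination (v:ℂ)^2 * hs2
    rw [e]; exact this)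
  have hB : ∃ B : ℤ, 2 * v = B := by
    have h1 : ((l:ℚ) * (2 * v)) ^ 2 = ((l * M : ℤ) : ℚ) := by push_cast; rw [← hM]; ring
    have h2 : IsIntegral ℤ ((l:ℚ) * (2 * v)) := by
      apply IsIntegral.of_pow (n := 2) (by norm_num)
      rw [h1]
      exact isIntegral_algebraMap (R := ℤ) (A := ℚ) (x := (l * M : ℤ))
    obtain ⟨y, hy⟩ := IsIntegrallyClosed.isIntegral_iff.mp h2
    have hy' : (y : ℚ) = l * (2 * v) := by simpa using hy
    rw [← hy'] at h1
    have h3 : y ^ 2 = l * M := by exact_mod_cast h1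
    have h4 : (l:ℤ) ∣ y := (Nat.prime_iff_prime_int.mp hl).dvd_of_dvd_pow (n := 2) ⟨M, h3⟩
    obtain ⟨B, rfl⟩ := h4
    refine ⟨B, ?_⟩
    have hl0 : (l:ℚ) ≠ 0 := by exact_mod_cast hl.ne_zero
    push_cast at hy'
    exact (mul_left_cancel₀ hl0 hy').symm
  obtain ⟨B, hB⟩ := hB
  have h4 : A ^ 2 + l * B ^ 2 = 4 * n := by
    have : ((A:ℚ) ^ 2 + l * B ^ 2) = 4 * n := by rw [← hA, ← hB, ← hn]; ring
    exact_mod_cast this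
  have hpar : ∃ m : ℤ, A = B + 2 * m := by
    obtain ⟨j, hj⟩ : ∃ j : ℤ, (l:ℤ) = 4 * j + 3 := ⟨l / 4, by omega⟩
    rw [hj] at h4
    have h5 : (A ^ 2 + 3 * B ^ 2) % 4 = 0 := by
      have : A ^ 2 + 3 * B ^ 2 = 4 * (n - j * B ^ 2) := by linear_combination h4
      omega
    rcases Int.even_or_odd' A with ⟨x, rfl | rfl⟩ <;> rcases Int.even_or_odd' B with ⟨y, rfl | rfl⟩
    · exact ⟨x - y, by ring⟩
    · ring_nf at h5; omega
    · ring_nf at h5; omega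
    · exact ⟨x - y, by ring⟩
  obtain ⟨m, hm⟩ := hpar
  refine ⟨m, B, ?_⟩
  have eA : (2:ℂ) * u = A := by exact_mod_cast congrArg (Rat.cast : ℚ → ℂ) hA
  have eB : (2:ℂ) * v = B := by exact_mod_cast congrArg (Rat.cast : ℚ → ℂ) hB
  have em : (A:ℂ) = B + 2 * m := by exact_mod_cast congrArg (Int.cast : ℤ → ℂ) hm
  linear_combination eA / 2 + em / 2 + eB * sqrtNeg l / 2

section
open NumberField

theorem exists_QF (l : ℕ) [hlf : Fact l.Prime] (hl4 : l % 4 = 3) (hl3 : 3 < l) :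
    ∃ (K : Type) (_ : Field K) (_ : NumberField K) (θ : 𝓞 K) (k : ℤ) (φ : 𝓞 K →+* ℂ),
      QF l θ k ∧ φ θ = (1 + sqrtNeg l) / 2 ∧ classNumSqrtNeg l = classNumber K := by
  have : FiniteDimensional ℚ ℚ⟮sqrtNeg l⟯ :=
    IntermediateField.adjoin.finiteDimensional (isIntegral_sqrtNeg l)
  have : CharZero ℚ⟮sqrtNeg l⟯ :=
    charZero_of_injective_algebraMap (algebraMap ℚ ℚ⟮sqrtNeg l⟯).injective
  have : NumberField ℚ⟮sqrtNeg l⟯ := ⟨⟩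
  set K := ℚ⟮sqrtNeg l⟯ with hK
  have hs2 := sqrtNeg_sq l
  let s : K := ⟨sqrtNeg l, IntermediateField.mem_adjoin_simple_self ℚ _⟩
  have hss : s ^ 2 = -(l : K) := Subtype.ext (by simpa [s] using hs2)
  obtain ⟨k, hk⟩ : ∃ k : ℤ, (l:ℤ) = 4 * k - 1 := ⟨(l + 1) / 4, by omega⟩
  have hkK : (l : K) = 4 * (k : K) - 1 := by exact_mod_cast congrArg (Int.cast : ℤ → K) hk
  have hrel : ((1 + s) / 2) ^ 2 = (1 + s) / 2 - k := by
    linear_combination hss / 4 - hkK / 4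
  have hint : IsIntegral ℤ ((1 + s) / 2) := by
    refine ⟨X ^ 2 - X + C k, by monicity!, ?_⟩
    simp only [eval₂_add, eval₂_sub, eval₂_pow, eval₂_X, eval₂_C]
    rw [hrel]; simp
  let θ : 𝓞 K := ⟨(1 + s) / 2, hint⟩
  let φ : 𝓞 K →+* ℂ := (algebraMap K ℂ).comp (algebraMap (𝓞 K) K)
  have hφinj : Function.Injective φ :=
    (algebraMap K ℂ).injective.comp (RingOfIntegers.coe_injective)
  have hφ : φ θ = (1 + sqrtNeg l) / 2 := by
    show (((1 + s) / 2 : K) : ℂ) = _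
    have e2 : ((2 : K) : ℂ) = 2 := rfl
    simp only [s]
    push_cast
    rw [e2]
  refine ⟨K, inferInstance, inferInstance, θ, k, φ, ⟨hk, hl3, ?_, ?_⟩, hφ, rfl⟩
  · apply RingOfIntegers.coe_injective
    rw [map_pow, map_sub, map_intCast]
    exact hrel
  · intro x
    have hx : φ x ∈ K := (algebraMap (𝓞 K) K x).2
    have hxi : IsIntegral ℤ (φ x) := (RingOfIntegers.isIntegral x).map φ.toIntAlgHom
    obtain ⟨u, v, huv⟩ := mem_adj_form l hx
    rw [huv] at hxi
    obtain ⟨a, b, hab⟩ := integral_form l hl4 hxi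
    refine ⟨a, b, hφinj ?_⟩
    rw [huv, hab, map_add, map_mul, hφ]; simp
end

open Complex Polynomial IntermediateField
set_option linter.unusedSectionVars false

section
open NumberField Ideal
variable {K : Type} [Field K] [NumberField K]
namespace QF
variable {l : ℕ} {θ : 𝓞 K} {k : ℤ} (h : QF l θ k)
include h

theorem norm_eq (u w : ℤ) : Algebra.norm ℤ ((u : 𝓞 K) + w * θ) = u ^ 2 + u * w + k * w ^ 2 := by
  obtain ⟨B, hB0, hB1⟩ := h.exists_basis
  have rep : ∀ a b : ℤ, B.repr ((a : 𝓞 K) + b * θ) = Finsupp.single 0 a + Finsupp.single 1 b := by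
    intro a b
    have e : (a : 𝓞 K) + b * θ = a • B 0 + b • B 1 := by simp [hB0, hB1]
    rw [e, map_add, map_smul, map_smul, B.repr_self, B.repr_self]; simp
  rw [Algebra.norm_eq_matrix_det B, Matrix.det_fin_two]
  simp only [Algebra.leftMulMatrix_eq_repr_mul, hB0, hB1]
  have e1 : ((u : 𝓞 K) + w * θ) * 1 = u + w * θ := mul_one _
  have e2 : ((u : 𝓞 K) + w * θ) * θ = ((-(k * w) : ℤ) : 𝓞 K) + ((u + w : ℤ) : 𝓞 K) * θ := by
    push_cast; linear_combination (w : 𝓞 K) * h.rel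
  rw [e1, e2, rep, rep]
  simp
  ring

theorem exists_alpha [hlf : Fact l.Prime] {p : ℕ} [hpf : Fact p.Prime] (hpl : p ≠ l) (hψ : psiL l p = 1)
    (φ : 𝓞 K →+* ℂ) (hφ : φ θ = (1 + sqrtNeg l) / 2) (A : ValuationSubring ℂ) (hA : A.valuation (p:ℂ) < 1) :
    ∃ a b : ℤ, 4 * (p:ℤ) ^ (classNumber K) = a ^ 2 + l * b ^ 2 ∧ A.valuation ((a - b * sqrtNeg l) / 2) = 1 := by
  have hp := hpf.out
  have hl := hlf.out
  have hφi : ∀ x, A.valuation (φ x) ≤ 1 := fun x =>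
    place_integral A ((RingOfIntegers.isIntegral x).map φ.toIntAlgHom)
  obtain ⟨c, hc, hcv⟩ : ∃ c : ℤ, (p:ℤ) ∣ c ^ 2 - c + k ∧ A.valuation (φ (θ - c)) < 1 := by
    obtain ⟨c, hc⟩ := (psi_split_iff l p hpl h.hl).mp hψ
    have hprod : A.valuation (φ (θ - c) * φ (θ - (1 - c : ℤ))) < 1 := by
      rw [← map_mul]
      obtain ⟨m, hm⟩ := hc
      have hmK : (c:𝓞 K) ^ 2 - c + k = p * m := by exact_mod_cast congrArg (Int.cast : ℤ → 𝓞 K) hm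
      have : (θ - c) * (θ - (1 - c : ℤ)) = p * (-m) := by
        push_cast; linear_combination h.rel - hmK
      rw [this, map_mul, map_mul, map_natCast]
      exact mul_lt_one_of_lt_of_le hA (hφi _)
    rw [map_mul] at hprod
    by_cases h1 : A.valuation (φ (θ - c)) < 1
    · exact ⟨c, hc, h1⟩
    · have e : A.valuation (φ (θ - c)) = 1 := le_antisymm (hφi _) (not_lt.mp h1)
      rw [e, one_mul] at hprod
      refine ⟨1 - c, ?_, hprod⟩
      convert hc using 1; ring
  obtain ⟨hPP, hsup, hN1, hN2⟩ := h.split_aux hp hl hpl hc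
  set P := Ideal.span {(p : 𝓞 K), θ - c} with hP
  set P' := Ideal.span {(p : 𝓞 K), θ - (1 - c)} with hP'
  have prm : ∀ Q : Ideal (𝓞 K), absNorm Q = p → Prime Q := by
    intro Q hQ
    have h1 := isPrime_of_irreducible_absNorm (I := Q) (by rw [hQ]; exact hp)
    refine Ideal.prime_of_isPrime ?_ h1
    rintro rfl
    simp at hQ; exact hp.ne_zero hQ.symm
  have hPv : ∀ x ∈ P, A.valuation (φ x) < 1 := by
    intro x hx
    rw [hP, Ideal.mem_span_pair] at hx
    obtain ⟨y, z, rfl⟩ := hx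
    rw [map_add, map_mul, map_mul]
    refine Valuation.map_add_lt _ ?_ ?_
    · rw [map_mul, map_natCast, mul_comm]; exact mul_lt_one_of_lt_of_le hA (hφi _)
    · rw [map_mul, mul_comm]; exact mul_lt_one_of_lt_of_le hcv (hφi _)
  set H := classNumber K with hH
  have hH0 : 0 < H := Fintype.card_pos
  obtain ⟨α, hα⟩ : ∃ α : 𝓞 K, P ^ H = Ideal.span {α} := by
    have hP0 : P ∈ nonZeroDivisors (Ideal (𝓞 K)) := mem_nonZeroDivisors_of_ne_zero (prm P hN1).ne_zero
    have h1 : ClassGroup.mk0 (⟨P, hP0⟩ ^ H) = 1 := by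
      rw [map_pow]; exact pow_card_eq_one
    rw [ClassGroup.mk0_eq_one_iff] at h1
    obtain ⟨α, hα⟩ := h1
    exact ⟨α, by simpa [Ideal.submodule_span_eq] using hα⟩
  obtain ⟨u, w, huw⟩ := h.span α
  have hnorm : u ^ 2 + u * w + k * w ^ 2 = (p:ℤ) ^ H := by
    have h1 := congrArg absNorm hα
    rw [map_pow, hN1, Ideal.absNorm_span_singleton, huw, h.norm_eq] at h1
    have hnn : 0 ≤ u ^ 2 + u * w + k * w ^ 2 := by
      have h4 : 4 * (u ^ 2 + u * w + k * w ^ 2) = (2 * u + w) ^ 2 + l * w ^ 2 := by rw [h.hl]; ring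
      have : 0 ≤ (2 * u + w) ^ 2 + l * w ^ 2 := by positivity
      linarith
    rw [← Int.natAbs_of_nonneg hnn, ← h1]; push_cast; rfl
  refine ⟨2 * u + w, w, ?_, ?_⟩
  · rw [← hnorm, h.hl]; ring
  have hφα : φ α = ((2 * u + w : ℤ) + w * sqrtNeg l) / 2 := by
    rw [huw, map_add, map_mul, hφ]; simp; ring
  set α' : 𝓞 K := u + w - w * θ with hα'
  have hφα' : φ α' = ((2 * u + w : ℤ) - w * sqrtNeg l) / 2 := by
    rw [hα', map_sub, map_add, map_mul, hφ]; simp; ring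
  rw [← hφα']
  by_contra hne
  have hlt : A.valuation (φ α') < 1 := lt_of_le_of_ne (hφi _) hne
  have hαv : A.valuation (φ α) < 1 := by
    apply hPv
    have : α ∈ P ^ H := hα ▸ Ideal.mem_span_singleton_self α
    exact Ideal.pow_le_self hH0.ne' this
  have hsum := Valuation.map_add_lt A.valuation hαv hlt
  have he : φ α + φ α' = ((2 * u + w : ℤ) : ℂ) := by rw [hφα, hφα']; ring
  rw [he] at hsum
  have hd : (p:ℤ) ∣ 2 * u + w := by
    by_contra hnd
    rw [place_int_coprime A hp hA hnd] at hsum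
    exact lt_irrefl _ hsum
  have hpz := Nat.prime_iff_prime_int.mp hp
  have hpH : (p:ℤ) ∣ (p:ℤ) ^ H := dvd_pow_self _ hH0.ne'
  have hdw : (p:ℤ) ∣ w := by
    have h4 : (l:ℤ) * w ^ 2 = 4 * (p:ℤ) ^ H - (2 * u + w) ^ 2 := by rw [← hnorm, h.hl]; ring
    have h5 : (p:ℤ) ∣ l * w ^ 2 := by
      rw [h4]; exact dvd_sub (hpH.mul_left 4) (dvd_pow hd (by norm_num))
    rcases hpz.dvd_or_dvd h5 with h6 | h6
    · exact absurd ((Nat.prime_dvd_prime_iff_eq hp hl).mp (by exact_mod_cast h6)) hpl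
    · exact hpz.dvd_of_dvd_pow h6
  have hdu : (p:ℤ) ∣ u := by
    apply hpz.dvd_of_dvd_pow (n := 2)
    have : u ^ 2 = (p:ℤ) ^ H - w * (u + k * w) := by rw [← hnorm]; ring
    rw [this]; exact dvd_sub hpH (hdw.mul_right _)
  obtain ⟨u', rfl⟩ := hdu
  obtain ⟨w', rfl⟩ := hdw
  have hdiv : P * P' ∣ P ^ H := by
    rw [hPP, hα, Ideal.dvd_span_singleton, Ideal.mem_span_singleton]
    exact ⟨u' + w' * θ, by rw [huw]; push_cast; ring⟩
  have h2 : P' ∣ P := (prm P' hN2).dvd_of_dvd_pow ((dvd_mul_left _ _).trans hdiv)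
  have h3 : P ≤ P' := Ideal.le_of_dvd h2
  rw [sup_eq_right.mpr h3] at hsup
  rw [absNorm_eq_one_iff.mpr hsup] at hN2
  exact hp.one_lt.ne hN2
end QF
end

open Complex Polynomial IntermediateField
set_option linter.unusedSectionVars false

theorem unit_form {l p : ℕ} (hl : l.Prime) (hl3 : 3 < l) (hp : p.Prime) (hpl : p ≠ l) (A : ValuationSubring ℂ)
    (hA : A.valuation (p:ℂ) < 1) {T W : ℤ} {m : ℕ} (hTW : T ^ 2 + l * W ^ 2 = 4 * (p:ℤ) ^ (2 * m))
    (h1 : A.valuation ((T + W * sqrtNeg l) / 2) ≤ A.valuation (p:ℂ) ^ m)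
    (h2 : A.valuation ((T - W * sqrtNeg l) / 2) ≤ A.valuation (p:ℂ) ^ m) :
    W = 0 ∧ (T = (p:ℤ) ^ m ∨ T = -(p:ℤ) ^ m ∨ T = 2 * (p:ℤ) ^ m ∨ T = -2 * (p:ℤ) ^ m) := by
  have h3 := Valuation.map_add_le A.valuation h1 h2
  have e : ((T:ℂ) + W * sqrtNeg l) / 2 + (T - W * sqrtNeg l) / 2 = T := by ring
  rw [e] at h3
  obtain ⟨T', rfl⟩ := place_int_dvd A hp hA h3
  have hd : ((p:ℤ) ^ m) ^ 2 ∣ l * W ^ 2 := ⟨4 - T' ^ 2, by linear_combination hTW⟩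
  have hco : IsCoprime (((p:ℤ) ^ m) ^ 2) (l:ℤ) := by
    rw [← pow_mul]
    exact IsCoprime.pow_left (Nat.isCoprime_iff_coprime.mpr ((Nat.coprime_primes hp hl).mpr hpl))
  have hd2 := hco.dvd_of_dvd_mul_left hd
  have hd3 : (p:ℤ) ^ m ∣ W := (Int.pow_dvd_pow_iff (by norm_num)).mp hd2
  obtain ⟨W', rfl⟩ := hd3
  have hpm : ((p:ℤ) ^ m) ^ 2 ≠ 0 := pow_ne_zero _ (pow_ne_zero _ (by exact_mod_cast hp.ne_zero))
  have h4 : T' ^ 2 + l * W' ^ 2 = 4 := by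
    apply mul_left_cancel₀ hpm
    linear_combination hTW
  have hl5 : (5:ℤ) ≤ l := by
    have : l ≠ 4 := by rintro rfl; revert hl; norm_num
    exact_mod_cast (by omega : 5 ≤ l)
  have hW : W' = 0 := by
    by_contra hne
    have : 1 ≤ W' ^ 2 := by have : 0 < W' ^ 2 := by positivity
                            omega
    nlinarith [sq_nonneg T']
  subst hW
  have h5 : (T' - 2) * (T' + 2) = 0 := by linear_combination h4
  refine ⟨by ring, ?_⟩
  rcases mul_eq_zero.mp h5 with h | h
  · right; right; left; rw [show T' = 2 by omega]; ring
  · right; right; right; rw [show T' = -2 by omega]; ring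

theorem unit_form' {l p : ℕ} (hl : l.Prime) (hl3 : 3 < l) (hp : p.Prime) (hpl : p ≠ l) (A : ValuationSubring ℂ)
    (hA : A.valuation (p:ℂ) < 1) {T W : ℤ} {m : ℕ} (hTW : T ^ 2 + l * W ^ 2 = 4 * (p:ℤ) ^ (2 * m))
    (h1 : A.valuation ((T + W * sqrtNeg l) / 2) ≤ A.valuation (p:ℂ) ^ m)
    (h2 : A.valuation ((T - W * sqrtNeg l) / 2) ≤ A.valuation (p:ℂ) ^ m) :
    ∃ ε : ℤ, (ε = 1 ∨ ε = -1) ∧ ((T:ℂ) + W * sqrtNeg l) / 2 = ε * (p:ℂ) ^ m := by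
  obtain ⟨hW, -⟩ := unit_form hl hl3 hp hpl A hA hTW h1 h2
  subst hW
  have h5 : (T - 2 * (p:ℤ) ^ m) * (T + 2 * (p:ℤ) ^ m) = 0 := by linear_combination hTW
  rcases mul_eq_zero.mp h5 with h | h
  · refine ⟨1, Or.inl rfl, ?_⟩
    rw [show T = 2 * (p:ℤ) ^ m by linarith]; push_cast; ring
  · refine ⟨-1, Or.inr rfl, ?_⟩
    rw [show T = -2 * (p:ℤ) ^ m by linarith]; push_cast; ring

theorem par_form {l : ℕ} (hl4 : l % 4 = 3) {A B n : ℤ} (h4 : A ^ 2 + l * B ^ 2 = 4 * n) : ∃ m : ℤ, A = B + 2 * m := by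
  obtain ⟨j, hj⟩ : ∃ j : ℤ, (l:ℤ) = 4 * j + 3 := ⟨l / 4, by omega⟩
  rw [hj] at h4
  have h5 : (A ^ 2 + 3 * B ^ 2) % 4 = 0 := by
    have : A ^ 2 + 3 * B ^ 2 = 4 * (n - j * B ^ 2) := by linear_combination h4
    omega
  rcases Int.even_or_odd' A with ⟨x, rfl | rfl⟩ <;> rcases Int.even_or_odd' B with ⟨y, rfl | rfl⟩
  · exact ⟨x - y, by ring⟩
  · ring_nf at h5; omega
  · ring_nf at h5; omega
  · exact ⟨x - y, by ring⟩

theorem mul_form {l : ℕ} (hl4 : l % 4 = 3) {t w a b n n' : ℤ} (h1 : t ^ 2 + l * w ^ 2 = 4 * n)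
    (h2 : a ^ 2 + l * b ^ 2 = 4 * n') : ∃ T W : ℤ, T ^ 2 + l * W ^ 2 = 4 * (n * n') ∧
      (((t:ℂ) + w * sqrtNeg l) / 2) * ((a + b * sqrtNeg l) / 2) = (T + W * sqrtNeg l) / 2 ∧
      (((t:ℂ) - w * sqrtNeg l) / 2) * ((a - b * sqrtNeg l) / 2) = (T - W * sqrtNeg l) / 2 := by
  obtain ⟨x, rfl⟩ := par_form hl4 h1
  obtain ⟨y, rfl⟩ := par_form hl4 h2
  obtain ⟨j, hj⟩ : ∃ j : ℤ, (l:ℤ) = 2 * j + 1 := ⟨l / 2, by omega⟩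
  have hjC : (l:ℂ) = 2 * j + 1 := by exact_mod_cast congrArg (Int.cast : ℤ → ℂ) hj
  have hs2 := sqrtNeg_sq l
  rw [hjC] at hs2
  refine ⟨-w * b * j + w * y + x * b + 2 * x * y, w * b + x * b + y * w, ?_, ?_, ?_⟩
  · rw [hj] at h1 h2 ⊢
    have : 4 * (4 * (n * n')) = ((w + 2 * x) ^ 2 + (2 * j + 1) * w ^ 2) * ((b + 2 * y) ^ 2 + (2 * j + 1) * b ^ 2) := by
      rw [h1, h2]; ring
    linarith
  · push_cast; linear_combination (w * b : ℂ) / 4 * hs2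
  · push_cast; linear_combination (w * b : ℂ) / 4 * hs2

theorem core_form {l p : ℕ} (hl : l.Prime) (hl4 : l % 4 = 3) (hl3 : 3 < l) (hp : p.Prime) (hpl : p ≠ l) (A : ValuationSubring ℂ)
    (hA : A.valuation (p:ℂ) < 1) {t w a b : ℤ} {g h : ℕ} (htw : t ^ 2 + l * w ^ 2 = 4 * (p:ℤ) ^ (2 * g))
    (hab : a ^ 2 + l * b ^ 2 = 4 * (p:ℤ) ^ h)
    (h1 : A.valuation ((t + w * sqrtNeg l) / 2) * A.valuation ((a - b * sqrtNeg l) / 2) ^ 2 ≤ A.valuation (p:ℂ) ^ (g + h))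
    (h2 : A.valuation ((t - w * sqrtNeg l) / 2) * A.valuation ((a + b * sqrtNeg l) / 2) ^ 2 ≤ A.valuation (p:ℂ) ^ (g + h)) :
    ∃ ε : ℤ, (ε = 1 ∨ ε = -1) ∧ ((t:ℂ) + w * sqrtNeg l) / 2 * (p:ℂ) ^ h = ε * (p:ℂ) ^ g * ((a + b * sqrtNeg l) / 2) ^ 2 := by
  have hab' : a ^ 2 + l * (-b) ^ 2 = 4 * (p:ℤ) ^ h := by rw [← hab]; ring
  obtain ⟨T1, W1, e1, e2, e3⟩ := mul_form hl4 htw hab'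
  obtain ⟨T, W, e4, e5, e6⟩ := mul_form hl4 e1 hab'
  push_cast at e2 e3 e5 e6
  rw [← e2] at e5
  rw [← e3] at e6
  have f1 : ((T:ℂ) + W * sqrtNeg l) / 2 = (t + w * sqrtNeg l) / 2 * ((a - b * sqrtNeg l) / 2) ^ 2 := by
    rw [← e5]; ring
  have f2 : ((T:ℂ) - W * sqrtNeg l) / 2 = (t - w * sqrtNeg l) / 2 * ((a + b * sqrtNeg l) / 2) ^ 2 := by
    rw [← e6]; ring
  obtain ⟨ε, hε, he⟩ := unit_form' hl hl3 hp hpl A hA (T := T) (W := W) (m := g + h) (by rw [e4]; ring)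
    (by rw [f1, map_mul, map_pow]; exact h1) (by rw [f2, map_mul, map_pow]; exact h2)
  refine ⟨ε, hε, ?_⟩
  have hn : (((a:ℂ) - b * sqrtNeg l) / 2) * ((a + b * sqrtNeg l) / 2) = (p:ℂ) ^ h := by
    have habC : (a:ℂ) ^ 2 + l * b ^ 2 = 4 * (p:ℂ) ^ h := by exact_mod_cast congrArg (Int.cast : ℤ → ℂ) hab
    linear_combination habC / 4 - (b:ℂ)^2 / 4 * sqrtNeg_sq l
  have hp0 : (p:ℂ) ^ h ≠ 0 := pow_ne_zero _ (by exact_mod_cast hp.ne_zero)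
  apply mul_right_cancel₀ hp0
  rw [f1] at he
  calc ((t:ℂ) + w * sqrtNeg l) / 2 * (p:ℂ) ^ h * (p:ℂ) ^ h
      = (t + w * sqrtNeg l) / 2 * ((a - b * sqrtNeg l) / 2) ^ 2 * ((a + b * sqrtNeg l) / 2) ^ 2 := by
        rw [← hn]; ring
    _ = _ := by rw [he, pow_add]; ring

theorem sign_form {l p : ℕ} (hl : l.Prime) (hl3 : 3 < l) (hp : p.Prime) (hpl : p ≠ l) {G : ℂ} (hGi : IsIntegral ℤ G)
    {ε a b : ℤ} {g h : ℕ} (hε : ε = 1 ∨ ε = -1)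
    (hab : a ^ 2 + l * b ^ 2 = 4 * (p:ℤ) ^ h)
    (hG : G * (p:ℂ) ^ h = ε * (p:ℂ) ^ g * ((a + b * sqrtNeg l) / 2) ^ 2)
    (hv : ∀ A : ValuationSubring ℂ, A.valuation (l:ℂ) < 1 → A.valuation (G - (p:ℂ) ^ g) < 1) : ε = 1 := by
  rcases hε with rfl | rfl
  · rfl
  exfalso
  obtain ⟨A, hA⟩ := exists_place l hl
  have h1 := hv A hA
  have hs : A.valuation (sqrtNeg l) < 1 := by
    by_contra hge
    have : 1 ≤ A.valuation (sqrtNeg l) ^ 2 := one_le_pow₀ (not_lt.mp hge)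
    rw [← map_pow, sqrtNeg_sq, Valuation.map_neg] at this
    exact absurd hA (not_lt.mpr this)
  have habC : (a:ℂ) ^ 2 + l * b ^ 2 = 4 * (p:ℂ) ^ h := by exact_mod_cast congrArg (Int.cast : ℤ → ℂ) hab
  have key : ((8 * (p:ℤ) ^ (g + h) : ℤ) : ℂ) = (G - (p:ℂ) ^ g) * ((-4 * (p:ℤ) ^ h : ℤ) : ℂ) + sqrtNeg l * (((-(p:ℤ) ^ g * 2 * b : ℤ) : ℂ) * (a + b * sqrtNeg l)) := by
    push_cast at hG ⊢
    rw [pow_add]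
    linear_combination 4 * hG - (p:ℂ)^g * habC + (b:ℂ)^2 * (p:ℂ)^g * sqrtNeg_sq l
  have hlt : A.valuation ((8 * (p:ℤ) ^ (g + h) : ℤ) : ℂ) < 1 := by
    rw [key]
    refine Valuation.map_add_lt _ ?_ ?_
    · rw [map_mul]; exact mul_lt_one_of_lt_of_le h1 (place_int_le A _)
    · rw [map_mul]; refine mul_lt_one_of_lt_of_le hs ?_
      rw [map_mul]
      refine mul_le_one' (place_int_le A _) (Valuation.map_add_le _ (place_int_le A _) ?_)
      rw [map_mul]
      exact mul_le_one' (place_int_le A _) hs.le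
  rw [place_int_coprime A hl hA] at hlt
  · exact lt_irrefl _ hlt
  · intro hd
    have hd' : l ∣ 8 * p ^ (g + h) := by exact_mod_cast hd
    rcases hl.dvd_mul.mp hd' with hd | hd
    · have : l ∣ 2 := hl.dvd_of_dvd_pow (n := 3) (by simpa using hd)
      have := Nat.le_of_dvd (by norm_num) this
      omega
    · exact hpl ((Nat.prime_dvd_prime_iff_eq hl hp).mp (hl.dvd_of_dvd_pow hd)).symm

open Complex Polynomial IntermediateField
set_option linter.unusedSectionVars false

theorem class_alpha {l p : ℕ} (hl : l.Prime) (hl4 : l % 4 = 3) (hl3 : 3 < l) (hp : p.Prime) (hpl : p ≠ l)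
    (hψ : @psiL l ⟨hl⟩ p = 1) (A : ValuationSubring ℂ) (hA : A.valuation (p:ℂ) < 1) :
    |@psiS l ⟨hl⟩| = l * (classNumSqrtNeg l : ℤ) ∧
    ∃ a b : ℤ, a ^ 2 + l * b ^ 2 = 4 * (p:ℤ) ^ (classNumSqrtNeg l) ∧
      A.valuation ((a + b * sqrtNeg l) / 2) = A.valuation (p:ℂ) ^ (classNumSqrtNeg l) ∧
      A.valuation ((a - b * sqrtNeg l) / 2) = 1 := by
  haveI := Fact.mk hl
  haveI := Fact.mk hp
  obtain ⟨K, _, _, θ, k, φ, hQ, hφ, hh⟩ := exists_QF l hl4 hl3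
  refine ⟨by rw [hh]; exact hQ.class_number, ?_⟩
  obtain ⟨a, b, h1, h2⟩ := hQ.exists_alpha hpl hψ φ hφ A hA
  rw [← hh] at h1
  refine ⟨a, b, h1.symm, ?_, h2⟩
  have hn : (((a:ℂ) - b * sqrtNeg l) / 2) * ((a + b * sqrtNeg l) / 2) = (p:ℂ) ^ (classNumSqrtNeg l) := by
    have habC : (a:ℂ) ^ 2 + l * b ^ 2 = 4 * (p:ℂ) ^ (classNumSqrtNeg l) := by exact_mod_cast congrArg (Int.cast : ℤ → ℂ) h1.symm
    linear_combination habC / 4 - (b:ℂ)^2 / 4 * sqrtNeg_sq l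
  have := congrArg A.valuation hn
  rw [map_mul, h2, one_mul, map_pow] at this
  exact this

theorem pow_inj_val {A : ValuationSubring ℂ} {x y : A.ValueGroup} {n : ℕ} (hn : n ≠ 0) (h : x ^ n = y ^ n) : x = y :=
  (pow_left_inj₀ zero_le' zero_le' hn).mp h

theorem neg_choice {l p e h : ℕ} (hl : l.Prime) (hψ : @psiL l ⟨hl⟩ p = 1) (he : 4 * e = l - 1 + 2 * h) (hl4 : l % 4 = 3)
    {a b : ℤ} (hab : a ^ 2 + l * b ^ 2 = 4 * (p:ℤ) ^ h) :
    a ≡ -2 * (p:ℤ) ^ e [ZMOD l] ∨ -a ≡ -2 * (p:ℤ) ^ e [ZMOD l] := by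
  haveI := Fact.mk hl
  have h1 : (p : ZMod l) ^ (l / 2) = 1 := by
    have := quadraticChar_eq_pow_of_char_ne_two' (F := ZMod l) (by rw [ZMod.ringChar_zmod_n]; omega) (p : ZMod l)
    rw [ZMod.card] at this
    rw [← this]
    have e : quadraticChar (ZMod l) (p : ZMod l) = 1 := hψ
    rw [e]; simp
  have h2 : ((p : ZMod l) ^ e) ^ 2 = (p : ZMod l) ^ h := by
    rw [← pow_mul, show e * 2 = l / 2 + h by omega, pow_add, h1, one_mul]
  have h3 : (a : ZMod l) ^ 2 = 4 * (p : ZMod l) ^ h := by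
    have := congrArg (Int.cast : ℤ → ZMod l) hab
    push_cast at this
    rw [← this]; simp
  have h4 : ((a : ZMod l) + 2 * (p : ZMod l) ^ e) * (-a + 2 * (p : ZMod l) ^ e) = 0 := by
    linear_combination 4 * h2 - h3
  rcases mul_eq_zero.mp h4 with h | h
  · left
    rw [← ZMod.intCast_eq_intCast_iff]
    push_cast; linear_combination h
  · right
    rw [← ZMod.intCast_eq_intCast_iff]
    push_cast; linear_combination h

theorem copr_N {p l1 l2 r1 r2 N : ℕ} (hp : p.Prime)
    (hl1 : l1.Prime) (hl2 : l2.Prime)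
    (hl1m : l1 % 4 = 3) (hl1gt : 3 < l1) (hl2odd : l2 % 2 = 1)
    (hr1 : 1 ≤ r1) (hr2 : 1 ≤ r2) (hN : N = l1 ^ r1 * l2 ^ r2)
    (hord1 : orderOf (p : ZMod (l1 ^ r1)) = Nat.totient (l1 ^ r1) / 2)
    (hord2 : orderOf (p : ZMod (l2 ^ r2)) = Nat.totient (l2 ^ r2)) : N.Coprime (p - 1) := by
  rw [Nat.totient_prime_pow hl1 hr1, Nat.mul_div_assoc _ (by omega)] at hord1
  rw [Nat.totient_prime_pow hl2 hr2] at hord2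
  have h2 := hl2.two_le
  have a1 := (not_one_mod hl1 hr1 (by omega) hord1).resolve_right hp.ne_zero
  have a2 := (not_one_mod hl2 hr2 (by omega) hord2).resolve_right hp.ne_zero
  rw [hN]
  exact Nat.Coprime.mul_left (((Nat.Prime.coprime_iff_not_dvd hl1).mpr a1).pow_left _)
    (((Nat.Prime.coprime_iff_not_dvd hl2).mpr a2).pow_left _)

theorem statement5 (p l1 l2 r1 r2 N f : ℕ) (hp : p.Prime)
    (hl1 : l1.Prime) (hl2 : l2.Prime) (hne : l1 ≠ l2)
    (hl1m : l1 % 4 = 3) (hl1gt : 3 < l1) (hl2odd : l2 % 2 = 1)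
    (hr1 : 1 ≤ r1) (hr2 : 1 ≤ r2) (hN : N = l1 ^ r1 * l2 ^ r2) (hNp : Nat.gcd N p = 1)
    (hord1 : orderOf (p : ZMod (l1 ^ r1)) = Nat.totient (l1 ^ r1) / 2)
    (hord2 : orderOf (p : ZMod (l2 ^ r2)) = Nat.totient (l2 ^ r2))
    (hf : orderOf (p : ZMod N) = f) (hind : f = Nat.totient N / 2)
    (F : Type) [Field F] [Fintype F] [Algebra (ZMod p) F]
    (hcard : Fintype.card F = p ^ f)
    (χ : MulChar F ℂ) (hχord : orderOf χ = N) :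
    (@legendreSym l1 ⟨hl1⟩ (l2 : ℤ) = 1 →
      gaussSumN p χ 1 = (p : ℂ) ^ ((f : ℤ) / 2)) ∧
    (@legendreSym l1 ⟨hl1⟩ (l2 : ℤ) = -1 →
      ∃ a b : ℤ,
        4 * (p : ℤ) ^ classNumSqrtNeg l1 = a ^ 2 + (l1 : ℤ) * b ^ 2 ∧
        a ≡ -2 * (p : ℤ) ^ ((l1 - 1 + 2 * classNumSqrtNeg l1) / 4) [ZMOD (l1 : ℤ)] ∧
        gaussSumN p χ 1 =
          (p : ℂ) ^ ((f : ℤ) / 2 - (classNumSqrtNeg l1 : ℤ)) *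
            (((a : ℂ) + (b : ℂ) * sqrtNeg l1) / 2) ^ 2) := by
  haveI := Fact.mk hp
  haveI hlf := Fact.mk hl1
  have hlN : l1 ∣ N := hN ▸ (dvd_pow_self l1 (by omega)).mul_right _
  have hN0 : 2 < N := by
    have : 0 < N := by rw [hN]; exact Nat.mul_pos (pow_pos hl1.pos _) (pow_pos hl2.pos _)
    have := Nat.le_of_dvd this hlN
    omega
  have hNp' : Nat.Coprime p N := Nat.Coprime.symm hNp
  have hpl : p ≠ l1 := by
    rintro rfl
    have := Nat.dvd_gcd hlN dvd_rfl
    rw [hNp] at this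
    exact hp.one_lt.ne' (Nat.dvd_one.mp this)
  have hlp : ¬ l1 ∣ p := fun h => hpl ((Nat.prime_dvd_prime_iff_eq hl1 hp).mp h).symm
  have hψp : psiL l1 p = 1 := psiL_p_eq_one l1 hl1m hr1 hlp hord1
  have hχp := chi_trivial p χ (N := N) (by rw [← hχord, pow_orderOf_eq_one]) (by omega)
    (copr_N hp hl1 hl2 hl1m hl1gt hl2odd hr1 hr2 hN hord1 hord2)
  obtain ⟨t, w, hG, hG', htw⟩ := gauss_form l1 p hl1m hlN hN0 hNp' hf hind hψp hcard χ hχord hχp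
  obtain ⟨hfe, hQ⟩ := order_half hl1 hl2 hne hl1m hl2odd hr1 hr2 hN hord2 hind
  have hsign := gauss_sign p hl1 hl2 hne hl2odd hr2 hN hfe hQ hcard χ hχord hχp
  have hGi := isIntegral_gauss p χ
  obtain ⟨A, hA⟩ := exists_place p hp
  have hv0 := place_p_pos A hp
  obtain ⟨hS, a, b, hab, hva, hvb⟩ := class_alpha hl1 hl1m hl1gt hp hpl hψp A hA
  obtain ⟨c, hc, hst⟩ := stickelberger p A hA hcard χ hχord hN0
  have hcos := half_coset l1 hl1m hlN hN0 hNp' hf hind hψp hc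
  have hsc := sum_psiL_coprime l1 (by omega) hl2 r1 r2 hr1 hr2 hN
  have hlc : ¬ l1 ∣ c := fun h => hl1.one_lt.ne' (Nat.dvd_one.mp (hc ▸ Nat.dvd_gcd h hlN))
  set h := classNumSqrtNeg l1 with hh
  set T := ∑ i ∈ Finset.range f, (p ^ i * c % N) with hT
  set G := gaussSum χ (psiF p F) with hGdef
  obtain ⟨g, hg⟩ := hfe
  have hfg : f / 2 = g := by omega
  have hfz : (f : ℤ) / 2 = (g : ℤ) := by omega
  rw [hfg] at hsign
  have htw' : t ^ 2 + l1 * w ^ 2 = 4 * (p:ℤ) ^ (2 * g) := by rw [htw, hg, two_mul]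
  obtain ⟨B, hB, hBh⟩ : ∃ B : ℤ, psiS l1 = l1 * B ∧ (B = h ∨ B = -h) := by
    rcases abs_choice (psiS l1) with h1 | h1
    · exact ⟨h, by rw [← hS, h1], Or.inl rfl⟩
    · exact ⟨-h, by rw [mul_neg, ← hS, h1, neg_neg], Or.inr rfl⟩
  have hl0 : (l1:ℤ) ≠ 0 := by exact_mod_cast hl1.ne_zero
  have hN0' : (N:ℤ) ≠ 0 := by exact_mod_cast (by omega : N ≠ 0)
  have hTz : 2 * (T:ℤ) = N * (2 * g + psiL l1 c * (B * (1 - psiL l1 l2))) := by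
    rw [hcos, hg]
    have : ∑ a ∈ (Finset.range N).filter (fun a => a.Coprime N), psiL l1 a * a = N * (B * (1 - psiL l1 l2)) := by
      apply mul_left_cancel₀ hl0
      rw [hsc, hB]; ring
    rw [this]; push_cast; ring
  -- valuation of G from an exponent
  have hvG : ∀ e : ℕ, (T:ℤ) = N * e → A.valuation G = A.valuation (p:ℂ) ^ e := by
    intro e he
    have he' : T = e * N := by rw [mul_comm]; exact_mod_cast he
    rw [he', pow_mul] at hst
    exact pow_inj_val (by omega) hst
  have hGG : ((t:ℂ) + w * sqrtNeg l1) / 2 * ((t - w * sqrtNeg l1) / 2) = (p:ℂ) ^ (2 * g) := by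
    have htC : (t:ℂ) ^ 2 + l1 * w ^ 2 = 4 * (p:ℂ) ^ (2 * g) := by exact_mod_cast congrArg (Int.cast : ℤ → ℂ) htw'
    linear_combination htC / 4 - (w:ℂ)^2 / 4 * sqrtNeg_sq l1
  have hvGG := congrArg A.valuation hGG
  rw [map_mul, map_pow, ← hG] at hvGG
  have hvG' : ∀ e e' : ℕ, e + e' = 2 * g → A.valuation G = A.valuation (p:ℂ) ^ e →
      A.valuation (((t:ℂ) - w * sqrtNeg l1) / 2) = A.valuation (p:ℂ) ^ e' := by
    intro e e' hee h1
    rw [h1, ← hee, pow_add] at hvGG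
    exact mul_left_cancel₀ (pow_ne_zero _ hv0.ne') hvGG
  have hL2 : @legendreSym l1 ⟨hl1⟩ (l2 : ℤ) = psiL l1 l2 := by simp [psiL, legendreSym]
  rw [hL2, gaussSumN_one p χ, hfz]
  rw [← hGdef]
  constructor
  · intro h1
    have hv1 := hvG g (by rw [h1] at hTz; linarith)
    have hv2 := hvG' g g (by ring) hv1
    rw [hG] at hv1
    obtain ⟨ε, hε, he⟩ := core_form hl1 hl1m hl1gt hp hpl A hA htw' (a := 2) (b := 0) (h := 0) (by norm_num)
      (by rw [hv1]; simp) (by rw [hv2]; simp)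
    rw [← hG] at he
    have hε1 := sign_form hl1 hl1gt hp hpl hGi hε (a := 2) (b := 0) (g := g) (h := 0) (by norm_num) he hsign
    rw [hε1] at he
    simpa using he
  · intro h1
    rw [h1] at hTz
    have hTz' : (T:ℤ) = N * (g + psiL l1 c * B) := by linarith
    have hodd : Odd B := psiS_parity l1 hl1m hB
    have hh2 : h % 2 = 1 := by
      rcases hBh with e | e <;> rw [e] at hodd <;> rcases hodd with ⟨m, hm⟩ <;> omega
    have hTnn : (0:ℤ) ≤ T := Int.natCast_nonneg _
    have hNpos : (0:ℤ) < N := by exact_mod_cast (by omega : 0 < N)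
    have hcase : (T:ℤ) = N * (g + h) ∨ (T:ℤ) = N * (g - h) := by
      rcases psiL_dichotomy l1 hlc with e | e <;> rcases hBh with e' | e' <;> rw [e, e'] at hTz'
      · left; rw [hTz']; ring
      · right; rw [hTz']; ring
      · right; rw [hTz']; ring
      · left; rw [hTz']; ring
    -- choose the conjugate
    obtain ⟨b', hab', hc1, hc2⟩ : ∃ b' : ℤ, a ^ 2 + l1 * b' ^ 2 = 4 * (p:ℤ) ^ h ∧
        A.valuation ((t + w * sqrtNeg l1) / 2) * A.valuation ((a - b' * sqrtNeg l1) / 2) ^ 2 ≤ A.valuation (p:ℂ) ^ (g + h) ∧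
        A.valuation ((t - w * sqrtNeg l1) / 2) * A.valuation ((a + b' * sqrtNeg l1) / 2) ^ 2 ≤ A.valuation (p:ℂ) ^ (g + h) := by
      rcases hcase with hT1 | hT1
      · have hv1 := hvG (g + h) (by rw [hT1]; push_cast; ring)
        have hle : h ≤ g := by
          have hle1 : A.valuation (p:ℂ) ^ (2 * g) ≤ A.valuation (p:ℂ) ^ (g + h) := by
            rw [← hvGG, hv1]
            have hGi' := isIntegral_gauss p χ⁻¹
            rw [hG'] at hGi'
            exact mul_le_of_le_one_right' (place_integral A hGi')
          have := (pow_le_pow_iff_right_of_lt_one₀ hv0 hA).mp hle1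
          omega
        have hv2 := hvG' (g + h) (g - h) (by omega) hv1
        rw [hG] at hv1
        refine ⟨b, hab, ?_, ?_⟩
        · rw [hv1, hvb]; simp
        · rw [hv2, hva, ← pow_mul, ← pow_add]
          exact le_of_eq (congrArg _ (by omega))
      · have hle : h ≤ g := by
          have : (0:ℤ) ≤ N * (g - h) := hT1 ▸ hTnn
          have := nonneg_of_mul_nonneg_right this hNpos
          omega
        have hv1 := hvG (g - h) (by rw [hT1, Nat.cast_sub hle])
        have hv2 := hvG' (g - h) (g + h) (by omega) hv1
        rw [hG] at hv1
        refine ⟨-b, by rw [← hab]; ring, ?_, ?_⟩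
        · push_cast
          rw [neg_mul, sub_neg_eq_add, hv1, hva, ← pow_mul, ← pow_add]
          exact le_of_eq (congrArg _ (by omega))
        · push_cast
          rw [neg_mul, ← sub_eq_add_neg, hv2, hvb]; simp
    obtain ⟨ε, hε, he⟩ := core_form hl1 hl1m hl1gt hp hpl A hA htw' hab' hc1 hc2
    rw [← hG] at he
    have hε1 := sign_form hl1 hl1gt hp hpl hGi hε hab' he hsign
    rw [hε1] at he
    have hp0 : (p:ℂ) ≠ 0 := by exact_mod_cast hp.ne_zero
    have hfin : G = (p : ℂ) ^ ((g : ℤ) - (h : ℤ)) * (((a : ℂ) + (b' : ℂ) * sqrtNeg l1) / 2) ^ 2 := by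
      rw [zpow_sub₀ hp0, zpow_natCast, zpow_natCast]
      apply mul_right_cancel₀ (pow_ne_zero h hp0)
      rw [he]
      field_simp
      push_cast; ring
    have he4 : 4 * ((l1 - 1 + 2 * h) / 4) = l1 - 1 + 2 * h := by omega
    rcases neg_choice hl1 hψp he4 hl1m hab' with hcg | hcg
    · exact ⟨a, b', hab'.symm, hcg, hfin⟩
    · refine ⟨-a, -b', by rw [← hab']; ring, hcg, ?_⟩
      rw [hfin]; push_cast; ring
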